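/- arXiv:1210.3997 — 2 statements merged into one kernel-verified Lean document; each statement's English description precedes it below -/
import Mathlib

section
/- Let L/K be a finite Galois extension of complete discrete valued fields of equal characteristic p > 0 with Galois group G, such that the induced extension of residue fields is separable. Then the pro-abelian group {H^1(G, W_n(O_L))}_{n∈ℕ} is zero; that is, for every n ∈ ℕ there exists an integer m > n such that the map H^1(G, W_m(O_L)) → H^1(G, W_n(O_L)) induced by the truncation map W_m(O_L) → W_n(O_L) is the zero map. -/
/-!
Common background: complete discretely valued fields, their valuation rings,
residue fields, Galois action on the valuation ring, truncated Witt vector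
functoriality, and ramification breaks.
-/

noncomputable section

open scoped Classical

/-- A field equipped with a normalized (i.e. surjective onto `ℤ`) discrete additive
valuation `v : K → WithTop ℤ` with respect to which it is complete. -/
structure CompleteDiscreteValuation (K : Type*) [Field K] where
  v : K → WithTop ℤ
  eq_top_iff : ∀ x : K, v x = ⊤ ↔ x = 0
  map_one : v 1 = 0
  map_mul : ∀ x y : K, v (x * y) = v x + v y
  min_le_add : ∀ x y : K, min (v x) (v y) ≤ v (x + y)
  surjective : ∀ n : ℤ, ∃ x : K, v x = (n : WithTop ℤ)
  complete : ∀ x : ℕ → K,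
      (∀ n : ℕ, ((n : ℤ) : WithTop ℤ) ≤ v (x (n + 1) - x n)) →
      ∃ y : K, ∀ n : ℕ, ((n : ℤ) : WithTop ℤ) ≤ v (y - x n)

namespace TruncatedWittVector

variable {p n : ℕ} [hp : Fact p.Prime] {R S : Type*} [CommRing R] [CommRing S]

lemma truncateFun_congr_map (f : R →+* S) (a b : WittVector p R)
    (h : WittVector.truncateFun n a = WittVector.truncateFun n b) :
    WittVector.truncateFun n (WittVector.map f a) =
      WittVector.truncateFun n (WittVector.map f b) := by
  ext i
  have hc := congrArg (fun z => TruncatedWittVector.coeff i z) h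
  simp only [WittVector.coeff_truncateFun] at hc ⊢
  rw [WittVector.map_coeff, WittVector.map_coeff, hc]

/-- Functoriality of truncated Witt vectors: the ring homomorphism
`W_n(R) → W_n(S)` induced by `f : R → S`, acting componentwise. -/
def map (f : R →+* S) : TruncatedWittVector p n R →+* TruncatedWittVector p n S where
  toFun x := WittVector.truncateFun n (WittVector.map f x.out)
  map_one' := by
    show WittVector.truncateFun n (WittVector.map f (1 : TruncatedWittVector p n R).out) = 1
    have h : WittVector.truncateFun n ((1 : TruncatedWittVector p n R)).out =
        WittVector.truncateFun n (1 : WittVector p R) := by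
      rw [truncateFun_out, WittVector.truncateFun_one]
    have := truncateFun_congr_map f _ _ h
    rw [this, map_one, WittVector.truncateFun_one]
  map_mul' x y := by
    show WittVector.truncateFun n (WittVector.map f (x * y).out) =
      WittVector.truncateFun n (WittVector.map f x.out) *
        WittVector.truncateFun n (WittVector.map f y.out)
    have h : WittVector.truncateFun n (x * y).out =
        WittVector.truncateFun n (x.out * y.out) := by
      rw [truncateFun_out, WittVector.truncateFun_mul, truncateFun_out, truncateFun_out]
    have := truncateFun_congr_map f _ _ h
    rw [this, map_mul, WittVector.truncateFun_mul]
  map_zero' := by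
    show WittVector.truncateFun n (WittVector.map f (0 : TruncatedWittVector p n R).out) = 0
    have h : WittVector.truncateFun n ((0 : TruncatedWittVector p n R)).out =
        WittVector.truncateFun n (0 : WittVector p R) := by
      rw [truncateFun_out, WittVector.truncateFun_zero]
    have := truncateFun_congr_map f _ _ h
    rw [this, map_zero, WittVector.truncateFun_zero]
  map_add' x y := by
    show WittVector.truncateFun n (WittVector.map f (x + y).out) =
      WittVector.truncateFun n (WittVector.map f x.out) +
        WittVector.truncateFun n (WittVector.map f y.out)
    have h : WittVector.truncateFun n (x + y).out =
        WittVector.truncateFun n (x.out + y.out) := by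
      rw [truncateFun_out, WittVector.truncateFun_add, truncateFun_out, truncateFun_out]
    have := truncateFun_congr_map f _ _ h
    rw [this, map_add, WittVector.truncateFun_add]

@[simp]
lemma map_coeff (f : R →+* S) (x : TruncatedWittVector p n R) (i : Fin n) :
    (map f x).coeff i = f (x.coeff i) := by
  show (WittVector.truncateFun n (WittVector.map f x.out)).coeff i = f (x.coeff i)
  rw [WittVector.coeff_truncateFun, WittVector.map_coeff, coeff_out]

end TruncatedWittVector

namespace CompleteDiscreteValuation

variable {K : Type*} [Field K]

lemma v_zero (w : CompleteDiscreteValuation K) : w.v 0 = ⊤ := (w.eq_top_iff 0).2 rfl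

lemma v_neg_one (w : CompleteDiscreteValuation K) : w.v (-1) = 0 := by
  have h := w.map_mul (-1) (-1)
  rw [neg_mul_neg, one_mul, w.map_one] at h
  cases h' : w.v (-1) with
  | top =>
      exact absurd ((w.eq_top_iff (-1)).1 h') (by norm_num)
  | coe a =>
      rw [h'] at h
      have ha : a + a = 0 := by exact_mod_cast h.symm
      have : a = 0 := by omega
      rw [this]
      rfl

lemma v_neg (w : CompleteDiscreteValuation K) (x : K) : w.v (-x) = w.v x := by
  rw [show -x = -1 * x by ring, w.map_mul, w.v_neg_one, zero_add]

/-- The valuation ring (ring of integers) of a complete discretely valued field. -/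
def integers (w : CompleteDiscreteValuation K) : Subring K where
  carrier := {x : K | 0 ≤ w.v x}
  zero_mem' := by simp [Set.mem_setOf_eq, v_zero]
  one_mem' := by simp [Set.mem_setOf_eq, w.map_one]
  add_mem' {a b} ha hb := le_trans (le_min ha hb) (w.min_le_add a b)
  mul_mem' {a b} ha hb := by
    simp only [Set.mem_setOf_eq] at *
    rw [w.map_mul]
    exact add_nonneg ha hb
  neg_mem' {a} ha := by
    simp only [Set.mem_setOf_eq] at *
    rwa [w.v_neg]

lemma mem_integers_iff (w : CompleteDiscreteValuation K) (x : K) :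
    x ∈ w.integers ↔ 0 ≤ w.v x := Iff.rfl

/-- The maximal ideal of the valuation ring. -/
def maxIdeal (w : CompleteDiscreteValuation K) : Ideal w.integers where
  carrier := {x | 0 < w.v (x : K)}
  zero_mem' := by simp [Set.mem_setOf_eq, v_zero]
  add_mem' {a b} ha hb := lt_of_lt_of_le (lt_min ha hb) (w.min_le_add (a : K) (b : K))
  smul_mem' c x hx := by
    simp only [Set.mem_setOf_eq] at *
    show 0 < w.v ((c : K) * (x : K))
    rw [w.map_mul]
    exact lt_of_lt_of_le hx (le_add_of_nonneg_left c.2)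

/-- The residue field of a complete discretely valued field. -/
abbrev residueField (w : CompleteDiscreteValuation K) := w.integers ⧸ w.maxIdeal

section Extension

variable {L : Type*} [Field L] [Algebra K L]

/-- The ring homomorphism between valuation rings induced by the inclusion `K ⟶ L`,
when the valuation of `L` restricts to `e` times the valuation of `K`. -/
def integerMap (wK : CompleteDiscreteValuation K) (wL : CompleteDiscreteValuation L)
    (e : ℕ) (hcomp : ∀ x : K, wL.v (algebraMap K L x) = e • wK.v x) :
    wK.integers →+* wL.integers where
  toFun x := ⟨algebraMap K L x, by
    rw [mem_integers_iff, hcomp]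
    exact nsmul_nonneg x.2 e⟩
  map_one' := Subtype.ext (by simp)
  map_mul' x y := Subtype.ext (by simp)
  map_zero' := Subtype.ext (by simp)
  map_add' x y := Subtype.ext (by simp)

/-- The induced homomorphism between the residue fields. -/
def residueMap (wK : CompleteDiscreteValuation K) (wL : CompleteDiscreteValuation L)
    (e : ℕ) (he : 0 < e) (hcomp : ∀ x : K, wL.v (algebraMap K L x) = e • wK.v x) :
    wK.residueField →+* wL.residueField :=
  Ideal.Quotient.lift wK.maxIdeal
    ((Ideal.Quotient.mk wL.maxIdeal).comp (integerMap wK wL e hcomp))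
    (by
      intro a ha
      rw [RingHom.comp_apply, Ideal.Quotient.eq_zero_iff_mem]
      show 0 < wL.v (algebraMap K L (a : K))
      rw [hcomp]
      calc (0 : WithTop ℤ) < wK.v (a : K) := ha
        _ = 1 • wK.v (a : K) := (one_nsmul _).symm
        _ ≤ e • wK.v (a : K) := nsmul_le_nsmul_left (le_of_lt ha) he)

/-- The induced extension of residue fields `k_L / k_K` is separable. -/
def ResidueSeparable (wK : CompleteDiscreteValuation K) (wL : CompleteDiscreteValuation L)
    (e : ℕ) (he : 0 < e) (hcomp : ∀ x : K, wL.v (algebraMap K L x) = e • wK.v x) : Prop :=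
  letI : Algebra wK.residueField wL.residueField := (residueMap wK wL e he hcomp).toAlgebra
  Algebra.IsSeparable wK.residueField wL.residueField

/-- A `K`-algebra automorphism of `L` (necessarily preserving the valuation, which is
recorded in the hypothesis `hGal`) restricts to a ring homomorphism of the valuation
ring `O_L`.  This is the Galois action on `O_L`. -/
def galRes (wL : CompleteDiscreteValuation L)
    (hGal : ∀ (σ : L ≃ₐ[K] L) (x : L), wL.v (σ x) = wL.v x) (σ : L ≃ₐ[K] L) :
    wL.integers →+* wL.integers where
  toFun x := ⟨σ x, by rw [mem_integers_iff, hGal]; exact x.2⟩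
  map_one' := Subtype.ext (by simp)
  map_mul' x y := Subtype.ext (by simp)
  map_zero' := Subtype.ext (by simp)
  map_add' x y := Subtype.ext (by simp)

/-- The statement that the action of the Galois group of `L/K` on `O_L/m_L^{s+1}`
is faithful: every nontrivial automorphism moves some integer of `L` by an element
of valuation at most `s`. -/
def FaithfulOnQuotient (K : Type*) [Field K] {L : Type*} [Field L] [Algebra K L]
    (wL : CompleteDiscreteValuation L) (s : ℕ) : Prop :=
  ∀ σ : L ≃ₐ[K] L, σ ≠ 1 → ∃ x : L, 0 ≤ wL.v x ∧ wL.v (σ x - x) ≤ ((s : ℤ) : WithTop ℤ)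

/-- `s` is the ramification break (lower ramification jump) of `L/K`: the smallest
nonnegative integer such that the induced action of `Gal(L/K)` on `O_L/m_L^{s+1}`
is faithful. -/
def IsRamificationBreak (K : Type*) [Field K] {L : Type*} [Field L] [Algebra K L]
    (wL : CompleteDiscreteValuation L) (s : ℕ) : Prop :=
  FaithfulOnQuotient K wL s ∧ ∀ t : ℕ, t < s → ¬ FaithfulOnQuotient K wL t

end Extension

end CompleteDiscreteValuation

open CompleteDiscreteValuation

/-!
Additive Hilbert 90 makes `H¹(G, W_m(L))` vanish, so a cocycle with values in `W_m(O_L)` is the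
coboundary of some `b ∈ W_m(L)`, which is `G`-invariant up to integral vectors. It suffices that,
for `m` large compared with `n`, such a `b` differs from a Witt vector over `K` by one whose first
`n` coordinates are integral. This property of `L/K` is transitive in towers and, as integers prime
to `p` are units in truncated Witt vectors, it passes from the fixed field of a Sylow `p`-subgroup
down to `K`. This leaves the Galois extensions of degree `p`.

If some integral element has a unit as its trace, its Teichmüller representative splits all
integral cocycles. Otherwise the extension is wildly and, by separability of the residue extension,
totally ramified. Let `e` be the valuation of a uniformizer, `σ` a generator of `G` and `s > 0` its
jump. Modifying each coordinate by an element of `K`, write `b` as a vector over `K` plus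
`∑ Vⁱ[xᵢ]`, where `xᵢ` is zero or `v(xᵢ) / e` is an integer prime to `p`, and in the latter case
`v(σ xᵢ - xᵢ) = v(xᵢ) + s`. The `k`-th coordinate of `Vⁱ([σ xᵢ] - [xᵢ])` then has valuation
`p ^ (k - i) * v(xᵢ) + s`; for fixed `k` these are pairwise distinct, so if some `xᵢ` with `i < n`
had a pole, then the last coordinate of `σ b - b` in length `n + s` would be dominated by a single
term, of negative valuation.
-/

namespace WittCohomology

open WittVector Polynomial

section WittVectors

variable {p : ℕ} [Fact p.Prime] {R S : Type*} [CommRing R] [CommRing S]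

lemma coeff_teichmuller_add_verschiebung (a : R) (y : WittVector p R) (k : ℕ) :
    (teichmuller p a + verschiebung y).coeff k =
      (teichmuller p a).coeff k + (verschiebung y).coeff k :=
  coeff_add_of_disjoint k _ _ fun i ↦ by
    cases i with
    | zero => exact .inr (verschiebung_coeff_zero y)
    | succ i => exact .inl (teichmuller_coeff_pos p a _ i.succ_pos)

lemma coeff_succ_teichmuller_add_verschiebung (a : R) (y : WittVector p R) (k : ℕ) :
    (teichmuller p a + verschiebung y).coeff (k + 1) = y.coeff k := by
  rw [coeff_teichmuller_add_verschiebung, teichmuller_coeff_pos p a _ k.succ_pos, zero_add,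
    verschiebung_coeff_succ]

lemma teichmuller_add_verschiebung_shift (x : WittVector p R) :
    teichmuller p (x.coeff 0) + verschiebung (x.shift 1) = x := by
  ext k
  cases k with
  | zero => rw [coeff_teichmuller_add_verschiebung, teichmuller_coeff_zero,
      verschiebung_coeff_zero, add_zero]
  | succ k => rw [coeff_succ_teichmuller_add_verschiebung, shift_coeff, add_comm]

lemma coeff_succ_add (x y : WittVector p R) (k : ℕ) :
    (x + y).coeff (k + 1) =
      ((teichmuller p (x.coeff 0) + teichmuller p (y.coeff 0)).shift 1 +
        (x.shift 1 + y.shift 1)).coeff k := by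
  set w := teichmuller p (x.coeff 0) + teichmuller p (y.coeff 0) with hw
  have hxy : x + y =
      teichmuller p (w.coeff 0) + verschiebung (w.shift 1 + (x.shift 1 + y.shift 1)) := by
    rw [map_add verschiebung, ← add_assoc, teichmuller_add_verschiebung_shift w, hw,
      map_add verschiebung, add_add_add_comm, teichmuller_add_verschiebung_shift,
      teichmuller_add_verschiebung_shift]
  rw [hxy, coeff_succ_teichmuller_add_verschiebung]

lemma coeff_teichmuller_mul [CharP R p] (a : R) (x : WittVector p R) (k : ℕ) :
    (teichmuller p a * x).coeff k = a ^ p ^ k * x.coeff k := by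
  induction k generalizing a x with
  | zero => rw [WittVector.mul_coeff_zero, teichmuller_coeff_zero, pow_zero, pow_one]
  | succ k ih =>
    have hF : teichmuller p (a ^ p) = frobenius (teichmuller p a) := by
      rw [frobenius_eq_map_frobenius, map_teichmuller, frobenius_def]
    have hV : teichmuller p a * verschiebung (x.shift 1) =
        verschiebung (teichmuller p (a ^ p) * x.shift 1) := by
      rw [hF, mul_comm, ← verschiebung_mul_frobenius, mul_comm (x.shift 1)]
    conv_lhs => rw [← teichmuller_add_verschiebung_shift x]
    rw [mul_add, ← _root_.map_mul, hV, coeff_succ_teichmuller_add_verschiebung, ih, shift_coeff,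
      ← pow_mul, ← pow_succ', add_comm 1 k]

lemma map_iterate_verschiebung (f : R →+* S) (x : WittVector p R) (i : ℕ) :
    WittVector.map f (verschiebung^[i] x) = verschiebung^[i] (WittVector.map f x) :=
  Function.Semiconj.iterate_right (map_verschiebung f) i x

lemma X_sq_dvd_one_add_X_pow_sub (N : ℕ) :
    (X : ℤ[X]) ^ 2 ∣ (1 + X) ^ N - 1 - (N : ℤ[X]) * X := by
  refine X_pow_dvd_iff.2 fun d hd ↦ ?_
  interval_cases d <;> simp [coeff_one_add_X_pow, coeff_one]

lemma sum_coeff_pow_teichmuller_sub_one (a : R) (k : ℕ) :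
    ∑ i ∈ Finset.range (k + 1),
      (p : R) ^ i * (teichmuller p a - 1).coeff i ^ p ^ (k - i) = a ^ p ^ k - 1 := by
  have hghost := ghostComponent_apply k (teichmuller p a - 1)
  rw [map_sub, _root_.map_one, ghostComponent_teichmuller, aeval_wittPolynomial] at hghost
  exact hghost.symm

/- The ghost equations `∑_{i ≤ k} pⁱ dᵢ ^ (p ^ (k - i)) = (1 + X) ^ (p ^ k) - 1` determine the
coordinates `dᵢ` of `[1 + X] - 1`; modulo `X²` they reduce to `p ^ k * d_k = p ^ k * X`. -/
lemma X_sq_dvd_coeff_teichmuller_one_add_X_sub_one (k : ℕ) :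
    (X : ℤ[X]) ^ 2 ∣ (teichmuller p (1 + X : ℤ[X]) - 1).coeff k - X := by
  induction k using Nat.strong_induction_on with
  | _ k ih =>
    set d : ℕ → ℤ[X] := (teichmuller p (1 + X : ℤ[X]) - 1).coeff
    have hX : ∀ i < k, X ∣ d i := fun i hi ↦
      (dvd_sub_self_right).1 ((dvd_pow_self X two_ne_zero).trans (ih i hi))
    have hlow : X ^ 2 ∣ ∑ i ∈ Finset.range k, (p : ℤ[X]) ^ i * d i ^ p ^ (k - i) :=
      Finset.dvd_sum fun i hi ↦ by
        have hik := Finset.mem_range.1 hi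
        have hpow : 2 ≤ p ^ (k - i) :=
          (Fact.out : p.Prime).two_le.trans (Nat.le_self_pow (Nat.sub_ne_zero_of_lt hik) p)
        exact ((pow_dvd_pow X hpow).trans (pow_dvd_pow_of_dvd (hX i hik) _)).mul_left _
    have hghost : ∑ i ∈ Finset.range (k + 1), (p : ℤ[X]) ^ i * d i ^ p ^ (k - i) =
        (1 + X) ^ p ^ k - 1 := sum_coeff_pow_teichmuller_sub_one (1 + X) k
    rw [Finset.sum_range_succ, Nat.sub_self, pow_zero, pow_one] at hghost
    have htop : X ^ 2 ∣ C ((p : ℤ) ^ k) * (d k - X) := by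
      convert dvd_sub (X_sq_dvd_one_add_X_pow_sub (p ^ k)) hlow using 1
      rw [← hghost, C_pow, map_natCast C]
      push_cast
      ring
    refine X_pow_dvd_iff.2 fun j hj ↦ ?_
    have hj' := X_pow_dvd_iff.1 htop j hj
    rw [coeff_C_mul] at hj'
    exact (mul_eq_zero.1 hj').resolve_left
      (pow_ne_zero _ (Nat.cast_ne_zero.2 (Fact.out : p.Prime).ne_zero))

lemma exists_aeval_coeff_teichmuller_one_add_sub_one (k : ℕ) :
    ∃ g : ℤ[X], ∀ {A : Type*} [CommRing A] (ε : A),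
      (teichmuller p (1 + ε) - 1).coeff k = ε + ε ^ 2 * aeval ε g := by
  obtain ⟨g, hg⟩ := X_sq_dvd_coeff_teichmuller_one_add_X_sub_one (p := p) k
  refine ⟨g, fun ε ↦ ?_⟩
  have hmap : WittVector.map (aeval (R := ℤ) ε : ℤ[X] →+* _) (teichmuller p (1 + X) - 1) =
      teichmuller p (1 + ε) - 1 := by simp
  rw [← hmap, WittVector.map_coeff, sub_eq_iff_eq_add'.1 hg]
  simp

/-- The Witt vectors whose first `m` coordinates lie in the subring `O`. Truncating to length `m`
identifies its image with the ring `W_m(O)` inside `W_m(R)`. -/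
def coeffsIn (p : ℕ) [Fact p.Prime] (O : Subring R) (m : ℕ) : Subring (WittVector p R) :=
  (TruncatedWittVector.map (p := p) (n := m) O.subtype).range.comap (truncate m)

lemma mem_coeffsIn {O : Subring R} {m : ℕ} {x : WittVector p R} :
    x ∈ coeffsIn p O m ↔ ∀ k < m, x.coeff k ∈ O := by
  refine ⟨fun ⟨y, hy⟩ k hk ↦ ?_, fun h ↦
    ⟨TruncatedWittVector.mk p fun i ↦ ⟨x.coeff i, h i i.2⟩, TruncatedWittVector.ext fun i ↦ ?_⟩⟩
  · have hk' := congrArg (TruncatedWittVector.coeff ⟨k, hk⟩) hy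
    rw [TruncatedWittVector.map_coeff, coeff_truncate] at hk'
    exact hk' ▸ (y.coeff ⟨k, hk⟩).2
  · rw [TruncatedWittVector.map_coeff, TruncatedWittVector.coeff_mk, coeff_truncate,
      Subring.subtype_apply]

lemma coeffsIn_anti (O : Subring R) : Antitone (coeffsIn p O) := fun _ _ hmn _ hx ↦
  mem_coeffsIn.2 fun k hk ↦ mem_coeffsIn.1 hx k (hk.trans_le hmn)

lemma iterate_verschiebung_mem_coeffsIn {O : Subring R} {m : ℕ} {x : WittVector p R}
    (hx : x ∈ coeffsIn p O m) (i : ℕ) : verschiebung^[i] x ∈ coeffsIn p O m :=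
  mem_coeffsIn.2 fun k hk ↦ by
    rcases lt_or_ge k i with hki | hik
    · rw [iterate_verschiebung_coeff_eq_zero x hki]
      exact O.zero_mem
    · obtain ⟨j, rfl⟩ := Nat.exists_eq_add_of_le' hik
      rw [iterate_verschiebung_coeff]
      exact mem_coeffsIn.1 hx j (by omega)

lemma iterate_verschiebung_mem_coeffsIn_of_le (O : Subring R) {m i : ℕ} (hmi : m ≤ i)
    (x : WittVector p R) : verschiebung^[i] x ∈ coeffsIn p O m :=
  mem_coeffsIn.2 fun k hk ↦ by
    rw [iterate_verschiebung_coeff_eq_zero x (hk.trans_le hmi)]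
    exact O.zero_mem

lemma teichmuller_mem_coeffsIn {O : Subring R} {a : R} (ha : a ∈ O) (m : ℕ) :
    teichmuller p a ∈ coeffsIn p O m :=
  mem_coeffsIn.2 fun k _ ↦ by
    cases k with
    | zero => rwa [teichmuller_coeff_zero]
    | succ k =>
      rw [teichmuller_coeff_pos p a _ k.succ_pos]
      exact O.zero_mem

lemma map_mem_coeffsIn {O : Subring R} {O' : Subring S} {f : R →+* S}
    (hf : ∀ x ∈ O, f x ∈ O') {m : ℕ} {x : WittVector p R} (hx : x ∈ coeffsIn p O m) :
    WittVector.map f x ∈ coeffsIn p O' m :=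
  mem_coeffsIn.2 fun k hk ↦ by
    rw [WittVector.map_coeff]
    exact hf _ (mem_coeffsIn.1 hx k hk)

lemma natCast_pow_mul_mem_coeffsIn [CharP R p] (O : Subring R) (m : ℕ) (x : WittVector p R) :
    (p : WittVector p R) ^ m * x ∈ coeffsIn p O m :=
  mem_coeffsIn.2 fun k hk ↦ by
    rw [mul_comm, mul_pow_charP_coeff_zero x hk]
    exact O.zero_mem

end WittVectors

section Valuations

variable {L : Type*} [Field L] (v : AddValuation L (WithTop ℤ))

/-- The valuation ring of an additive valuation. -/
def integerRing : ValuationSubring L :=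
  Valuation.valuationSubring (AddValuation.toValuation v)

variable {v}

lemma mem_integerRing {x : L} : x ∈ integerRing v ↔ 0 ≤ v x := Iff.rfl

lemma mem_maximalIdeal_integerRing {x : integerRing v} :
    x ∈ IsLocalRing.maximalIdeal (integerRing v) ↔ 0 < v x :=
  Valuation.mem_maximalIdeal_iff _ _

lemma exists_val_eq_coe {x : L} (hx : x ≠ 0) : ∃ a : ℤ, v x = a := by
  obtain ⟨a, ha⟩ := WithTop.ne_top_iff_exists.1 (v.ne_top_iff.2 hx)
  exact ⟨a, ha.symm⟩

lemma val_eq_of_val_eq_add {x y : L} {a : ℤ} {s : WithTop ℤ} (hx : v x = a)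
    (hxy : v y = v x + s) : v (y / x) = s := by
  rw [v.map_div, hxy, hx]
  cases s with
  | top => rfl
  | coe s => norm_cast; ring_nf

lemma nonneg_val_div {x y : L} (hx : x ≠ 0) (hxy : v x ≤ v y) : 0 ≤ v (y / x) := by
  obtain ⟨a, ha⟩ := exists_val_eq_coe (v := v) hx
  have hmul : v (y / x) + a = v y := by rw [← ha, ← v.map_mul, div_mul_cancel₀ y hx]
  rw [ha, ← hmul] at hxy
  cases h : v (y / x) with
  | top => exact le_top
  | coe b =>
    rw [h] at hxy
    norm_cast at hxy ⊢
    omega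

lemma nsmul_top {N : ℕ} (hN : N ≠ 0) : N • (⊤ : WithTop ℤ) = ⊤ := by
  rw [← Nat.succ_pred_eq_of_ne_zero hN, succ_nsmul, WithTop.add_top]

lemma nsmul_withTop_injective {N : ℕ} (hN : N ≠ 0) :
    Function.Injective fun a : WithTop ℤ ↦ N • a := by
  intro a b hab
  cases a <;> cases b <;>
    simp_all [nsmul_top, ← WithTop.coe_nsmul, -WithTop.coe_mul, -nsmul_eq_mul]

lemma exists_scaled_valuation (v : AddValuation L (WithTop ℤ)) {N : ℕ} (hN : N ≠ 0) :
    ∃ w : AddValuation L (WithTop ℤ), ∀ x, w x = N • v x :=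
  ⟨v.map (nsmulAddMonoidHom N) (nsmul_top hN) fun _ _ h ↦ nsmul_le_nsmul_right h N, fun _ ↦ rfl⟩

section Teichmuller

variable {p : ℕ} [Fact p.Prime]

lemma val_coeff_teichmuller_one_add_sub_one {ε : L} (hε : 0 < v ε) (k : ℕ) :
    v ((teichmuller p (1 + ε) - 1).coeff k) = v ε := by
  obtain ⟨g, hg⟩ := exists_aeval_coeff_teichmuller_one_add_sub_one (p := p) k
  have hint : (aeval ε g : L) ∈ integerRing v := by
    rw [aeval_eq_sum_range]
    refine sum_mem fun i _ ↦ zsmul_mem (pow_mem (mem_integerRing.2 hε.le) i) _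
  have hfac : (teichmuller p (1 + ε) - 1).coeff k = ε * (1 + ε * aeval ε g) := by
    rw [hg]
    ring
  have hunit : v (1 + ε * aeval ε g) = 0 := by
    rw [v.map_add_eq_of_lt_left, v.map_one]
    rw [v.map_one, v.map_mul]
    exact add_pos_of_pos_of_nonneg hε (mem_integerRing.1 hint)
  rw [hfac, v.map_mul, hunit, add_zero]

variable [CharP L p]

lemma val_coeff_teichmuller_mul_one_add_sub (x : L) {ε : L} (hε : 0 < v ε) (k : ℕ) :
    v ((teichmuller p (x * (1 + ε)) - teichmuller p x).coeff k) = p ^ k • v x + v ε := by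
  have hfac : teichmuller p (x * (1 + ε)) - teichmuller p x =
      teichmuller p x * (teichmuller p (1 + ε) - 1) := by
    rw [_root_.map_mul]
    ring
  rw [hfac, coeff_teichmuller_mul, v.map_mul, v.map_pow, val_coeff_teichmuller_one_add_sub_one hε]

lemma nsmul_le_val_coeff_teichmuller_add {a b : L} {r : WithTop ℤ} (ha : r ≤ v a) (hb : r ≤ v b)
    (k : ℕ) : p ^ k • r ≤ v ((teichmuller p a + teichmuller p b).coeff k) := by
  wlog hab : v a ≤ v b generalizing a b
  · rw [add_comm]
    exact this hb ha (le_of_not_ge hab)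
  by_cases ha0 : a = 0
  · have hb0 : b = 0 := by rwa [ha0, v.map_zero, top_le_iff, v.top_iff] at hab
    rw [ha0, hb0, teichmuller_zero, add_zero, zero_coeff, v.map_zero]
    exact le_top
  have hfac : teichmuller p a + teichmuller p b =
      teichmuller p a * (1 + teichmuller p (b / a)) := by
    rw [mul_add, mul_one, ← _root_.map_mul, mul_div_cancel₀ b ha0]
  have hint : 1 + teichmuller p (b / a) ∈ coeffsIn p (integerRing v).toSubring (k + 1) :=
    add_mem (one_mem _) (teichmuller_mem_coeffsIn (nonneg_val_div ha0 hab) _)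
  rw [hfac, coeff_teichmuller_mul, v.map_mul, v.map_pow]
  exact (nsmul_le_nsmul_right ha _).trans
    (le_add_of_nonneg_right (mem_coeffsIn.1 hint k k.lt_succ_self))

lemma pow_mul_lt_of_forall_lt_mul {β : ℕ → ℤ} (hβ : ∀ k, β (k + 1) < p * β k) (k : ℕ) :
    β (k + 1) < p ^ (k + 1) * β 0 := by
  induction k with
  | zero => simpa using hβ 0
  | succ k ih =>
    have hp : (0 : ℤ) < p := mod_cast (Fact.out : p.Prime).pos
    calc β (k + 2) < p * β (k + 1) := hβ (k + 1)
      _ < p * (p ^ (k + 1) * β 0) := mul_lt_mul_of_pos_left ih hp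
      _ = p ^ (k + 2) * β 0 := by ring

/- Addition of Witt vectors is homogeneous when the `k`-th coordinate has weight `p ^ k`, so the
non-linear terms of the `k`-th coordinate of a sum are at least as divisible as `p * β (k - 1)`. -/
lemma lt_val_coeff_add_sub {β : ℕ → ℤ} (hβ : ∀ k, β (k + 1) < p * β k) {m : ℕ}
    {x y : WittVector p L} (hx : ∀ k < m, β k ≤ v (x.coeff k)) (hy : ∀ k < m, β k ≤ v (y.coeff k)) :
    ∀ k < m, β k < v ((x + y).coeff k - (x.coeff k + y.coeff k)) := by
  induction m generalizing x y β with
  | zero => exact fun k hk ↦ absurd hk k.not_lt_zero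
  | succ m ih =>
    rintro (_ | k) hk
    · rw [add_coeff_zero, sub_self, v.map_zero]
      exact WithTop.coe_lt_top _
    set d := (teichmuller p (x.coeff 0) + teichmuller p (y.coeff 0)).shift 1
    have hd : ∀ j, β (j + 1) < v (d.coeff j) := fun j ↦ by
      have := nsmul_le_val_coeff_teichmuller_add (hx 0 m.succ_pos) (hy 0 m.succ_pos) (j + 1)
      rw [shift_coeff, add_comm 1 j]
      refine lt_of_lt_of_le ?_ this
      rw [← WithTop.coe_nsmul, WithTop.coe_lt_coe, nsmul_eq_mul]
      exact mod_cast pow_mul_lt_of_forall_lt_mul hβ j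
    have hshift : ∀ {z : WittVector p L}, (∀ k < m + 1, β k ≤ v (z.coeff k)) →
        ∀ j < m, β (j + 1) ≤ v ((z.shift 1).coeff j) := fun hz j hj ↦ by
      rw [shift_coeff, add_comm 1 j]
      exact hz _ (Nat.succ_lt_succ hj)
    have hs := ih (fun k ↦ hβ (k + 1)) (hshift hx) (hshift hy)
    have hs' : ∀ j < m, β (j + 1) ≤ v ((x.shift 1 + y.shift 1).coeff j) := fun j hj ↦ by
      rw [← sub_add_cancel ((x.shift 1 + y.shift 1).coeff j) (_ + _)]
      exact v.map_le_add (hs j hj).le (v.map_le_add (hshift hx j hj) (hshift hy j hj))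
    have hk' : k < m := Nat.lt_of_succ_lt_succ hk
    have hsplit : (x + y).coeff (k + 1) - (x.coeff (k + 1) + y.coeff (k + 1)) =
        ((d + (x.shift 1 + y.shift 1)).coeff k - (d.coeff k + (x.shift 1 + y.shift 1).coeff k)) +
        (d.coeff k + ((x.shift 1 + y.shift 1).coeff k -
          ((x.shift 1).coeff k + (y.shift 1).coeff k))) := by
      rw [coeff_succ_add, shift_coeff x, shift_coeff y, add_comm 1 k]
      ring
    rw [hsplit]
    exact v.map_lt_add (ih (fun k ↦ hβ (k + 1)) (fun j _ ↦ (hd j).le) hs' k hk')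
      (v.map_lt_add (hd k) (hs k hk'))

lemma lt_val_coeff_sum_sub {ι : Type*} {β : ℕ → ℤ} (hβ : ∀ k, β (k + 1) < p * β k) {m : ℕ}
    (T : Finset ι) {y : ι → WittVector p L} (hy : ∀ i ∈ T, ∀ k < m, β k ≤ v ((y i).coeff k)) :
    ∀ k < m, β k < v ((∑ i ∈ T, y i).coeff k - ∑ i ∈ T, (y i).coeff k) := by
  induction T using Finset.induction_on with
  | empty => simp
  | insert a T haT ih =>
    have hT := ih fun i hi ↦ hy i (Finset.mem_insert_of_mem hi)
    have hsum : ∀ k < m, β k ≤ v ((∑ i ∈ T, y i).coeff k) := fun k hk ↦ by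
      rw [← sub_add_cancel ((∑ i ∈ T, y i).coeff k) (∑ i ∈ T, (y i).coeff k)]
      exact v.map_le_add (hT k hk).le
        (v.map_le_sum fun i hi ↦ hy i (Finset.mem_insert_of_mem hi) k hk)
    intro k hk
    have hadd := lt_val_coeff_add_sub hβ (hy a (Finset.mem_insert_self a T)) hsum k hk
    rw [Finset.sum_insert haT, Finset.sum_insert haT]
    convert v.map_lt_add hadd (hT k hk) using 2
    ring

lemma val_coeff_sum_eq_of_dominant {ι : Type*} {β : ℕ → ℤ} (hβ : ∀ k, β (k + 1) < p * β k)
    {m : ℕ} {T : Finset ι} {y : ι → WittVector p L}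
    (hy : ∀ i ∈ T, ∀ k < m, β k ≤ v ((y i).coeff k)) {i₀ : ι} (hi₀ : i₀ ∈ T) {k : ℕ} (hk : k < m)
    (heq : v ((y i₀).coeff k) = β k) (hlt : ∀ i ∈ T, i ≠ i₀ → β k < v ((y i).coeff k)) :
    v ((∑ i ∈ T, y i).coeff k) = β k := by
  have hrest : v ((y i₀).coeff k) < v (∑ i ∈ T.erase i₀, (y i).coeff k) := by
    rw [heq]
    exact v.map_lt_sum (WithTop.coe_ne_top) fun i hi ↦
      hlt i (Finset.mem_of_mem_erase hi) (Finset.ne_of_mem_erase hi)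
  have hlin : v (∑ i ∈ T, (y i).coeff k) = β k := by
    rw [← Finset.add_sum_erase T _ hi₀, v.map_add_eq_of_lt_left hrest, heq]
  refine (v.map_eq_of_lt_sub ?_).trans hlin
  rw [hlin]
  exact lt_val_coeff_sum_sub hβ T hy k hk

end Teichmuller

end Valuations

section Reduction

variable {p : ℕ} [Fact p.Prime]

lemma exists_eq_map_add_sum_teichmuller {A B : Type*} [CommRing A] [CommRing B] (φ : A →+* B)
    {P : B → Prop} (hP : ∀ x, ∃ f, P (x - φ f)) (m : ℕ) (b : WittVector p B) :
    ∃ (b' : WittVector p A) (x : ℕ → B) (t : WittVector p B), (∀ i < m, P (x i)) ∧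
      b = WittVector.map φ b' + (∑ i ∈ Finset.range m, verschiebung^[i] (teichmuller p (x i)) +
        verschiebung^[m] t) := by
  induction m generalizing b with
  | zero => exact ⟨0, 0, b, fun i hi ↦ absurd hi i.not_lt_zero, by simp⟩
  | succ m ih =>
    obtain ⟨f, hf⟩ := hP (b.coeff 0)
    set r := b - WittVector.map φ (teichmuller p f) - teichmuller p (b.coeff 0 - φ f)
    have hr : r.coeff 0 = 0 := by
      rw [← WittVector.constantCoeff_apply, map_sub, map_sub]
      simp only [WittVector.constantCoeff_apply, WittVector.map_coeff, teichmuller_coeff_zero,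
        sub_self]
    obtain ⟨c, x, t, hx, hc⟩ := ih (r.shift 1)
    refine ⟨teichmuller p f + verschiebung c, fun i ↦ i.casesOn (b.coeff 0 - φ f) x, t, ?_, ?_⟩
    · rintro (_ | i) hi
      · exact hf
      · exact hx i (Nat.lt_of_succ_lt_succ hi)
    · have hrV := teichmuller_add_verschiebung_shift r
      simp only [hr, teichmuller_zero, zero_add, hc, map_add verschiebung, ← map_verschiebung,
        map_sum verschiebung, ← Function.iterate_succ_apply' verschiebung] at hrV
      rw [Finset.sum_range_succ', map_add (WittVector.map φ), Function.iterate_zero_apply]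
      linear_combination -hrV

end Reduction

section RamifiedStep

variable {p : ℕ} [Fact p.Prime] {E : Type*} [Field E] {v : AddValuation E (WithTop ℤ)}

lemma eq_of_pow_sub_mul_eq {m i j : ℕ} (hi : i ≤ m) (hj : j ≤ m) {a b : ℤ} (ha : ¬(p : ℤ) ∣ a)
    (hb : ¬(p : ℤ) ∣ b) (h : (p : ℤ) ^ (m - i) * a = p ^ (m - j) * b) : i = j := by
  wlog hij : i < j generalizing i j a b
  · rcases (not_lt.1 hij).eq_or_lt with rfl | hlt
    · rfl
    · exact (this hj hi hb ha h.symm hlt).symm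
  refine absurd ?_ hb
  have hp : (p : ℤ) ^ (m - j) ≠ 0 :=
    pow_ne_zero _ (Nat.cast_ne_zero.2 (Fact.out : p.Prime).ne_zero)
  rw [show m - i = (m - j) + (j - i) by omega, pow_add, mul_assoc] at h
  rw [← mul_left_cancel₀ hp h]
  exact (dvd_pow_self _ (by omega)).mul_right a

/-- `x` is zero, or its valuation is `e` times an integer prime to `p` and `σ` moves `x` by exactly
`s` more than its valuation. When `e` is the valuation of a uniformizer and `s` the jump of a wildly
ramified `σ`, these are the elements on which `σ` attains the lower bound for `v (σ x - x)`. -/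
def AttainsJump (p : ℕ) (v : AddValuation E (WithTop ℤ)) (σ : E →+* E) (e s : ℤ) (x : E) : Prop :=
  x = 0 ∨ (∃ j : ℤ, ¬(p : ℤ) ∣ j ∧ v x = (e * j : ℤ)) ∧ v (σ x - x) = v x + s

variable [CharP E p]

lemma val_coeff_iterate_verschiebung_teichmuller_sub {x y : E} {a s : ℤ} (hs : 0 < s)
    (hx : v x = a) (hxy : v (y - x) = v x + s) {i k : ℕ} (hik : i ≤ k) :
    v ((verschiebung^[i] (teichmuller p y - teichmuller p x)).coeff k) =
      (p ^ (k - i) * a + s : ℤ) := by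
  have hx0 : x ≠ 0 := by
    rintro rfl
    exact WithTop.top_ne_coe (v.map_zero.symm.trans hx)
  have hε : v ((y - x) / x) = s := val_eq_of_val_eq_add hx hxy
  have hy : y = x * (1 + (y - x) / x) := by field_simp; ring
  obtain ⟨j, rfl⟩ := Nat.exists_eq_add_of_le' hik
  rw [iterate_verschiebung_coeff, hy, val_coeff_teichmuller_mul_one_add_sub x
    (by rw [hε]; exact mod_cast hs), hε, hx, Nat.add_sub_cancel]
  rw [← WithTop.coe_nsmul, ← WithTop.coe_add, nsmul_eq_mul]
  push_cast
  rfl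

lemma nsmul_val_coeff_iterate_verschiebung_teichmuller_sub {x y : E} {a s : ℤ} (hs : 0 < s)
    (hx : v x = a) (hxy : v (y - x) = v x + s) {i k m : ℕ} (hik : i ≤ k) (him : i ≤ m) :
    p ^ m • v ((verschiebung^[i] (teichmuller p y - teichmuller p x)).coeff k) =
      (p ^ k * (p ^ (m - i) * a) + p ^ m * s : ℤ) := by
  have hpow : (p : ℤ) ^ m * p ^ (k - i) = p ^ k * p ^ (m - i) := by
    rw [← pow_add, ← pow_add, ← Nat.add_sub_assoc hik, ← Nat.add_sub_assoc him, add_comm]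
  have hmul : (p : ℤ) ^ m * (p ^ (k - i) * a + s) = p ^ k * (p ^ (m - i) * a) + p ^ m * s := by
    linear_combination a * hpow
  rw [val_coeff_iterate_verschiebung_teichmuller_sub hs hx hxy hik, ← WithTop.coe_nsmul,
    nsmul_eq_mul, Nat.cast_pow, hmul]

/- The coordinate of index `k` of `Vⁱ([yᵢ] - [xᵢ])` has valuation `p ^ (k - i) * aᵢ + s`. After
scaling `v` by `p ^ m` this is the bound `β k` below for `i = i₀`, and at least `β k` otherwise. -/
lemma val_coeff_sum_iterate_verschiebung_teichmuller_sub {s : ℤ} (hs : 0 < s) {m : ℕ}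
    {T : Finset ℕ} (hT : ∀ i ∈ T, i < m) {x y : ℕ → E} {a : ℕ → ℤ} (hx : ∀ i ∈ T, v (x i) = a i)
    (hxy : ∀ i ∈ T, v (y i - x i) = v (x i) + s) {i₀ : ℕ} (hi₀ : i₀ ∈ T)
    (hmin : ∀ i ∈ T, i ≠ i₀ → (p : ℤ) ^ (m - i₀) * a i₀ < p ^ (m - i) * a i) :
    v ((∑ i ∈ T, verschiebung^[i] (teichmuller p (y i) - teichmuller p (x i))).coeff (m - 1)) =
      (p ^ (m - 1 - i₀) * a i₀ + s : ℤ) := by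
  have hp : 1 < (p : ℤ) := mod_cast (Fact.out : p.Prime).one_lt
  have hp0 : ∀ k : ℕ, 0 < (p : ℤ) ^ k := fun k ↦ pow_pos (by omega) k
  obtain ⟨w, hw⟩ := exists_scaled_valuation v (pow_ne_zero m (Fact.out : p.Prime).ne_zero)
  have hval : ∀ i ∈ T, ∀ k, i ≤ k →
      w ((verschiebung^[i] (teichmuller p (y i) - teichmuller p (x i))).coeff k) =
        (p ^ k * (p ^ (m - i) * a i) + p ^ m * s : ℤ) := fun i hi k hik ↦ by
    rw [hw, nsmul_val_coeff_iterate_verschiebung_teichmuller_sub hs (hx i hi) (hxy i hi) hik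
      (hT i hi).le]
  set β : ℕ → ℤ := fun k ↦ p ^ k * (p ^ (m - i₀) * a i₀) + p ^ m * s
  have hβ : ∀ k, β (k + 1) < p * β k := fun k ↦ by
    have := mul_lt_mul_of_pos_right hp (mul_pos (hp0 m) hs)
    simp only [β, pow_succ']
    linarith
  have hβlt : ∀ i ∈ T, i ≠ i₀ → ∀ k, β k < p ^ k * (p ^ (m - i) * a i) + p ^ m * s :=
    fun i hi hne k ↦ add_lt_add_left (mul_lt_mul_of_pos_left (hmin i hi hne) (hp0 k)) _
  have hlow : ∀ i ∈ T, ∀ k < m,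
      β k ≤ w ((verschiebung^[i] (teichmuller p (y i) - teichmuller p (x i))).coeff k) := by
    intro i hi k _
    rcases lt_or_ge k i with hki | hik
    · rw [iterate_verschiebung_coeff_eq_zero _ hki, w.map_zero]
      exact le_top
    · rw [hval i hi k hik, WithTop.coe_le_coe]
      rcases eq_or_ne i i₀ with rfl | hne
      exacts [le_rfl, (hβlt i hi hne k).le]
  have hm : m - 1 < m := Nat.sub_one_lt (Nat.ne_zero_of_lt (hT i₀ hi₀))
  have hle : ∀ i ∈ T, i ≤ m - 1 := fun i hi ↦ Nat.le_sub_one_of_lt (hT i hi)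
  have hsum := val_coeff_sum_eq_of_dominant hβ hlow hi₀ hm (hval i₀ hi₀ _ (hle i₀ hi₀))
    fun i hi hne ↦ by
      rw [hval i hi _ (hle i hi), WithTop.coe_lt_coe]
      exact hβlt i hi hne _
  rw [← val_coeff_iterate_verschiebung_teichmuller_sub hs (hx i₀ hi₀) (hxy i₀ hi₀)
    (hle i₀ hi₀)]
  refine nsmul_withTop_injective (pow_ne_zero m (Fact.out : p.Prime).ne_zero) ?_
  simp only [← hw, hsum, hval i₀ hi₀ _ (hle i₀ hi₀), β]

/- Since `p` does not divide `v xᵢ / e`, the numbers `p ^ (m - i) * v xᵢ` are pairwise distinct. -/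
lemma exists_val_coeff_sum_eq {σ : E →+* E} {e s : ℤ} (he : e ≠ 0) (hs : 0 < s) {m : ℕ}
    {x : ℕ → E} (hx : ∀ i < m, AttainsJump p v σ e s (x i)) {i₁ : ℕ} (hi₁ : i₁ < m) {a₁ : ℤ}
    (ha₁ : v (x i₁) = a₁) :
    ∃ i₀ < m, ∃ a₀ : ℤ, (p : ℤ) ^ (m - i₀) * a₀ ≤ p ^ (m - i₁) * a₁ ∧
      v ((∑ i ∈ Finset.range m,
        verschiebung^[i] (teichmuller p (σ (x i)) - teichmuller p (x i))).coeff (m - 1)) =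
        (p ^ (m - 1 - i₀) * a₀ + s : ℤ) := by
  set T := (Finset.range m).filter fun i ↦ x i ≠ 0
  have hT : ∀ i ∈ T, i < m := fun i hi ↦ Finset.mem_range.1 (Finset.mem_filter.1 hi).1
  have hjump : ∀ i ∈ T, (∃ j : ℤ, ¬(p : ℤ) ∣ j ∧ v (x i) = (e * j : ℤ)) ∧
      v (σ (x i) - x i) = v (x i) + s := fun i hi ↦
    (hx i (hT i hi)).resolve_left (Finset.mem_filter.1 hi).2
  choose! j hj hval using fun i hi ↦ (hjump i hi).1
  have hi₁T : i₁ ∈ T := Finset.mem_filter.2 ⟨Finset.mem_range.2 hi₁, fun h ↦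
    WithTop.top_ne_coe (v.map_zero.symm.trans (h ▸ ha₁))⟩
  obtain ⟨i₀, hi₀, hmin⟩ := T.exists_min_image (fun i ↦ (p : ℤ) ^ (m - i) * (e * j i)) ⟨i₁, hi₁T⟩
  have hlt : ∀ i ∈ T, i ≠ i₀ → (p : ℤ) ^ (m - i₀) * (e * j i₀) < p ^ (m - i) * (e * j i) :=
    fun i hi hne ↦ (hmin i hi).lt_of_ne fun h ↦ hne (eq_of_pow_sub_mul_eq (hT i hi).le
      (hT i₀ hi₀).le (hj i hi) (hj i₀ hi₀) (mul_left_cancel₀ he (by linear_combination -h)))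
  refine ⟨i₀, hT i₀ hi₀, e * j i₀, ?_, ?_⟩
  · rw [← WithTop.coe_injective ((hval i₁ hi₁T).symm.trans ha₁)]
    exact hmin i₁ hi₁T
  · rw [← val_coeff_sum_iterate_verschiebung_teichmuller_sub hs hT hval
      (fun i hi ↦ (hjump i hi).2) hi₀ hlt, Finset.sum_filter_of_ne]
    rintro i - hne h0
    rw [h0, map_zero, sub_self, iterate_map_zero] at hne
    exact hne rfl

lemma nonneg_val_of_sum_mem_coeffsIn {σ : E →+* E} {e : ℤ} {s : ℕ} (he : e ≠ 0) (hs : 0 < s)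
    {n : ℕ} {x : ℕ → E} (hx : ∀ i < n + s, AttainsJump p v σ e s (x i))
    (hsum : ∑ i ∈ Finset.range (n + s),
      verschiebung^[i] (teichmuller p (σ (x i)) - teichmuller p (x i)) ∈
        coeffsIn p (integerRing v).toSubring (n + s)) {i : ℕ} (hi : i < n) : 0 ≤ v (x i) := by
  by_cases hxi : x i = 0
  · rw [hxi, v.map_zero]
    exact le_top
  obtain ⟨a, ha⟩ := exists_val_eq_coe (v := v) hxi
  obtain ⟨i₀, hi₀, a₀, hle, hval⟩ := exists_val_coeff_sum_eq he (mod_cast hs) hx (by omega) ha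
  have hnonneg := mem_integerRing.1 (mem_coeffsIn.1 hsum (n + s - 1) (by omega))
  rw [ha]
  rw [hval] at hnonneg
  norm_cast at hnonneg ⊢
  by_contra! hneg
  have hlarge : (p : ℤ) * s < p ^ (n + s - i) := by
    rw [show n + s - i = (s + (n - i - 1)) + 1 by omega, pow_succ']
    have := (Nat.lt_pow_self (Fact.out : p.Prime).one_lt).trans_le
      (Nat.pow_le_pow_right (Fact.out : p.Prime).pos (Nat.le_add_right s (n - i - 1)))
    exact mod_cast Nat.mul_lt_mul_of_pos_left this (Fact.out : p.Prime).pos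
  have hpos : 0 ≤ (p : ℤ) * (p ^ (n + s - 1 - i₀) * a₀ + s) :=
    mul_nonneg (Nat.cast_nonneg p) (mod_cast hnonneg)
  have hpow : (p : ℤ) ^ (n + s - i₀) = p * p ^ (n + s - 1 - i₀) := by
    rw [← pow_succ']
    congr 1
    omega
  rw [hpow] at hle
  have hneg' : (p : ℤ) ^ (n + s - i) * a ≤ p ^ (n + s - i) * -1 :=
    mul_le_mul_of_nonneg_left (by omega) (by positivity)
  linarith

lemma exists_sub_map_mem_coeffsIn_of_attainsJump {K : Type*} [CommRing K] {φ : K →+* E}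
    {σ : E →+* E} (hσ : ∀ f, σ (φ f) = φ f) {e : ℤ} {s : ℕ} (he : e ≠ 0) (hs : 0 < s)
    (hP : ∀ x, ∃ f, AttainsJump p v σ e s (x - φ f)) {n : ℕ} {b : WittVector p E}
    (hb : WittVector.map σ b - b ∈ coeffsIn p (integerRing v).toSubring (n + s)) :
    ∃ b' : WittVector p K, b - WittVector.map φ b' ∈ coeffsIn p (integerRing v).toSubring n := by
  obtain ⟨b', x, t, hx, rfl⟩ := exists_eq_map_add_sum_teichmuller (p := p) φ hP (n + s) b
  have hfix : WittVector.map σ (WittVector.map φ b') = WittVector.map φ b' := by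
    ext k
    rw [WittVector.map_coeff, WittVector.map_coeff, hσ]
  have hdiff : ∑ i ∈ Finset.range (n + s),
      verschiebung^[i] (teichmuller p (σ (x i)) - teichmuller p (x i)) ∈
        coeffsIn p (integerRing v).toSubring (n + s) := by
    convert sub_mem hb (iterate_verschiebung_mem_coeffsIn_of_le (p := p) (integerRing v).toSubring
      le_rfl (WittVector.map σ t - t)) using 1
    simp only [map_add (WittVector.map σ), map_sum (WittVector.map σ), hfix,
      map_iterate_verschiebung, map_teichmuller, iterate_map_sub, Finset.sum_sub_distrib]
    ring
  have hnonneg := fun i (hi : i < n) ↦ nonneg_val_of_sum_mem_coeffsIn he hs hx hdiff hi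
  refine ⟨b', ?_⟩
  rw [add_sub_cancel_left]
  refine add_mem (sum_mem fun i _ ↦ ?_)
    (iterate_verschiebung_mem_coeffsIn_of_le _ (Nat.le_add_right n s) t)
  rcases lt_or_ge i n with hi | hi
  · exact iterate_verschiebung_mem_coeffsIn (teichmuller_mem_coeffsIn (hnonneg i hi) n) i
  · exact iterate_verschiebung_mem_coeffsIn_of_le _ hi _

end RamifiedStep

section Averaging

lemma exists_coboundary_mem_of_trace {R G : Type*} [CommRing R] [Group G] [Fintype G]
    {φ : G → R →+* R} (hφ : ∀ g h x, φ (g * h) x = φ g (φ h x)) {S : Subring R} {y z : R}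
    (hy : ∀ g, φ g y ∈ S) (hz : z ∈ S) (hzy : z * ∑ g, φ g y = 1) {c : G → R}
    (hc : ∀ g h, c (g * h) = c g + φ g (c h)) (hcS : ∀ g, c g ∈ S) :
    ∃ b ∈ S, ∀ g, φ g b - b = c g := by
  have htrace : ∀ g, φ g (∑ h, φ h y) = ∑ h, φ h y := fun g ↦ by
    simp_rw [map_sum, ← hφ]
    exact Equiv.sum_comp (Equiv.mulLeft g) fun h ↦ φ h y
  have hzfix : ∀ g, φ g z = z := fun g ↦ by
    have hgz : φ g z * ∑ h, φ h y = 1 := by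
      rw [← htrace g, ← _root_.map_mul, hzy, _root_.map_one]
    calc φ g z = φ g z * (z * ∑ h, φ h y) := by rw [hzy, mul_one]
      _ = z * (φ g z * ∑ h, φ h y) := by ring
      _ = z := by rw [hgz, mul_one]
  refine ⟨-(z * ∑ h, c h * φ h y), neg_mem (mul_mem hz (sum_mem fun h _ ↦ mul_mem (hcS h) (hy h))),
    fun g ↦ ?_⟩
  have hmap : φ g (∑ h, c h * φ h y) = ∑ h, c h * φ h y - c g * ∑ h, φ h y := by
    rw [map_sum, ← Equiv.sum_comp (Equiv.mulLeft g) fun h ↦ c h * φ h y,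
      ← Equiv.sum_comp (Equiv.mulLeft g) fun h ↦ φ h y, Finset.mul_sum, ← Finset.sum_sub_distrib]
    refine Finset.sum_congr rfl fun h _ ↦ ?_
    rw [_root_.map_mul, Equiv.coe_mulLeft, hc, hφ]
    ring
  rw [map_neg, _root_.map_mul, hzfix, hmap]
  linear_combination c g * hzy

end Averaging

section AlmostDescent

variable (p : ℕ) [Fact p.Prime] (K : Type*) {L : Type*} [Field K] [Field L] [Algebra K L]

/-- Every Witt vector over `L` which is invariant under `Gal(L/K)` up to vectors with integral
coordinates comes from `K` up to such vectors. This is a form of the pro-vanishing of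
`H¹(Gal(L/K), W_n(O_L))`, since `H¹(Gal(L/K), W_m(L))` vanishes; it has the advantage of being
transitive in towers. -/
def HasAlmostDescent (v : AddValuation L (WithTop ℤ)) : Prop :=
  ∀ n, ∃ m ≥ n, ∀ b : WittVector p L,
    (∀ σ : L ≃ₐ[K] L, WittVector.map (σ : L →+* L) b - b ∈
      coeffsIn p (integerRing v).toSubring m) →
    ∃ b' : WittVector p K, b - WittVector.map (algebraMap K L) b' ∈
      coeffsIn p (integerRing v).toSubring n

variable {p K} {v : AddValuation L (WithTop ℤ)}

lemma exists_eq_map_algebraMap [IsGalois K L] [FiniteDimensional K L] {b : WittVector p L}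
    (hb : ∀ σ : L ≃ₐ[K] L, WittVector.map (σ : L →+* L) b = b) :
    ∃ b' : WittVector p K, b = WittVector.map (algebraMap K L) b' := by
  have hfix : ∀ k, ∃ a : K, algebraMap K L a = b.coeff k := fun k ↦
    (IsGalois.mem_range_algebraMap_iff_fixed _).2 fun σ ↦ congrArg (WittVector.coeff · k) (hb σ)
  choose a ha using hfix
  exact ⟨WittVector.mk p a, WittVector.ext fun k ↦ (ha k).symm⟩

lemma exists_mul_eq_one_of_val_coeff_zero [CharP L p] {n : ℕ} {x : WittVector p L}
    (hx : ∀ m, x ∈ coeffsIn p (integerRing v).toSubring m) (hx0 : v (x.coeff 0) = 0) :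
    ∃ z ∈ coeffsIn p (integerRing v).toSubring n, z * x = 1 := by
  have hint : ∀ k, x.coeff k ∈ integerRing v := fun k ↦
    mem_coeffsIn.1 (hx (k + 1)) k k.lt_succ_self
  obtain ⟨u, hu⟩ : IsUnit (⟨x.coeff 0, hint 0⟩ : integerRing v) := by
    rw [← IsLocalRing.notMem_maximalIdeal, mem_maximalIdeal_integerRing]
    exact hx0.not_gt
  have hchar : CharP (integerRing v) p :=
    (RingHom.charP_iff (integerRing v).subtype Subtype.val_injective p).2 ‹_›
  set U := mkUnit (p := p) (A := WittVector.mk p fun k ↦ (⟨x.coeff k, hint k⟩ : integerRing v))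
    hu.symm
  have hU : WittVector.map (integerRing v).subtype U = x := rfl
  refine ⟨WittVector.map (integerRing v).subtype ↑U⁻¹, mem_coeffsIn.2 fun k _ ↦ Subtype.prop _, ?_⟩
  rw [← hU, ← _root_.map_mul, Units.inv_mul, _root_.map_one]

lemma map_mem_coeffsIn_integerRing (hv : ∀ (σ : L ≃ₐ[K] L) x, v (σ x) = v x) {m : ℕ}
    {b : WittVector p L} (hb : b ∈ coeffsIn p (integerRing v).toSubring m) (σ : L ≃ₐ[K] L) :
    WittVector.map (σ : L →+* L) b ∈ coeffsIn p (integerRing v).toSubring m :=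
  map_mem_coeffsIn (fun x hx ↦ mem_integerRing.2 ((mem_integerRing.1 hx).trans_eq (hv σ x).symm)) hb

lemma hasAlmostDescent_of_val_trace_eq_zero [IsGalois K L] [FiniteDimensional K L] [CharP L p]
    (hv : ∀ (σ : L ≃ₐ[K] L) x, v (σ x) = v x) {y : L} (hy : 0 ≤ v y)
    (htr : v (∑ σ : L ≃ₐ[K] L, σ y) = 0) : HasAlmostDescent p K v := by
  intro n
  refine ⟨n, le_rfl, fun b hb ↦ ?_⟩
  have hmem : ∀ m (σ : L ≃ₐ[K] L), WittVector.map (σ : L →+* L) (teichmuller p y) ∈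
      coeffsIn p (integerRing v).toSubring m := fun m ↦
    map_mem_coeffsIn_integerRing hv (teichmuller_mem_coeffsIn (mem_integerRing.2 hy) m)
  obtain ⟨z, hz, hzy⟩ := exists_mul_eq_one_of_val_coeff_zero (v := v) (n := n)
    (x := ∑ σ : L ≃ₐ[K] L, WittVector.map (σ : L →+* L) (teichmuller p y))
    (fun m ↦ sum_mem fun σ _ ↦ hmem m σ) (by
      rw [← WittVector.constantCoeff_apply, map_sum]
      simpa [WittVector.constantCoeff_apply] using htr)
  obtain ⟨β, hβ, hβb⟩ := exists_coboundary_mem_of_trace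
    (φ := fun σ : L ≃ₐ[K] L ↦ WittVector.map (σ : L →+* L)) (fun σ τ x ↦ rfl) (hmem n) hz hzy
    (c := fun σ ↦ WittVector.map (σ : L →+* L) b - b)
    (fun σ τ ↦ (sub_add_sub_cancel' _ _ _).symm.trans (by rw [map_sub]; rfl)) hb
  obtain ⟨b', hb'⟩ := exists_eq_map_algebraMap (K := K) (b := b - β) fun σ ↦ by
    rw [map_sub]
    linear_combination -hβb σ
  refine ⟨b', ?_⟩
  rwa [← hb', sub_sub_cancel]

end AlmostDescent

section Tower

variable {p : ℕ} [Fact p.Prime] {K E L : Type*} [Field K] [Field E] [Field L] [Algebra K E]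
  [Algebra E L] [Algebra K L] [IsScalarTower K E L] {v : AddValuation L (WithTop ℤ)}

lemma HasAlmostDescent.trans [Normal K E] [Normal K L]
    (hv : ∀ (σ : L ≃ₐ[K] L) x, v (σ x) = v x) (hEL : HasAlmostDescent p E v)
    (hKE : HasAlmostDescent p K (v.comap (algebraMap E L))) : HasAlmostDescent p K v := by
  intro n
  obtain ⟨m₁, hnm₁, h₁⟩ := hKE n
  obtain ⟨m₂, hm₁₂, h₂⟩ := hEL m₁
  refine ⟨m₂, hnm₁.trans hm₁₂, fun b hb ↦ ?_⟩
  have hmap : ∀ {m} {x : WittVector p E},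
      x ∈ coeffsIn p (integerRing (v.comap (algebraMap E L))).toSubring m ↔
        WittVector.map (algebraMap E L) x ∈ coeffsIn p (integerRing v).toSubring m := by
    intro m x
    simp only [mem_coeffsIn, WittVector.map_coeff]
    rfl
  obtain ⟨bE, hbE⟩ := h₂ b fun σ ↦ hb (σ.restrictScalars K)
  obtain ⟨bK, hbK⟩ := h₁ bE fun τ ↦ by
    obtain ⟨σ, rfl⟩ := AlgEquiv.restrictNormalHom_surjective (F := K) (K₁ := E) L τ
    have hcomm : WittVector.map (algebraMap E L)
        (WittVector.map (AlgEquiv.restrictNormalHom E σ : E →+* E) bE) =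
          WittVector.map (σ : L →+* L) (WittVector.map (algebraMap E L) bE) :=
      WittVector.ext fun k ↦ σ.restrictNormal_commutes E (bE.coeff k)
    rw [hmap, map_sub, hcomm]
    convert add_mem (sub_mem hbE (map_mem_coeffsIn_integerRing hv hbE σ))
      (coeffsIn_anti _ hm₁₂ (hb σ)) using 1
    rw [map_sub]
    ring
  refine ⟨bK, ?_⟩
  have hcomp : WittVector.map (algebraMap K L) bK =
      WittVector.map (algebraMap E L) (WittVector.map (algebraMap K E) bK) :=
    WittVector.ext fun k ↦ IsScalarTower.algebraMap_apply K E L (bK.coeff k)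
  rw [hcomp, ← sub_add_sub_cancel, ← map_sub]
  exact add_mem (coeffsIn_anti _ hnm₁ hbE) (hmap.1 hbK)

end Tower

section IndexPrimeTo

variable {p : ℕ} [Fact p.Prime] {K L : Type*} [Field K] [Field L] [Algebra K L]
  {v : AddValuation L (WithTop ℤ)}

lemma exists_map_eq_sum_quotient [IsGalois K L] [FiniteDimensional K L]
    (P : Subgroup (L ≃ₐ[K] L)) (y : WittVector p (IntermediateField.fixedField P)) :
    ∃ b : WittVector p K, ∑ q : (L ≃ₐ[K] L) ⧸ P, WittVector.map (q.out : L →+* L)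
      (WittVector.map (algebraMap (IntermediateField.fixedField P) L) y) =
        WittVector.map (algebraMap K L) b := by
  refine exists_eq_map_algebraMap fun σ ↦ ?_
  have hcoset : ∀ {g h : L ≃ₐ[K] L}, (g : (L ≃ₐ[K] L) ⧸ P) = h → ∀ k,
      g (y.coeff k) = h (y.coeff k) := fun {g h} hgh k ↦ by
    have hfix := (y.coeff k).2 ⟨g⁻¹ * h, QuotientGroup.eq.1 hgh⟩
    exact ((AlgEquiv.symm_apply_eq g).1 hfix).symm
  rw [map_sum]
  refine Fintype.sum_equiv (MulAction.toPerm σ) _ _ fun q ↦ WittVector.ext fun k ↦ ?_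
  refine hcoset (g := σ * q.out) (h := (σ • q).out) ?_ k
  rw [QuotientGroup.out_eq']
  conv_rhs => rw [← QuotientGroup.out_eq' q]
  rfl

lemma HasAlmostDescent.of_coprime_index [CharP L p] [IsGalois K L] [FiniteDimensional K L]
    (hv : ∀ (σ : L ≃ₐ[K] L) x, v (σ x) = v x) {P : Subgroup (L ≃ₐ[K] L)} (hP : P.index.Coprime p)
    (h : HasAlmostDescent p (IntermediateField.fixedField P) v) : HasAlmostDescent p K v := by
  intro n
  obtain ⟨m, hnm, hm⟩ := h n
  refine ⟨m, hnm, fun b hb ↦ ?_⟩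
  obtain ⟨y, hy⟩ := hm b fun σ ↦ hb (σ.restrictScalars K)
  obtain ⟨b', hb'⟩ := exists_map_eq_sum_quotient P y
  have hsum : (P.index : WittVector p L) * b - WittVector.map (algebraMap K L) b' ∈
      coeffsIn p (integerRing v).toSubring n := by
    have hcard : (P.index : WittVector p L) * b = ∑ _q : (L ≃ₐ[K] L) ⧸ P, b := by
      rw [Finset.sum_const, Finset.card_univ, ← Nat.card_eq_fintype_card, nsmul_eq_mul]
      rfl
    rw [hcard, ← hb', ← Finset.sum_sub_distrib]
    refine sum_mem fun q _ ↦ ?_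
    convert sub_mem (map_mem_coeffsIn_integerRing hv hy q.out) (coeffsIn_anti _ hnm (hb q.out))
      using 1
    rw [map_sub]
    ring
  obtain ⟨r, s, hrs⟩ := Nat.isCoprime_iff_coprime.2 (hP.pow_right n)
  have hrs' : (r : WittVector p L) * P.index + s * p ^ n = 1 := by
    simpa using congrArg (Int.cast : ℤ → WittVector p L) hrs
  refine ⟨r * b', ?_⟩
  rw [_root_.map_mul, map_intCast]
  convert add_mem (mul_mem (intCast_mem _ r) hsum) (mul_mem (intCast_mem _ s)
    (natCast_pow_mul_mem_coeffsIn (integerRing v).toSubring n b)) using 1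
  linear_combination -b * hrs'

end IndexPrimeTo

section Uniformizer

variable {L : Type*} [Field L] {v : AddValuation L (WithTop ℤ)}

lemma exists_uniformizer {x₀ : L} (hx₀ : v x₀ < 0) :
    ∃ (π : L) (e : ℤ), 0 < e ∧ v π = e ∧ ∀ x ≠ 0, ∃ j : ℤ, v x = (e * j : ℤ) := by
  let H : AddSubgroup ℤ :=
    { carrier := {a | ∃ x, v x = a}
      zero_mem' := ⟨1, v.map_one⟩
      add_mem' := fun ⟨x, hx⟩ ⟨y, hy⟩ ↦ ⟨x * y, by rw [v.map_mul, hx, hy, WithTop.coe_add]⟩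
      neg_mem' := fun ⟨x, hx⟩ ↦ ⟨x⁻¹, by rw [v.map_inv, hx]; rfl⟩ }
  obtain ⟨e, he⟩ := Int.subgroup_cyclic H
  rw [← AddSubgroup.zmultiples_eq_closure, ← Int.zmultiples_natAbs] at he
  have hval : ∀ x ≠ 0, ∃ j : ℤ, v x = (e.natAbs * j : ℤ) := fun x hx ↦ by
    obtain ⟨a, ha⟩ := exists_val_eq_coe (v := v) hx
    have haH : a ∈ H := ⟨x, ha⟩
    rw [he, Int.mem_zmultiples_iff] at haH
    obtain ⟨j, rfl⟩ := haH
    exact ⟨j, ha⟩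
  obtain ⟨π, hπ⟩ : (e.natAbs : ℤ) ∈ H := he ▸ AddSubgroup.mem_zmultiples _
  refine ⟨π, e.natAbs, ?_, hπ, hval⟩
  obtain ⟨j, hj⟩ := hval x₀ fun h0 ↦ by simp [h0] at hx₀
  refine (Int.natCast_nonneg _).lt_of_ne fun h0 ↦ hx₀.ne ?_
  rw [hj, ← h0, zero_mul, WithTop.coe_zero]

lemma val_zpow {x : L} {a : ℤ} (hx : v x = a) (j : ℤ) : v (x ^ j) = (a * j : ℤ) := by
  obtain ⟨k, rfl | rfl⟩ := j.eq_nat_or_neg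
  · rw [zpow_natCast, v.map_pow, hx, ← WithTop.coe_nsmul, nsmul_eq_mul, mul_comm]
  · rw [zpow_neg, zpow_natCast, v.map_inv, v.map_pow, hx, ← WithTop.coe_nsmul, nsmul_eq_mul,
      mul_neg, mul_comm]
    rfl

end Uniformizer

section PrincipalUnits

variable {L : Type*} [Field L] {v : AddValuation L (WithTop ℤ)}

lemma val_eq_zero_of_val_sub_one_pos {u : L} (hu : 0 < v (u - 1)) : v u = 0 := by
  rw [← v.map_one] at hu
  rw [v.map_eq_of_lt_sub hu, v.map_one]

lemma val_natCast_eq_zero {p : ℕ} [CharP L p] {n : ℕ} (hn : n.Coprime p) : v (n : L) = 0 := by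
  obtain ⟨a, b, hab⟩ := Nat.isCoprime_iff_coprime.2 hn
  have hmul : (a : L) * n = 1 := by
    simpa using congrArg (Int.cast : ℤ → L) hab
  have hsum : v (a : L) + v (n : L) = 0 := by rw [← v.map_mul, hmul, v.map_one]
  have ha : 0 ≤ v (a : L) := mem_integerRing.1 (intCast_mem _ a)
  have hn : 0 ≤ v (n : L) := mem_integerRing.1 (natCast_mem _ n)
  exact le_antisymm ((le_add_of_nonneg_left ha).trans_eq hsum) hn

lemma le_val_pow_sub_one {u : L} (hu : 0 ≤ v u) (j : ℕ) : v (u - 1) ≤ v (u ^ j - 1) := by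
  rw [← mul_geom_sum, v.map_mul]
  exact le_add_of_nonneg_right
    (mem_integerRing.1 (sum_mem fun i _ ↦ pow_mem (mem_integerRing.2 hu) i))

lemma val_pow_sub_one {p : ℕ} [CharP L p] {u : L} (hu : 0 < v (u - 1)) {j : ℕ}
    (hj : j.Coprime p) : v (u ^ j - 1) = v (u - 1) := by
  have hsum : 0 < v (∑ i ∈ Finset.range j, u ^ i - j) := by
    have : (j : L) = ∑ _i ∈ Finset.range j, 1 := by simp
    rw [this, ← Finset.sum_sub_distrib]
    exact v.map_lt_sum' (WithTop.coe_lt_top 0) fun i _ ↦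
      hu.trans_le (le_val_pow_sub_one (val_eq_zero_of_val_sub_one_pos hu).ge i)
  rw [← val_natCast_eq_zero (v := v) hj] at hsum
  rw [← mul_geom_sum, v.map_mul, v.map_eq_of_lt_sub hsum, val_natCast_eq_zero hj, add_zero]

lemma val_inv_sub_one {u : L} (hu : v u = 0) : v (u⁻¹ - 1) = v (u - 1) := by
  have hu0 : u ≠ 0 := by
    rintro rfl
    exact WithTop.top_ne_zero (v.map_zero.symm.trans hu)
  rw [show u⁻¹ - 1 = -(u⁻¹ * (u - 1)) by field_simp; ring, v.map_neg, v.map_mul, v.map_inv, hu]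
  simp

lemma val_zpow_eq_zero {u : L} (hu : v u = 0) (j : ℤ) : v (u ^ j) = 0 := by
  rcases j with j | j <;> simp [v.map_pow, v.map_inv, hu]

lemma le_val_zpow_sub_one {u : L} (hu : v u = 0) (j : ℤ) : v (u - 1) ≤ v (u ^ j - 1) := by
  obtain ⟨k, rfl | rfl⟩ := j.eq_nat_or_neg
  · exact (le_val_pow_sub_one hu.ge k).trans_eq (by rw [zpow_natCast])
  · rw [zpow_neg, val_inv_sub_one (val_zpow_eq_zero hu _), zpow_natCast]
    exact le_val_pow_sub_one hu.ge k

lemma val_zpow_sub_one {p : ℕ} [Fact p.Prime] [CharP L p] {u : L} (hu : 0 < v (u - 1)) {j : ℤ}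
    (hj : ¬(p : ℤ) ∣ j) : v (u ^ j - 1) = v (u - 1) := by
  have hcop : ∀ {k : ℕ}, ¬(p : ℤ) ∣ k → k.Coprime p := fun h ↦
    ((Nat.Prime.coprime_iff_not_dvd Fact.out).2 (mod_cast h)).symm
  obtain ⟨k, rfl | rfl⟩ := j.eq_nat_or_neg
  · rw [zpow_natCast, val_pow_sub_one hu (hcop hj)]
  · rw [zpow_neg, val_inv_sub_one (val_zpow_eq_zero (val_eq_zero_of_val_sub_one_pos hu) _),
      zpow_natCast, val_pow_sub_one hu (hcop fun h ↦ hj ((dvd_neg).2 h))]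

end PrincipalUnits

section Jump

variable {K L : Type*} [Field K] [Field L] [Algebra K L] {v : AddValuation L (WithTop ℤ)}
  {π : L} {e : ℤ}

lemma exists_lt_val_sub_mul (hres : ∀ y, 0 ≤ v y → ∃ g : K, 0 < v (y - algebraMap K L g)) {y w : L}
    (hy : y ≠ 0) (hw : v w = v y) : ∃ g : K, v y < v (y - algebraMap K L g * w) := by
  obtain ⟨a, ha⟩ := exists_val_eq_coe (v := v) hy
  have hw0 : w ≠ 0 := v.ne_top_iff.1 (hw ▸ v.ne_top_iff.2 hy)
  obtain ⟨g, hg⟩ := hres (y / w) (nonneg_val_div hw0 hw.le)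
  refine ⟨g, ?_⟩
  rw [show y - algebraMap K L g * w = (y / w - algebraMap K L g) * w by field_simp, v.map_mul, hw,
    ha]
  simpa using WithTop.add_lt_add_right WithTop.coe_ne_top hg

lemma exists_sub_eq_add_of_val_eq
    (hres : ∀ y, 0 ≤ v y → ∃ g : K, 0 < v (y - algebraMap K L g)) (hπ : v π = e) (σ : L ≃ₐ[K] L)
    {y : L} {j : ℤ} (hy : v y = (e * j : ℤ)) :
    ∃ z y', v z = v y + v ((σ π / π) ^ j - 1) ∧ v y < v y' ∧ σ y - y = z + (σ y' - y') := by
  have hy0 : y ≠ 0 := v.ne_top_iff.1 (hy ▸ WithTop.coe_ne_top)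
  have hπ0 : π ≠ 0 := v.ne_top_iff.1 (hπ ▸ WithTop.coe_ne_top)
  have hπj : v (π ^ j) = v y := (val_zpow hπ j).trans hy.symm
  obtain ⟨g, hg⟩ := exists_lt_val_sub_mul hres hy0 hπj
  refine ⟨algebraMap K L g * π ^ j * ((σ π / π) ^ j - 1), y - algebraMap K L g * π ^ j, ?_, hg, ?_⟩
  · rw [v.map_mul, v.map_eq_of_lt_sub (v.map_sub_swap y _ ▸ hg)]
  · rw [div_zpow, map_sub, _root_.map_mul, map_zpow₀, AlgEquiv.commutes]
    field_simp
    ring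

lemma add_le_val_of_val_lt (he : 0 < e) (hval : ∀ x ≠ 0, ∃ j : ℤ, v x = (e * j : ℤ)) {y y' : L}
    (h : v y < v y') : v y + e ≤ v y' := by
  obtain ⟨j, hj⟩ := hval y (v.ne_top_iff.1 h.ne_top)
  by_cases hy' : y' = 0
  · rw [hy', v.map_zero]
    exact le_top
  obtain ⟨j', hj'⟩ := hval y' hy'
  rw [hj, hj', WithTop.coe_lt_coe] at h
  rw [hj, hj', ← WithTop.coe_add, WithTop.coe_le_coe]
  have : j + 1 ≤ j' := lt_of_mul_lt_mul_left h he.le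
  nlinarith

/- Subtracting a leading term `g * π ^ j` with `g ∈ K` increases the valuation of `y` by at least
`e`, and `σ` moves the leading term by at least the jump, so the bound improves by `e`. -/
lemma add_min_le_val_sub (hres : ∀ y, 0 ≤ v y → ∃ g : K, 0 < v (y - algebraMap K L g))
    (he : 0 < e) (hπ : v π = e) (hval : ∀ x ≠ 0, ∃ j : ℤ, v x = (e * j : ℤ)) {σ : L ≃ₐ[K] L}
    (hσ : ∀ x, v (σ x) = v x) (n : ℕ) (y : L) :
    v y + min (v (σ π / π - 1)) (n * e : ℤ) ≤ v (σ y - y) := by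
  have hu : v (σ π / π) = 0 := val_eq_of_val_eq_add hπ (by rw [hσ, add_zero])
  induction n generalizing y with
  | zero =>
    calc v y + min (v (σ π / π - 1)) ((0 : ℕ) * e : ℤ) ≤ v y + 0 := by
          gcongr
          exact (min_le_right _ _).trans_eq (by simp)
      _ ≤ v (σ y - y) := by
          rw [add_zero]
          exact v.map_le_sub (hσ y).ge le_rfl
  | succ n ih =>
    by_cases hy : y = 0
    · simp [hy]
    obtain ⟨j, hj⟩ := hval y hy
    obtain ⟨z, y', hz, hy', hsub⟩ := exists_sub_eq_add_of_val_eq hres hπ σ hj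
    rw [hsub]
    refine v.map_le_add ?_ ((?_ : _ ≤ _).trans (ih y'))
    · rw [hz]
      gcongr
      exact (min_le_left _ _).trans (le_val_zpow_sub_one hu j)
    · refine le_trans ?_ (add_le_add_left (add_le_val_of_val_lt he hval hy') _)
      rw [add_assoc]
      gcongr
      rw [← min_add_add_left, ← WithTop.coe_add]
      refine le_min ((min_le_left _ _).trans (le_add_of_nonneg_left (mod_cast he.le)))
        ((min_le_right _ _).trans_eq ?_)
      rw [Nat.cast_succ, add_one_mul, add_comm]

lemma val_add_le_val_sub (hres : ∀ y, 0 ≤ v y → ∃ g : K, 0 < v (y - algebraMap K L g))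
    (he : 0 < e) (hπ : v π = e) (hval : ∀ x ≠ 0, ∃ j : ℤ, v x = (e * j : ℤ)) {σ : L ≃ₐ[K] L}
    (hσ : ∀ x, v (σ x) = v x) {s : ℤ} (hs : v (σ π / π - 1) = s) (y : L) :
    v y + s ≤ v (σ y - y) := by
  have hn : s ≤ s.toNat * e := by nlinarith [s.self_le_toNat]
  have := add_min_le_val_sub hres he hπ hval hσ s.toNat y
  rwa [hs, min_eq_left (mod_cast hn)] at this

lemma val_sub_eq_of_not_dvd {p : ℕ} [Fact p.Prime] [CharP L p]
    (hres : ∀ y, 0 ≤ v y → ∃ g : K, 0 < v (y - algebraMap K L g))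
    (he : 0 < e) (hπ : v π = e) (hval : ∀ x ≠ 0, ∃ j : ℤ, v x = (e * j : ℤ)) {σ : L ≃ₐ[K] L}
    (hσ : ∀ x, v (σ x) = v x) {s : ℤ} (hs₀ : 0 < s) (hs : v (σ π / π - 1) = s) {y : L} {j : ℤ}
    (hj : ¬(p : ℤ) ∣ j) (hy : v y = (e * j : ℤ)) : v (σ y - y) = v y + s := by
  obtain ⟨z, r, hz, hr, hsub⟩ := exists_sub_eq_add_of_val_eq hres hπ σ hy
  rw [val_zpow_sub_one (hs ▸ WithTop.coe_lt_coe.2 hs₀) hj, hs] at hz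
  rw [hsub, v.map_add_eq_of_lt_left, hz]
  rw [hz]
  exact (WithTop.add_lt_add_right WithTop.coe_ne_top hr).trans_le
    (val_add_le_val_sub hres he hπ hval hσ hs r)

/- An `x - f` of maximal valuation attains the jump: if `v (x - f)` were a value `e * (p * q)` of
`K`, it could be increased by subtracting an element of `K`. -/
lemma exists_attainsJump {p : ℕ} [Fact p.Prime] [CharP L p]
    (hres : ∀ y, 0 ≤ v y → ∃ g : K, 0 < v (y - algebraMap K L g))
    (he : 0 < e) (hπ : v π = e) (hval : ∀ x ≠ 0, ∃ j : ℤ, v x = (e * j : ℤ)) {σ : L ≃ₐ[K] L}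
    (hσ : ∀ x, v (σ x) = v x) {s : ℤ} (hs₀ : 0 < s) (hs : v (σ π / π - 1) = s)
    {ϖ : K} (hϖ : v (algebraMap K L ϖ) = (e * p : ℤ))
    (hfix : ∀ x, σ x = x → ∃ f, algebraMap K L f = x) (x : L) :
    ∃ f, AttainsJump p v (σ : L →+* L) e s (x - algebraMap K L f) := by
  by_cases hx : σ x = x
  · obtain ⟨f, rfl⟩ := hfix x hx
    exact ⟨f, Or.inl (sub_self _)⟩
  have hsub : ∀ f : K, σ (x - algebraMap K L f) - (x - algebraMap K L f) = σ x - x := fun f ↦ by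
    rw [map_sub, AlgEquiv.commutes, sub_sub_sub_cancel_right]
  have hne : ∀ f : K, x - algebraMap K L f ≠ 0 := fun f h0 ↦
    hx (sub_eq_zero.1 (by rw [← hsub f, h0, map_zero, sub_zero]))
  choose j hj using fun f ↦ hval _ (hne f)
  obtain ⟨d, hd⟩ := exists_val_eq_coe (v := v) (sub_ne_zero.2 hx)
  have hbdd : ∀ f, j f ≤ max 0 (d - s) := fun f ↦ by
    have := val_add_le_val_sub hres he hπ hval hσ hs (x - algebraMap K L f)
    rw [hsub, hd, hj, ← WithTop.coe_add, WithTop.coe_le_coe] at this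
    by_contra! h
    nlinarith [le_max_left 0 (d - s), le_max_right 0 (d - s)]
  obtain ⟨_, ⟨f, rfl⟩, hmax⟩ :=
    Int.exists_greatest_of_bdd (P := (· ∈ Set.range j))
      ⟨_, fun _ ⟨f, hf⟩ ↦ hf ▸ hbdd f⟩ ⟨_, Set.mem_range_self 0⟩
  have hndvd : ¬(p : ℤ) ∣ j f := by
    rintro ⟨q, hq⟩
    have hw : v (algebraMap K L ϖ ^ q) = v (x - algebraMap K L f) := by
      rw [val_zpow hϖ, hj, hq, mul_assoc]
    obtain ⟨g, hg⟩ := exists_lt_val_sub_mul hres (hne f) hw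
    rw [show x - algebraMap K L f - algebraMap K L g * algebraMap K L ϖ ^ q =
      x - algebraMap K L (f + g * ϖ ^ q) by
        rw [map_add, _root_.map_mul, map_zpow₀]; ring, hj, hj, WithTop.coe_lt_coe] at hg
    exact (hmax _ (Set.mem_range_self _)).not_gt (lt_of_mul_lt_mul_left hg he.le)
  exact ⟨f, Or.inr ⟨⟨j f, hndvd, hj f⟩,
    val_sub_eq_of_not_dvd hres he hπ hval hσ hs₀ hs hndvd (hj f)⟩⟩

end Jump

section Residues

lemma mem_range_algebraMap_of_pow_mem {k l : Type*} [Field k] [Field l] [Algebra k l] {p : ℕ}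
    [Fact p.Prime] [CharP k p] {x : l} {f : k[X]} (hf : aeval x f = 0)
    (hf' : aeval x (derivative f) ≠ 0) (hx : x ^ p ∈ (algebraMap k l).range) :
    x ∈ (algebraMap k l).range := by
  have hmin : derivative (minpoly k x) ≠ 0 := fun h0 ↦ by
    obtain ⟨g, rfl⟩ := minpoly.dvd k x hf
    simp [derivative_mul, h0] at hf'
  have hint : IsIntegral k x :=
    isAlgebraic_iff_isIntegral.1 ⟨f, fun h0 ↦ hf' (by simp [h0]), hf⟩
  have hsep : IsSeparable k x :=
    (separable_iff_derivative_ne_zero (minpoly.irreducible hint)).2 hmin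
  have hperf : x ∈ perfectClosure k l :=
    (mem_perfectClosure_iff_pow_mem p).2 ⟨1, by rwa [pow_one]⟩
  have hbot : x ∈ (⊥ : IntermediateField k l) :=
    separableClosure_inf_perfectClosure k l ▸ ⟨mem_separableClosure_iff.2 hsep, hperf⟩
  exact IntermediateField.mem_bot.1 hbot

variable {K E L : Type*} [Field K] [Field E] [Field L] [Algebra K E] [Algebra K L] [Algebra E L]
  [IsScalarTower K E L] {v : AddValuation L (WithTop ℤ)}

variable (K v) in
/-- The residue field of `v` is separable algebraic over that of its restriction to `K`: modulo
the maximal ideal, every integral element of `L` is a simple root of a polynomial with integral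
coefficients in `K`. Working with polynomials over `K` rather than with the two residue fields
makes the property visibly stable under passing to subextensions. -/
def HasSeparableResidues : Prop :=
  ∀ x, 0 ≤ v x → ∃ f : K[X], (∀ i, 0 ≤ v (algebraMap K L (f.coeff i))) ∧
    0 < v (aeval x f) ∧ v (aeval x (derivative f)) = 0

lemma HasSeparableResidues.tower_top (h : HasSeparableResidues K v) :
    HasSeparableResidues E v := fun x hx ↦ by
  obtain ⟨f, hf, hf₀, hf₁⟩ := h x hx
  refine ⟨f.map (algebraMap K E), fun i ↦ ?_, ?_, ?_⟩
  · rw [coeff_map, ← IsScalarTower.algebraMap_apply]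
    exact hf i
  · rwa [aeval_map_algebraMap]
  · rwa [derivative_map, aeval_map_algebraMap]

lemma HasSeparableResidues.tower_bot (h : HasSeparableResidues K v) :
    HasSeparableResidues K (v.comap (algebraMap E L)) := fun x hx ↦ by
  obtain ⟨f, hf, hf₀, hf₁⟩ := h (algebraMap E L x) hx
  refine ⟨f, fun i ↦ ?_, ?_, ?_⟩
  · change 0 ≤ v (algebraMap E L _)
    rw [← IsScalarTower.algebraMap_apply]
    exact hf i
  · change 0 < v (algebraMap E L _)
    rwa [← aeval_algebraMap_apply]
  · change v (algebraMap E L _) = 0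
    rwa [← aeval_algebraMap_apply]

lemma residue_eq_zero_iff_val_pos {y : integerRing v} :
    IsLocalRing.residue (integerRing v) y = 0 ↔ 0 < v y := by
  rw [IsLocalRing.residue_eq_zero_iff, mem_maximalIdeal_integerRing]

/-- The inclusion of the valuation ring of the restriction of `v` to `K`, which induces the
extension of residue fields. -/
instance integerRing.algebra : Algebra (integerRing (v.comap (algebraMap K L))) (integerRing v) :=
  ((algebraMap K L).restrict _ _ fun _ hb ↦ mem_integerRing.2 (mem_integerRing.1 hb)).toAlgebra

instance integerRing.isLocalHom_algebraMap :
    IsLocalHom (algebraMap (integerRing (v.comap (algebraMap K L))) (integerRing v)) :=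
  ⟨fun b hb ↦ by
    by_contra hb'
    have hpos : 0 < v (algebraMap K L b) :=
      mem_maximalIdeal_integerRing.1 ((IsLocalRing.mem_maximalIdeal b).2 hb')
    exact (IsLocalRing.mem_maximalIdeal _).1 (mem_maximalIdeal_integerRing.2 hpos) hb⟩

lemma algebraMap_residue_eq_residue_iff {b : integerRing (v.comap (algebraMap K L))}
    {y : integerRing v} :
    algebraMap _ _ (IsLocalRing.residue _ b) = IsLocalRing.residue (integerRing v) y ↔
      0 < v (y - algebraMap K L b) := by
  rw [IsLocalRing.ResidueField.algebraMap_residue, eq_comm, ← sub_eq_zero, ← map_sub,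
    residue_eq_zero_iff_val_pos]
  rfl

lemma coe_aeval_integerRing (x : integerRing v)
    (F : (integerRing (v.comap (algebraMap K L)))[X]) :
    ((aeval x F : integerRing v) : L) = aeval (x : L) (F.map (algebraMap _ K)) := by
  rw [aeval_def, aeval_def, eval₂_map]
  exact hom_eval₂ F _ (integerRing v).subtype x

lemma aeval_residue_map_residue (x : integerRing v)
    (F : (integerRing (v.comap (algebraMap K L)))[X]) :
    aeval (IsLocalRing.residue _ x) (F.map (IsLocalRing.residue _)) =
      IsLocalRing.residue (integerRing v) (aeval x F) := by
  rw [← IsLocalRing.ResidueField.algebraMap_eq (integerRing (v.comap (algebraMap K L))),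
    aeval_map_algebraMap]
  exact aeval_algebraMap_apply _ _ _

lemma HasSeparableResidues.exists_val_sub_pos_of_val_pow_sub_pos {p : ℕ} [Fact p.Prime] [CharP K p]
    (h : HasSeparableResidues K v) {x : L} (hx : 0 ≤ v x) {a : K}
    (hxa : 0 < v (x ^ p - algebraMap K L a)) : ∃ g : K, 0 < v (x - algebraMap K L g) := by
  lift x to integerRing v using hx
  have ha : 0 ≤ v (algebraMap K L a) := by
    rw [← sub_sub_cancel (x ^ p : L) (algebraMap K L a)]
    exact v.map_le_sub (mem_integerRing.1 (pow_mem x.2 p)) hxa.le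
  obtain ⟨a, rfl⟩ : ∃ a' : integerRing (v.comap (algebraMap K L)), (a' : K) = a := ⟨⟨a, ha⟩, rfl⟩
  have : CharP (IsLocalRing.ResidueField (integerRing (v.comap (algebraMap K L)))) p := by
    rw [CharP.charP_iff_prime_eq_zero Fact.out, ← map_natCast (IsLocalRing.residue _),
      show (p : integerRing (v.comap (algebraMap K L))) = 0 from Subtype.ext (by simp), map_zero]
  obtain ⟨f, hf, hf₀, hf₁⟩ := h x x.2
  obtain ⟨F, rfl⟩ := (mem_lifts f).1 ((lifts_iff_coeff_lifts f).2 fun i ↦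
    ⟨⟨f.coeff i, hf i⟩, rfl⟩ : f ∈ lifts (algebraMap (integerRing (v.comap (algebraMap K L))) K))
  obtain ⟨g, hg⟩ := mem_range_algebraMap_of_pow_mem (p := p) (f := F.map (IsLocalRing.residue _))
    (x := IsLocalRing.residue _ x)
    (by rwa [aeval_residue_map_residue, residue_eq_zero_iff_val_pos, coe_aeval_integerRing])
    (by
      rw [derivative_map, aeval_residue_map_residue, Ne, residue_eq_zero_iff_val_pos,
        coe_aeval_integerRing, ← derivative_map]
      exact hf₁.not_gt)
    ⟨IsLocalRing.residue _ a, by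
      rw [← map_pow]
      exact algebraMap_residue_eq_residue_iff.2 hxa⟩
  obtain ⟨g, rfl⟩ := IsLocalRing.residue_surjective g
  exact ⟨g, algebraMap_residue_eq_residue_iff.1 hg⟩

end Residues

section CyclicOfPrimeDegree

variable {K L : Type*} [Field K] [Field L] [Algebra K L] {v : AddValuation L (WithTop ℤ)}

/-- The endomorphism of the valuation ring induced by an isometric field endomorphism. -/
def integerRing.map {f : L →+* L} (hf : ∀ x, v (f x) = v x) : integerRing v →+* integerRing v :=
  f.restrict _ _ fun x hx ↦ mem_integerRing.2 ((mem_integerRing.1 hx).trans_eq (hf x).symm)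

/- Were all traces of integral elements to have positive valuation, the residue maps `y ↦ σ y` would
be linearly dependent characters, so two of them would agree. -/
lemma exists_val_trace_eq_zero [FiniteDimensional K L] (hv : ∀ (σ : L ≃ₐ[K] L) x, v (σ x) = v x)
    (hdist : ∀ σ τ : L ≃ₐ[K] L, (∀ y, 0 ≤ v y → 0 < v (σ y - τ y)) → σ = τ) :
    ∃ y, 0 ≤ v y ∧ v (∑ σ : L ≃ₐ[K] L, σ y) = 0 := by
  let χ (σ : L ≃ₐ[K] L) : integerRing v →* IsLocalRing.ResidueField (integerRing v) :=
    (IsLocalRing.residue (integerRing v)).comp (integerRing.map (f := σ) (hv σ))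
  have hχ : Function.Injective χ := fun σ τ hστ ↦ hdist σ τ fun y hy ↦ by
    have h := DFunLike.congr_fun hστ ⟨y, hy⟩
    rw [← sub_eq_zero] at h
    exact residue_eq_zero_iff_val_pos.1 ((map_sub _ _ _).trans h)
  have hli := (linearIndependent_monoidHom (integerRing v) _).comp χ hχ
  by_contra! htr
  refine one_ne_zero (α := IsLocalRing.ResidueField (integerRing v))
    (Fintype.linearIndependent_iff.1 hli (fun _ ↦ 1) (funext fun y ↦ ?_) 1)
  have hsum : ((∑ σ : L ≃ₐ[K] L, integerRing.map (f := σ) (hv σ) y : integerRing v) : L) =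
      ∑ σ : L ≃ₐ[K] L, σ y := AddSubmonoidClass.coe_finsetSum _ _
  have hpos : 0 < v (∑ σ : L ≃ₐ[K] L, σ y) :=
    (hsum ▸ mem_integerRing.1 (SetLike.coe_mem _)).lt_of_ne' (htr y (mem_integerRing.1 y.2))
  rw [← hsum, ← residue_eq_zero_iff_val_pos, map_sum] at hpos
  simpa [χ] using hpos

/- The conjugates of an integral `y` agree modulo the maximal ideal. -/
lemma val_pow_card_sub_norm_pos [FiniteDimensional K L] [IsGalois K L]
    (hv : ∀ (σ : L ≃ₐ[K] L) x, v (σ x) = v x)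
    (hin : ∀ (σ : L ≃ₐ[K] L) y, 0 ≤ v y → 0 < v (σ y - y)) {y : L} (hy : 0 ≤ v y) :
    0 < v (y ^ Nat.card (L ≃ₐ[K] L) - algebraMap K L (Algebra.norm K y)) := by
  lift y to integerRing v using hy
  have hres : ∀ σ : L ≃ₐ[K] L, IsLocalRing.residue _ (integerRing.map (f := σ) (hv σ) y) =
      IsLocalRing.residue _ y := fun σ ↦ by
    rw [← sub_eq_zero, ← map_sub, residue_eq_zero_iff_val_pos]
    exact hin σ y (mem_integerRing.1 y.2)
  have hprod : ((∏ σ : L ≃ₐ[K] L, integerRing.map (f := σ) (hv σ) y : integerRing v) : L) =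
      algebraMap K L (Algebra.norm K (y : L)) := by
    rw [Algebra.norm_eq_prod_automorphisms, SubmonoidClass.coe_finsetProd]
    rfl
  rw [← hprod]
  refine (residue_eq_zero_iff_val_pos
    (y := y ^ _ - ∏ σ : L ≃ₐ[K] L, integerRing.map (f := σ) (hv σ) y)).1 ?_
  rw [map_sub, map_pow, map_prod, Finset.prod_congr rfl fun σ _ ↦ hres σ, Finset.prod_const,
    Finset.card_univ, Nat.card_eq_fintype_card, sub_self]

lemma val_div_sub_one_pos {p : ℕ} [Fact p.Prime] [CharP L p] [FiniteDimensional K L] [IsGalois K L]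
    (hcard : Nat.card (L ≃ₐ[K] L) = p) (hv : ∀ (σ : L ≃ₐ[K] L) x, v (σ x) = v x)
    (hin : ∀ (σ : L ≃ₐ[K] L) y, 0 ≤ v y → 0 < v (σ y - y)) (σ : L ≃ₐ[K] L) {x : L} (hx : x ≠ 0) :
    0 < v (σ x / x - 1) := by
  obtain ⟨a, ha⟩ := exists_val_eq_coe (v := v) hx
  have hu : v (σ x / x) = 0 := val_eq_of_val_eq_add ha (by rw [hv, add_zero])
  have hnorm : Algebra.norm K (σ x / x) = 1 := by
    refine mul_right_cancel₀ (Algebra.norm_ne_zero_iff.2 hx) ?_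
    rw [← _root_.map_mul, div_mul_cancel₀ _ hx, Algebra.norm_eq_of_algEquiv, one_mul]
  have hpow := val_pow_card_sub_norm_pos hv hin hu.ge
  rw [hnorm, _root_.map_one, hcard, ← one_pow p, ← sub_pow_char, v.map_pow] at hpow
  by_contra! hle
  exact hpow.not_ge (nsmul_nonpos hle p)

/- The inertia group is nontrivial, hence everything. -/
lemma val_sub_pos_of_prime_card {p : ℕ} [Fact p.Prime] (hcard : Nat.card (L ≃ₐ[K] L) = p)
    (hv : ∀ (σ : L ≃ₐ[K] L) x, v (σ x) = v x) {ρ : L ≃ₐ[K] L} (hρ : ρ ≠ 1)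
    (hρv : ∀ y, 0 ≤ v y → 0 < v (ρ y - y)) (σ : L ≃ₐ[K] L) {y : L} (hy : 0 ≤ v y) :
    0 < v (σ y - y) := by
  obtain ⟨k, rfl⟩ := mem_powers_of_prime_card hcard hρ (g' := σ)
  induction k with
  | zero => simp
  | succ k ih =>
    rw [show (ρ ^ (k + 1)) y - y = (ρ ((ρ ^ k) y) - (ρ ^ k) y) + ((ρ ^ k) y - y) by
      rw [pow_succ']; simp]
    exact v.map_lt_add (hρv _ (hy.trans_eq (hv _ y).symm)) ih

lemma mem_range_algebraMap_of_prime_card {p : ℕ} [Fact p.Prime] [FiniteDimensional K L]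
    [IsGalois K L] (hcard : Nat.card (L ≃ₐ[K] L) = p) {σ : L ≃ₐ[K] L} (hσ : σ ≠ 1) {x : L}
    (hx : σ x = x) : x ∈ Set.range (algebraMap K L) := by
  refine (IsGalois.mem_range_algebraMap_iff_fixed x).2 fun τ ↦ ?_
  obtain ⟨k, rfl⟩ := mem_powers_of_prime_card hcard hσ (g' := τ)
  induction k with
  | zero => rfl
  | succ k ih => simpa only [pow_succ, AlgEquiv.mul_apply, hx] using ih

lemma val_norm [FiniteDimensional K L] [IsGalois K L] (hv : ∀ (σ : L ≃ₐ[K] L) x, v (σ x) = v x)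
    (x : L) : v (algebraMap K L (Algebra.norm K x)) = Nat.card (L ≃ₐ[K] L) • v x := by
  have hprod : ∀ s : Finset (L ≃ₐ[K] L), v (∏ σ ∈ s, σ x) = s.card • v x := fun s ↦ by
    induction s using Finset.induction_on with
    | empty => simp
    | insert σ s hσ ih =>
      rw [Finset.prod_insert hσ, Finset.card_insert_of_notMem hσ, v.map_mul, hv, ih, succ_nsmul']
  rw [Algebra.norm_eq_prod_automorphisms, hprod, Finset.card_univ, Nat.card_eq_fintype_card]

lemma map_div_self_sub_one_ne_zero (hres : ∀ y, 0 ≤ v y → ∃ g : K, 0 < v (y - algebraMap K L g))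
    {π : L} {e : ℤ} (he : 0 < e) (hπ : v π = e) (hval : ∀ x ≠ 0, ∃ j : ℤ, v x = (e * j : ℤ))
    {σ : L ≃ₐ[K] L} (hσv : ∀ x, v (σ x) = v x) (hσ : σ ≠ 1) : σ π / π - 1 ≠ 0 := by
  refine fun h0 ↦ hσ (AlgEquiv.ext fun y ↦ sub_eq_zero.1 ?_)
  by_contra hy
  obtain ⟨d, hd⟩ := exists_val_eq_coe (v := v) hy
  obtain ⟨a, ha⟩ := exists_val_eq_coe (v := v) fun hy0 : y = 0 ↦ hy (by simp [hy0])
  have hbound := add_min_le_val_sub hres he hπ hval hσv ((d - a).toNat + 1) y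
  rw [h0, v.map_zero, min_eq_right le_top, ha, ← WithTop.coe_add] at hbound
  have := WithTop.coe_le_coe.1 (hbound.trans_eq hd)
  push_cast at this
  nlinarith [(d - a).self_le_toNat]

lemma hasAlmostDescent_of_forall_nonneg {p : ℕ} [Fact p.Prime] (hv : ∀ x, 0 ≤ v x) :
    HasAlmostDescent p K v :=
  fun n ↦ ⟨n, le_rfl, fun _ _ ↦ ⟨0, mem_coeffsIn.2 fun _ _ ↦ mem_integerRing.2 (hv _)⟩⟩

lemma hasAlmostDescent_of_forall_val_sub_pos {p : ℕ} [Fact p.Prime] [CharP K p]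
    [FiniteDimensional K L] [IsGalois K L] (hcard : Nat.card (L ≃ₐ[K] L) = p)
    (hv : ∀ (σ : L ≃ₐ[K] L) x, v (σ x) = v x) (hsep : HasSeparableResidues K v)
    (hin : ∀ (σ : L ≃ₐ[K] L) y, 0 ≤ v y → 0 < v (σ y - y)) : HasAlmostDescent p K v := by
  have : CharP L p := charP_of_injective_algebraMap (algebraMap K L).injective p
  by_cases htriv : ∀ x, 0 ≤ v x
  · exact hasAlmostDescent_of_forall_nonneg htriv
  push Not at htriv
  obtain ⟨x₀, hx₀⟩ := htriv
  obtain ⟨π, e, he, hπ, hval⟩ := exists_uniformizer hx₀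
  have hres : ∀ y, 0 ≤ v y → ∃ g : K, 0 < v (y - algebraMap K L g) := fun y hy ↦
    hsep.exists_val_sub_pos_of_val_pow_sub_pos hy (hcard ▸ val_pow_card_sub_norm_pos hv hin hy)
  have : Nontrivial (L ≃ₐ[K] L) := by
    rw [← Finite.one_lt_card_iff_nontrivial, hcard]
    exact (Fact.out : p.Prime).one_lt
  obtain ⟨σ, hσ⟩ := exists_ne (1 : L ≃ₐ[K] L)
  obtain ⟨s, hs⟩ := exists_val_eq_coe (v := v)
    (map_div_self_sub_one_ne_zero hres he hπ hval (hv σ) hσ)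
  have hs₀ : 0 < s := by
    rw [← WithTop.coe_pos, ← hs]
    exact val_div_sub_one_pos hcard hv hin σ (v.ne_top_iff.1 (hπ ▸ WithTop.coe_ne_top))
  lift s to ℕ using hs₀.le
  have hϖ : v (algebraMap K L (Algebra.norm K π)) = (e * p : ℤ) := by
    rw [val_norm hv, hcard, hπ, ← WithTop.coe_nsmul, nsmul_eq_mul, mul_comm]
  exact fun n ↦ ⟨n + s, n.le_add_right s, fun b hb ↦
    exists_sub_map_mem_coeffsIn_of_attainsJump (fun f ↦ σ.commutes f) he.ne' (mod_cast hs₀)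
      (exists_attainsJump hres he hπ hval (hv σ) hs₀ hs hϖ
        fun x hx ↦ mem_range_algebraMap_of_prime_card hcard hσ hx) (hb σ)⟩

theorem hasAlmostDescent_of_prime_card {p : ℕ} [Fact p.Prime] [CharP K p]
    [FiniteDimensional K L] [IsGalois K L] (hcard : Nat.card (L ≃ₐ[K] L) = p)
    (hv : ∀ (σ : L ≃ₐ[K] L) x, v (σ x) = v x) (hsep : HasSeparableResidues K v) :
    HasAlmostDescent p K v := by
  have : CharP L p := charP_of_injective_algebraMap (algebraMap K L).injective p
  by_cases hdist : ∀ σ τ : L ≃ₐ[K] L, (∀ y, 0 ≤ v y → 0 < v (σ y - τ y)) → σ = τ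
  · obtain ⟨y, hy, htr⟩ := exists_val_trace_eq_zero hv hdist
    exact hasAlmostDescent_of_val_trace_eq_zero hv hy htr
  push Not at hdist
  obtain ⟨σ, τ, h, hne⟩ := hdist
  have hρ : ∀ y, 0 ≤ v y → 0 < v ((τ⁻¹ * σ) y - y) := fun y hy ↦ by
    rw [← hv τ, map_sub, AlgEquiv.mul_apply, ← AlgEquiv.mul_apply, mul_inv_cancel]
    exact h y hy
  exact hasAlmostDescent_of_forall_val_sub_pos hcard hv hsep fun σ' y ↦
    val_sub_pos_of_prime_card hcard hv (mt inv_mul_eq_one.1 (Ne.symm hne)) hρ σ'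

end CyclicOfPrimeDegree

section GaloisGroup

variable {p : ℕ} [Fact p.Prime]

lemma hasAlmostDescent_of_subsingleton {K L : Type*} [Field K] [Field L] [Algebra K L]
    [IsGalois K L] [FiniteDimensional K L] [Subsingleton (L ≃ₐ[K] L)]
    (v : AddValuation L (WithTop ℤ)) : HasAlmostDescent p K v := fun n ↦
  ⟨n, le_rfl, fun b _ ↦ by
    obtain ⟨b', hb'⟩ := exists_eq_map_algebraMap (K := K) (b := b) fun σ ↦ by
      rw [Subsingleton.elim σ 1]
      rfl
    exact ⟨b', by rw [← hb', sub_self]; exact zero_mem _⟩⟩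

lemma val_restrictNormal {K E L : Type*} [Field K] [Field E] [Field L] [Algebra K E]
    [Algebra E L] [Algebra K L] [IsScalarTower K E L] [Normal K E] [Normal K L]
    {v : AddValuation L (WithTop ℤ)} (hv : ∀ (σ : L ≃ₐ[K] L) x, v (σ x) = v x)
    (τ : E ≃ₐ[K] E) (x : E) :
    v.comap (algebraMap E L) (τ x) = v.comap (algebraMap E L) x := by
  obtain ⟨σ, rfl⟩ := AlgEquiv.restrictNormalHom_surjective (F := K) (K₁ := E) L τ
  exact (congrArg v (σ.restrictNormal_commutes E x)).trans (hv σ _)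

lemma card_algEquiv_fixedField {K L : Type*} [Field K] [Field L] [Algebra K L]
    [IsGalois K L] [FiniteDimensional K L] (P : Subgroup (L ≃ₐ[K] L)) :
    Nat.card (L ≃ₐ[IntermediateField.fixedField P] L) = Nat.card P := by
  rw [IsGalois.card_aut_eq_finrank, IntermediateField.finrank_fixedField_eq_card]

universe u

lemma hasAlmostDescent_of_card_eq_prime_pow {K L : Type u} [Field K] [Field L] [Algebra K L]
    [CharP K p] [IsGalois K L] [FiniteDimensional K L] {k : ℕ}
    (hcard : Nat.card (L ≃ₐ[K] L) = p ^ k) {v : AddValuation L (WithTop ℤ)}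
    (hv : ∀ (σ : L ≃ₐ[K] L) x, v (σ x) = v x) (hsep : HasSeparableResidues K v) :
    HasAlmostDescent p K v := by
  induction k generalizing K with
  | zero =>
    have := (Nat.card_eq_one_iff_unique.1 hcard).1
    exact hasAlmostDescent_of_subsingleton v
  | succ k ih =>
    obtain ⟨N, hN⟩ := Sylow.exists_subgroup_card_pow_prime p (hcard ▸ pow_dvd_pow p k.le_succ)
    have hp : p.Prime := Fact.out
    have hindex : N.index = p := Nat.eq_of_mul_eq_mul_left (pow_pos hp.pos k) <| by
      rw [← hN, N.card_mul_index, hcard, hN, pow_succ]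
    have hnormal : N.Normal := Subgroup.normal_of_index_eq_minFac_card <| by
      rw [hindex, hcard, hp.pow_minFac k.succ_ne_zero]
    have : CharP (IntermediateField.fixedField N) p :=
      charP_of_injective_algebraMap (algebraMap K _).injective p
    have htop : HasAlmostDescent p (IntermediateField.fixedField N) v :=
      ih ((card_algEquiv_fixedField N).trans hN) (fun σ ↦ hv (σ.restrictScalars K)) hsep.tower_top
    refine htop.trans hv (hasAlmostDescent_of_prime_card ?_ (val_restrictNormal hv) hsep.tower_bot)
    rw [← Nat.card_congr (IsGalois.normalAutEquivQuotient N).toEquiv, ← N.index_eq_card, hindex]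

lemma hasAlmostDescent {K L : Type*} [Field K] [Field L] [Algebra K L] [CharP K p] [IsGalois K L]
    [FiniteDimensional K L] {v : AddValuation L (WithTop ℤ)}
    (hv : ∀ (σ : L ≃ₐ[K] L) x, v (σ x) = v x) (hsep : HasSeparableResidues K v) :
    HasAlmostDescent p K v := by
  have P : Sylow p (L ≃ₐ[K] L) := default
  have : CharP L p := charP_of_injective_algebraMap (algebraMap K L).injective p
  have : CharP (IntermediateField.fixedField (P : Subgroup (L ≃ₐ[K] L))) p :=
    charP_of_injective_algebraMap (algebraMap K _).injective p
  obtain ⟨k, hk⟩ := IsPGroup.iff_card.1 P.isPGroup'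
  exact .of_coprime_index hv
    ((Nat.Prime.coprime_iff_not_dvd Fact.out).2 P.not_dvd_index).symm
    (hasAlmostDescent_of_card_eq_prime_pow ((card_algEquiv_fixedField _).trans hk)
      (fun σ ↦ hv (σ.restrictScalars K)) hsep.tower_top)

end GaloisGroup

section Truncated

variable {p : ℕ} [Fact p.Prime] {R S : Type*} [CommRing R] [CommRing S] (f : R →+* S)

lemma truncate_map (n : ℕ) (x : WittVector p R) :
    WittVector.truncate n (WittVector.map f x) =
      TruncatedWittVector.map f (WittVector.truncate n x) := by
  ext i
  simp only [TruncatedWittVector.map_coeff, coeff_truncate, WittVector.map_coeff]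

lemma truncatedMap_truncate {n m : ℕ} (h : n ≤ m) (x : TruncatedWittVector p m R) :
    TruncatedWittVector.map f (TruncatedWittVector.truncate h x) =
      TruncatedWittVector.truncate h (TruncatedWittVector.map f x) := by
  ext i
  simp only [TruncatedWittVector.map_coeff, TruncatedWittVector.coeff_truncate]

variable {f} in
lemma truncatedMap_injective (hf : Function.Injective f) (n : ℕ) :
    Function.Injective (TruncatedWittVector.map f (p := p) (n := n)) := fun x y hxy ↦
  TruncatedWittVector.ext fun i ↦ hf <| by
    rw [← TruncatedWittVector.map_coeff, hxy, TruncatedWittVector.map_coeff]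

variable {K L : Type*} [Field K] [Field L] [Algebra K L]

lemma exists_truncatedMap_sub_eq_of_cocycle [CharP K p] [IsGalois K L] [FiniteDimensional K L]
    {m : ℕ} {c : (L ≃ₐ[K] L) → TruncatedWittVector p m L}
    (hc : ∀ σ τ, c (σ * τ) = c σ + TruncatedWittVector.map (σ : L →+* L) (c τ)) :
    ∃ b, ∀ σ : L ≃ₐ[K] L, TruncatedWittVector.map (σ : L →+* L) b - b = c σ := by
  have : CharP L p := charP_of_injective_algebraMap (algebraMap K L).injective p
  obtain ⟨y, hy⟩ := Algebra.trace_surjective K L 1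
  set T : WittVector p L := ∑ σ : L ≃ₐ[K] L, WittVector.map (σ : L →+* L) (teichmuller p y)
  have hT : T.coeff 0 ≠ 0 := by
    rw [← WittVector.constantCoeff_apply, map_sum]
    simpa [WittVector.constantCoeff_apply, ← trace_eq_sum_automorphisms] using hy ▸ one_ne_zero
  obtain ⟨z, hz⟩ := (isUnit_of_coeff_zero_ne_zero T hT).exists_left_inv
  obtain ⟨b, -, hb⟩ := exists_coboundary_mem_of_trace (S := ⊤) (c := c)
    (φ := fun σ : L ≃ₐ[K] L ↦ TruncatedWittVector.map (σ : L →+* L))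
    (fun σ τ x ↦ TruncatedWittVector.ext fun i ↦ by simp only [TruncatedWittVector.map_coeff]; rfl)
    (y := WittVector.truncate m (teichmuller p y)) (fun _ ↦ trivial)
    (z := WittVector.truncate m z) trivial
    (by simp_rw [← truncate_map, ← map_sum, ← _root_.map_mul]; rw [hz, _root_.map_one])
    hc fun _ ↦ trivial
  exact ⟨b, hb⟩

/- Over `L` the cocycle is the coboundary of some `b`, which is then invariant up to integral
vectors, and an invariant vector close to `b` can be subtracted from it. -/
lemma HasAlmostDescent.exists_truncatedMap_sub_eq [CharP K p] [IsGalois K L]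
    [FiniteDimensional K L] {v : AddValuation L (WithTop ℤ)}
    (h : HasAlmostDescent p K v) (n : ℕ) : ∃ m, ∃ hm : n < m,
      ∀ c : (L ≃ₐ[K] L) → TruncatedWittVector p m L,
        (∀ σ, c σ ∈ (TruncatedWittVector.map (integerRing v).subtype).range) →
        (∀ σ τ, c (σ * τ) = c σ + TruncatedWittVector.map (σ : L →+* L) (c τ)) →
        ∃ b ∈ (TruncatedWittVector.map (integerRing v).subtype).range,
          ∀ σ : L ≃ₐ[K] L, TruncatedWittVector.truncate hm.le (c σ) =
            TruncatedWittVector.map (σ : L →+* L) b - b := by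
  obtain ⟨m, hnm, hm⟩ := h n
  refine ⟨m + 1, Nat.lt_succ_of_le hnm, fun c hcO hc ↦ ?_⟩
  obtain ⟨b, hb⟩ := exists_truncatedMap_sub_eq_of_cocycle hc
  obtain ⟨b, rfl⟩ := WittVector.truncate_surjective p (m + 1) L b
  have hb' : ∀ σ : L ≃ₐ[K] L,
      WittVector.truncate (m + 1) (WittVector.map (σ : L →+* L) b - b) = c σ := fun σ ↦ by
    rw [map_sub, truncate_map, hb]
  obtain ⟨a, ha⟩ := hm b fun σ ↦ coeffsIn_anti (integerRing v).toSubring m.le_succ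
    (Subring.mem_comap.2 (hb' σ ▸ hcO σ))
  refine ⟨_, Subring.mem_comap.1 ha, fun σ ↦ ?_⟩
  have hfix : WittVector.map (σ : L →+* L) (WittVector.map (algebraMap K L) a) =
      WittVector.map (algebraMap K L) a := WittVector.ext fun k ↦ σ.commutes (a.coeff k)
  rw [← hb' σ, TruncatedWittVector.truncate_wittVector_truncate, ← truncate_map, ← map_sub,
    map_sub (WittVector.map _) b, hfix, sub_sub_sub_cancel_right]

end Truncated

section ResidueFields

variable {K L : Type*} [Field K] [Field L] [Algebra K L]

/-- A complete discrete valuation as an additive valuation in the sense of Mathlib. -/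
def toAddValuation (w : CompleteDiscreteValuation L) : AddValuation L (WithTop ℤ) :=
  AddValuation.of w.v w.v_zero w.map_one w.min_le_add w.map_mul

lemma hasSeparableResidues_of_residueSeparable {wK : CompleteDiscreteValuation K}
    {wL : CompleteDiscreteValuation L} {e : ℕ} {he : 0 < e}
    {hcomp : ∀ x : K, wL.v (algebraMap K L x) = e • wK.v x}
    (h : ResidueSeparable wK wL e he hcomp) : HasSeparableResidues K (toAddValuation wL) := by
  intro x hx
  let _ : Algebra wK.residueField wL.residueField := (residueMap wK wL e he hcomp).toAlgebra
  have : Algebra.IsSeparable wK.residueField wL.residueField := h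
  have hone : ¬ 0 < wL.v ((1 : wL.integers) : L) := wL.map_one.not_gt
  have : Nontrivial wL.residueField :=
    Ideal.Quotient.nontrivial_iff.2 fun htop ↦ hone ((Ideal.eq_top_iff_one _).1 htop)
  set x' : wL.integers := ⟨x, hx⟩
  set π := Ideal.Quotient.mk wL.maxIdeal
  have hmk : ∀ y, π y = 0 ↔ 0 < wL.v y := fun y ↦ Ideal.Quotient.eq_zero_iff_mem
  obtain ⟨F, hF⟩ := Polynomial.map_surjective _ Ideal.Quotient.mk_surjective
    (minpoly wK.residueField (π x'))
  have haeval : ∀ G : wK.integers[X],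
      aeval (π x') (G.map (Ideal.Quotient.mk wK.maxIdeal)) =
        π (G.eval₂ (integerMap wK wL e hcomp) x') := fun G ↦ by
    rw [aeval_def, eval₂_map, hom_eval₂]
    rfl
  have hcoe : ∀ G : wK.integers[X],
      ((G.eval₂ (integerMap wK wL e hcomp) x' : wL.integers) : L) =
        aeval x (G.map wK.integers.subtype) := fun G ↦ by
    rw [aeval_def, eval₂_map]
    exact hom_eval₂ G _ wL.integers.subtype x'
  have hroot : aeval (π x') (F.map (Ideal.Quotient.mk wK.maxIdeal)) = 0 := by
    rw [hF, minpoly.aeval]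
  have hsep : (F.map (Ideal.Quotient.mk wK.maxIdeal)).Separable :=
    hF.symm ▸ Algebra.IsSeparable.isSeparable _ (π x')
  have hsimple := hsep.aeval_derivative_ne_zero hroot
  rw [haeval, hmk, hcoe] at hroot
  rw [derivative_map, haeval, Ne, hmk, hcoe, ← derivative_map, not_lt] at hsimple
  refine ⟨F.map wK.integers.subtype, fun i ↦ ?_, hroot, hsimple.antisymm ?_⟩
  · rw [coeff_map]
    exact (integerMap wK wL e hcomp (F.coeff i)).2
  · rw [derivative_map, ← hcoe]
    exact (eval₂ (integerMap wK wL e hcomp) x' (derivative F)).2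

end ResidueFields

end WittCohomology

open WittCohomology

theorem hesselholt_equicharacteristic_pro_vanishing_general (p : ℕ) [Fact p.Prime]
    {K L : Type*} [Field K] [Field L] [Algebra K L] [CharP K p] [IsGalois K L]
    [FiniteDimensional K L] (v : AddValuation L (WithTop ℤ))
    (hsep : HasSeparableResidues K v) (hv : ∀ (σ : L ≃ₐ[K] L) (x : L), v (σ x) = v x) :
    ∀ n : ℕ, ∃ m : ℕ, ∃ hm : n < m,
      ∀ c : (L ≃ₐ[K] L) → TruncatedWittVector p m (integerRing v),
        (∀ σ τ : L ≃ₐ[K] L,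
            c (σ * τ) = c σ +
              TruncatedWittVector.map (integerRing.map (f := (σ : L →+* L)) (hv σ)) (c τ)) →
        ∃ b : TruncatedWittVector p n (integerRing v), ∀ σ : L ≃ₐ[K] L,
          TruncatedWittVector.truncate hm.le (c σ) =
            TruncatedWittVector.map (integerRing.map (f := (σ : L →+* L)) (hv σ)) b - b := by
  intro n
  obtain ⟨m, hm, h⟩ := (hasAlmostDescent (p := p) hv hsep).exists_truncatedMap_sub_eq n
  have hcomm : ∀ {k} (σ : L ≃ₐ[K] L) (x : TruncatedWittVector p k (integerRing v)),
      TruncatedWittVector.map (integerRing v).subtype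
        (TruncatedWittVector.map (integerRing.map (f := (σ : L →+* L)) (hv σ)) x) =
      TruncatedWittVector.map (σ : L →+* L) (TruncatedWittVector.map (integerRing v).subtype x) :=
    fun σ x ↦ TruncatedWittVector.ext fun i ↦ by simp only [TruncatedWittVector.map_coeff]; rfl
  refine ⟨m, hm, fun c hc ↦ ?_⟩
  obtain ⟨_, ⟨b, rfl⟩, hb⟩ := h
    (fun σ ↦ TruncatedWittVector.map (integerRing v).subtype (c σ)) (fun σ ↦ ⟨c σ, rfl⟩)
    fun σ τ ↦ by rw [hc, map_add, hcomm]
  refine ⟨b, fun σ ↦ truncatedMap_injective (f := (integerRing v).subtype)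
    Subtype.val_injective n ?_⟩
  rw [truncatedMap_truncate, hb, map_sub, hcomm]

/-- Let `L/K` be a finite Galois extension of complete discrete valued
fields of equal characteristic `p > 0` (with Galois group `G = L ≃ₐ[K] L`) whose induced
residue field extension is separable.  Then the pro-abelian group `{H¹(G, Wₙ(O_L))}ₙ` is
zero: for every `n` there is `m > n` such that every `1`-cocycle with values in `W_m(O_L)`
becomes a `1`-coboundary after truncation to `W_n(O_L)`. -/
theorem hesselholt_equicharacteristic_pro_vanishing
    (p : ℕ) [Fact p.Prime]
    {K L : Type*} [Field K] [Field L] [Algebra K L] [CharP K p]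
    (wK : CompleteDiscreteValuation K) (wL : CompleteDiscreteValuation L)
    [IsGalois K L] [FiniteDimensional K L]
    (e : ℕ) (he : 0 < e)
    (hcomp : ∀ x : K, wL.v (algebraMap K L x) = e • wK.v x)
    (hsep : ResidueSeparable wK wL e he hcomp)
    (hGal : ∀ (σ : L ≃ₐ[K] L) (x : L), wL.v (σ x) = wL.v x) :
    ∀ n : ℕ, ∃ m : ℕ, ∃ hm : n < m,
      ∀ c : (L ≃ₐ[K] L) → TruncatedWittVector p m wL.integers,
        (∀ σ τ : L ≃ₐ[K] L,
            c (σ * τ) = c σ + TruncatedWittVector.map (wL.galRes hGal σ) (c τ)) →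
        ∃ b : TruncatedWittVector p n wL.integers, ∀ σ : L ≃ₐ[K] L,
          TruncatedWittVector.truncate (le_of_lt hm) (c σ) =
            TruncatedWittVector.map (wL.galRes hGal σ) b - b :=
  hesselholt_equicharacteristic_pro_vanishing_general p (toAddValuation wL)
    (hasSeparableResidues_of_residueSeparable hsep) hGal
end
end

section
/- Let L/K be a finite Galois extension of complete discrete valued fields of equal characteristic p > 0 with Galois group G, such that the induced extension of residue fields is separable. Then the inverse limit over n of the groups H^1(G, W_n(O_L)), taken along the maps induced by the truncation maps W_{n+1}(O_L) → W_n(O_L), vanishes. -/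
/-!
Common background: complete discretely valued fields, their valuation rings,
residue fields, Galois action on the valuation ring, truncated Witt vector
functoriality, and ramification breaks.
-/

noncomputable section

open scoped Classical

open CompleteDiscreteValuation

/-!
Over `W(L)` every cocycle is the coboundary of some `β`, by additive Hilbert 90. If the cocycle
takes values in `W(O_L)`, then `|G| β` differs by an element of `W(O_L)` from the `G`-invariant
vector `∑ σ β`, so that it lies in `W(K) + W(O_L)`. The point is that this group is closed under
division by positive integers: then `β = a + b` with `a ∈ W(K)` and `b ∈ W(O_L)`, and the cocycle
is the coboundary of `b`. Hence `H¹(G, W(O_L))` vanishes, and since the truncation maps are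
surjective, a compatible family of classes lifts to a cocycle with values in `W(O_L)`.

As `p = VF`, the divisibility comes down to the following: if `a ∈ W(K)` lies in
`F(W(L)) + W(O_L)`, then `a₀ ∈ K ^ p + O_K`. Let `s = a₀ - y ^ p` be of minimal norm and suppose
that `‖s‖ > 1`. There is a toral derivation `D` of `K` with `D s = s` which does not increase the
norm, and it extends to a bounded derivation of the separable extension `L`. The de Rham-Witt maps
`Fⁿd`, contracted with `D`, kill `F(W(L))` and are bounded on `W(O_L)`, uniformly in `n`. But the
Cartier operator of `D` sends `Fⁿ⁺¹d a` to the `p`-th power of `Fⁿd a`, so that these elements grow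
like `‖D a₀‖ ^ pⁿ = ‖s‖ ^ pⁿ`, a contradiction.
-/

section WittSubring

open WittVector

variable {p : ℕ} [Fact p.Prime] {R : Type*} [CommRing R]

/-- The Witt vectors over `R` whose components all lie in the subring `S`, that is, the image of
`W(S)` in `W(R)`. -/
def wittSubring (p : ℕ) [Fact p.Prime] (S : Subring R) : Subring (WittVector p R) :=
  (WittVector.map S.subtype).range

lemma mem_wittSubring {S : Subring R} {x : WittVector p R} :
    x ∈ wittSubring p S ↔ ∀ i, x.coeff i ∈ S := by
  refine ⟨?_, fun h => ⟨mk p fun i => ⟨x.coeff i, h i⟩, by ext; simp [map_coeff]⟩⟩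
  rintro ⟨y, rfl⟩ i
  simp [map_coeff]

lemma teichmuller_mem_wittSubring {S : Subring R} {a : R} (ha : a ∈ S) :
    teichmuller p a ∈ wittSubring p S :=
  ⟨teichmuller p ⟨a, ha⟩, map_teichmuller ..⟩

lemma verschiebung_mem_wittSubring {S : Subring R} {x : WittVector p R} :
    verschiebung x ∈ wittSubring p S ↔ x ∈ wittSubring p S := by
  simp only [mem_wittSubring]
  refine ⟨fun h i => by simpa using h (i + 1), fun h i => ?_⟩
  cases i with
  | zero => simp
  | succ i => simpa using h i

lemma coeff_zero_add (x y : WittVector p R) : (x + y).coeff 0 = x.coeff 0 + y.coeff 0 :=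
  map_add constantCoeff x y

lemma coeff_zero_sub (x y : WittVector p R) : (x - y).coeff 0 = x.coeff 0 - y.coeff 0 :=
  map_sub constantCoeff x y

lemma exists_verschiebung_eq {x : WittVector p R} (h : x.coeff 0 = 0) :
    ∃ y, verschiebung y = x :=
  ⟨x.shift 1, (eq_iterate_verschiebung (n := 1) fun i hi => by simpa [Nat.lt_one_iff.1 hi]).symm⟩

lemma exists_teichmuller_add_verschiebung (x : WittVector p R) {a b : R}
    (h : x.coeff 0 = a + b) :
    ∃ y, x = teichmuller p a + teichmuller p b + verschiebung y := by
  obtain ⟨y, hy⟩ := exists_verschiebung_eq (x := x - (teichmuller p a + teichmuller p b)) (by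
    simp only [coeff_zero_sub, coeff_zero_add, teichmuller_coeff_zero, h, sub_self])
  exact ⟨y, by rw [hy, add_sub_cancel]⟩

lemma mk_eq_teichmuller_add_verschiebung (f : ℕ → R) :
    mk p f = teichmuller p (f 0) + verschiebung (mk p fun i => f (i + 1)) := by
  ext n
  rw [coeff_add_of_disjoint]
  · cases n with
    | zero => simp
    | succ n => simp [teichmuller_coeff_pos]
  · rintro (_ | n)
    · exact .inr (verschiebung_coeff_zero _)
    · exact .inl (teichmuller_coeff_pos _ _ _ n.succ_pos)

lemma eq_zero_of_verschiebung_chain {d : ℕ → WittVector p R}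
    (h : ∀ n, d n = verschiebung (d (n + 1))) (n : ℕ) : d n = 0 := by
  ext k
  induction k generalizing n with
  | zero => rw [h n]; simp
  | succ k ih => rw [h n, verschiebung_coeff_succ, ih, zero_coeff, zero_coeff]

/-- The additive group `W(S) + W(T)` of sums of Witt vectors with components in the subrings `S`
and `T` of `R`. As `S + T` need not be a ring, membership is not a condition on the individual
components. -/
def wittSum (p : ℕ) [Fact p.Prime] (S T : Subring R) : AddSubgroup (WittVector p R) :=
  (wittSubring p S).toAddSubgroup ⊔ (wittSubring p T).toAddSubgroup

lemma mem_wittSum {S T : Subring R} {x : WittVector p R} :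
    x ∈ wittSum p S T ↔ ∃ a ∈ wittSubring p S, ∃ b ∈ wittSubring p T, a + b = x :=
  AddSubgroup.mem_sup

lemma mem_wittSum_of_verschiebung_mem {S T : Subring R} {x : WittVector p R}
    (hx : verschiebung x ∈ wittSum p S T) : x ∈ wittSum p S T := by
  obtain ⟨a, ha, b, hb, h⟩ := mem_wittSum.1 hx
  have h₀ : b.coeff 0 = -a.coeff 0 := by
    have := congrArg (fun z => z.coeff 0) h
    rw [coeff_zero_add, verschiebung_coeff_zero] at this
    exact eq_neg_of_add_eq_zero_right this
  -- The two constant components cancel, so `[a₀]` can be moved from one summand to the other.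
  have haT : a.coeff 0 ∈ T := by simpa [h₀] using T.neg_mem (mem_wittSubring.1 hb 0)
  obtain ⟨a', ha'⟩ := exists_verschiebung_eq (x := a - teichmuller p (a.coeff 0)) (by
    rw [coeff_zero_sub, teichmuller_coeff_zero, sub_self])
  obtain ⟨b', hb'⟩ := exists_verschiebung_eq (x := b + teichmuller p (a.coeff 0)) (by
    rw [coeff_zero_add, teichmuller_coeff_zero, h₀, neg_add_cancel])
  refine mem_wittSum.2 ⟨a', verschiebung_mem_wittSubring.1 ?_, b',
    verschiebung_mem_wittSubring.1 ?_, verschiebung_injective p R ?_⟩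
  · rw [ha']
    exact sub_mem ha (teichmuller_mem_wittSubring (mem_wittSubring.1 ha 0))
  · rw [hb']
    exact add_mem hb (teichmuller_mem_wittSubring haT)
  · rw [_root_.map_add, ha', hb', ← h]
    abel

theorem le_wittSum {S T : Subring R} (M : AddSubgroup (WittVector p R))
    (hV : ∀ x, verschiebung x ∈ M → x ∈ M) (hS : ∀ a ∈ S, teichmuller p a ∈ M)
    (hT : ∀ b ∈ T, teichmuller p b ∈ M) (h₀ : ∀ x ∈ M, ∃ a ∈ S, ∃ b ∈ T, x.coeff 0 = a + b) :
    M ≤ wittSum p S T := by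
  have peel : ∀ x : M, ∃ (a : S) (b : T) (y : M),
      (x : WittVector p R) = teichmuller p (a : R) + teichmuller p (b : R) +
        verschiebung (y : WittVector p R) := by
    rintro ⟨x, hx⟩
    obtain ⟨a, ha, b, hb, h⟩ := h₀ x hx
    obtain ⟨y, hy⟩ := exists_teichmuller_add_verschiebung x h
    refine ⟨⟨a, ha⟩, ⟨b, hb⟩, ⟨y, hV y ?_⟩, hy⟩
    rw [eq_sub_of_add_eq' hy.symm]
    exact sub_mem hx (add_mem (hS a ha) (hT b hb))
  choose a b next hnext using peel
  intro x hx
  let y : ℕ → M := fun n => next^[n] ⟨x, hx⟩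
  have hy (n : ℕ) : y (n + 1) = next (y n) := Function.iterate_succ_apply' ..
  have hrest := eq_zero_of_verschiebung_chain (p := p)
    (d := fun n => (y n : WittVector p R) - (mk p (fun i => (a (y (n + i)) : R)) +
      mk p fun i => (b (y (n + i)) : R))) (fun n => by
        rw [mk_eq_teichmuller_add_verschiebung (fun i => (a (y (n + i)) : R)),
          mk_eq_teichmuller_add_verschiebung (fun i => (b (y (n + i)) : R)), hnext (y n), ← hy]
        simp only [map_sub, _root_.map_add, add_zero, ← add_assoc, add_right_comm n]
        abel) 0
  exact mem_wittSum.2 ⟨_, mem_wittSubring.2 fun i => (a (y (0 + i))).2, _,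
    mem_wittSubring.2 fun i => (b (y (0 + i))).2, (sub_eq_zero.1 hrest).symm⟩

section CharP

variable [CharP R p]

lemma frobenius_mem_wittSubring {S : Subring R} (hS : ∀ x, x ^ p ∈ S → x ∈ S)
    {x : WittVector p R} (hx : WittVector.frobenius x ∈ wittSubring p S) : x ∈ wittSubring p S :=
  mem_wittSubring.2 fun i => hS _ <| by
    simpa [coeff_frobenius_charP] using mem_wittSubring.1 hx i

lemma mem_wittSubring_map_frobenius {S : Subring R} {x : WittVector p R} :
    x ∈ wittSubring p (S.map (_root_.frobenius R p)) ↔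
      ∃ y ∈ wittSubring p S, WittVector.frobenius y = x := by
  constructor
  · intro hx
    choose y hyS hy using mem_wittSubring.1 hx
    exact ⟨mk p y, mem_wittSubring.2 hyS, by
      ext i; simp [coeff_frobenius_charP, ← hy, frobenius_def]⟩
  · rintro ⟨y, hy, rfl⟩
    exact mem_wittSubring.2 fun i =>
      ⟨y.coeff i, mem_wittSubring.1 hy i, (coeff_frobenius_charP p y i).symm⟩

lemma frobenius_mem_wittSubring_range (x : WittVector p R) :
    WittVector.frobenius x ∈ wittSubring p (_root_.frobenius R p).range :=
  mem_wittSubring.2 fun i => ⟨x.coeff i, (coeff_frobenius_charP p x i).symm⟩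

theorem mem_wittSum_of_frobenius_mem {S O : Subring R} (hO : ∀ x, x ^ p ∈ O → x ∈ O)
    (h : ∀ x ∈ wittSubring p S, x ∈ wittSum p (_root_.frobenius R p).range O →
      ∃ a ∈ S.map (_root_.frobenius R p), ∃ b ∈ S ⊓ O, x.coeff 0 = a + b)
    {x : WittVector p R} (hx : WittVector.frobenius x ∈ wittSum p S O) : x ∈ wittSum p S O := by
  obtain ⟨a, ha, o, ho, hao⟩ := mem_wittSum.1 hx
  let M := (wittSubring p S).toAddSubgroup ⊓ wittSum p (_root_.frobenius R p).range O
  have hM : M ≤ wittSum p (S.map (_root_.frobenius R p)) (S ⊓ O) := by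
    refine le_wittSum M (fun y hy => ⟨verschiebung_mem_wittSubring.1 hy.1,
      mem_wittSum_of_verschiebung_mem hy.2⟩) ?_ (fun b hb =>
        ⟨teichmuller_mem_wittSubring hb.1,
          AddSubgroup.mem_sup_right (teichmuller_mem_wittSubring hb.2)⟩) fun y hy => h y hy.1 hy.2
    rintro _ ⟨b, hb, rfl⟩
    exact ⟨teichmuller_mem_wittSubring (S.pow_mem hb p),
      AddSubgroup.mem_sup_left (teichmuller_mem_wittSubring ⟨b, rfl⟩)⟩
  have haM : a ∈ M := ⟨ha, mem_wittSum.2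
    ⟨_, frobenius_mem_wittSubring_range x, -o, neg_mem ho, by rw [← hao]; abel⟩⟩
  obtain ⟨_, hb, c, hc, hbc⟩ := mem_wittSum.1 (hM haM)
  obtain ⟨b, hbS, rfl⟩ := mem_wittSubring_map_frobenius.1 hb
  have hc' : c ∈ wittSubring p O := mem_wittSubring.2 fun i => (mem_wittSubring.1 hc i).2
  refine mem_wittSum.2 ⟨b, hbS, x - b, frobenius_mem_wittSubring hO ?_, add_sub_cancel b x⟩
  rw [map_sub, ← hao, ← hbc]
  convert add_mem hc' ho using 1
  abel

lemma mem_wittSum_of_natCast_mul_mem_of_coprime {S T : Subring R} {m : ℕ} (hm : ¬ p ∣ m)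
    {x : WittVector p R} (hx : (m : WittVector p R) * x ∈ wittSum p S T) : x ∈ wittSum p S T := by
  -- `m` is invertible in `ℤₚ = W(𝔽ₚ)`, whose image lies in `W(S)` for every subring `S`.
  have hunit : IsUnit (m : WittVector p (ZMod p)) :=
    isUnit_of_coeff_zero_ne_zero _ <| by
      have : (m : WittVector p (ZMod p)).coeff 0 = m := map_natCast constantCoeff m
      rwa [this, ne_eq, ZMod.natCast_eq_zero_iff]
  obtain ⟨u, hu⟩ := hunit.exists_left_inv
  let j := WittVector.map (p := p) (ZMod.castHom dvd_rfl R)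
  have hj (U : Subring R) : j u ∈ wittSubring p U := mem_wittSubring.2 fun i => by
    obtain ⟨k, hk⟩ := ZMod.intCast_surjective (u.coeff i)
    rw [map_coeff, ← hk, map_intCast]
    exact intCast_mem U k
  have hmul : j u * ((m : WittVector p R) * x) = x := by
    rw [← mul_assoc, ← map_natCast j m, ← _root_.map_mul, hu, _root_.map_one, one_mul]
  obtain ⟨a, ha, b, hb, hab⟩ := mem_wittSum.1 hx
  exact mem_wittSum.2 ⟨_, mul_mem (hj S) ha, _, mul_mem (hj T) hb, by rw [← mul_add, hab, hmul]⟩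

theorem mem_wittSum_of_natCast_mul_mem {S O : Subring R}
    (hF : ∀ x : WittVector p R, WittVector.frobenius x ∈ wittSum p S O → x ∈ wittSum p S O)
    {n : ℕ} (hn : n ≠ 0) {x : WittVector p R} (hx : (n : WittVector p R) * x ∈ wittSum p S O) :
    x ∈ wittSum p S O := by
  obtain ⟨k, m, hm, rfl⟩ := Nat.exists_eq_pow_mul_and_not_dvd hn p (Fact.out : p.Prime).ne_one
  have hmx : ((p ^ k : ℕ) : WittVector p R) * x ∈ wittSum p S O :=
    mem_wittSum_of_natCast_mul_mem_of_coprime hm (by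
      rwa [← mul_assoc, ← Nat.cast_mul, mul_comm m])
  clear hx hn
  induction k with
  | zero => simpa using hmx
  | succ k ih =>
    refine ih (hF _ (mem_wittSum_of_verschiebung_mem ?_))
    rwa [verschiebung_frobenius, mul_comm, ← mul_assoc, ← Nat.cast_mul, ← pow_succ']

end CharP

end WittSubring

section Derivation

theorem exists_derivation_algebraMap {K L : Type*} [Field K] [Field L] [Algebra K L]
    [Algebra.IsSeparable K L] (D : Derivation ℤ K K) :
    ∃ D' : Derivation ℤ L L, ∀ x : K, D' (algebraMap K L x) = algebraMap K L (D x) := by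
  have := Algebra.FormallyEtale.of_isSeparable K L
  let φ : Ω[K⁄ℤ] →ₗ[K] L := (Algebra.linearMap K L).comp D.liftKaehlerDifferential
  let ψ : Ω[L⁄ℤ] →ₗ[L] L := φ.liftBaseChange L ∘ₗ
    (KaehlerDifferential.tensorKaehlerEquivOfFormallyEtale ℤ K L).symm.toLinearMap
  refine ⟨ψ.compDer (KaehlerDifferential.D ℤ L), fun x => ?_⟩
  simp [ψ, φ, KaehlerDifferential.tensorKaehlerEquivOfFormallyEtale_symm_D_algebraMap]

variable {p : ℕ} {R S : Type*} [CommRing R] [CommRing S]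

/-- The composite of the de Rham-Witt map `Fⁿd`, with values in `Ω_R`, and of the linear form
`Ω_R → R` corresponding to the derivation `D`. -/
def frobeniusDifferential (D : Derivation ℤ R R) (n : ℕ) (x : WittVector p R) : R :=
  ∑ i ∈ Finset.range (n + 1), x.coeff i ^ (p ^ (n - i) - 1) * D (x.coeff i)

lemma frobeniusDifferential_zero (D : Derivation ℤ R R) (x : WittVector p R) :
    frobeniusDifferential D 0 x = D (x.coeff 0) := by
  simp [frobeniusDifferential]

variable [Fact p.Prime]

lemma derivation_ghostComponent (D : Derivation ℤ R R) (n : ℕ) (x : WittVector p R) :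
    D (WittVector.ghostComponent n x) = (p : R) ^ n * frobeniusDifferential D n x := by
  rw [WittVector.ghostComponent_apply, wittPolynomial_eq_sum_C_mul_X_pow, map_sum, map_sum,
    frobeniusDifferential, Finset.mul_sum]
  refine Finset.sum_congr rfl fun i hi => ?_
  have hpow : (p : R) ^ n = (p : R) ^ i * (p : R) ^ (n - i) := by
    rw [← pow_add, Nat.add_sub_cancel' (Nat.lt_succ_iff.1 (Finset.mem_range.1 hi))]
  have hterm : (MvPolynomial.aeval x.coeff) (MvPolynomial.C ((p : ℤ) ^ i) *
      MvPolynomial.X i ^ p ^ (n - i)) = ((p ^ i : ℕ) : R) * x.coeff i ^ p ^ (n - i) := by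
    simp
  rw [hterm, Derivation.leibniz, Derivation.leibniz_pow, Derivation.map_natCast, hpow]
  simp only [smul_eq_mul, nsmul_eq_mul]
  push_cast
  ring

lemma frobeniusDifferential_map {D : Derivation ℤ R R} {D' : Derivation ℤ S S} {f : R →+* S}
    (hf : ∀ x, D' (f x) = f (D x)) (n : ℕ) (x : WittVector p R) :
    frobeniusDifferential D' n (WittVector.map f x) = f (frobeniusDifferential D n x) := by
  simp [frobeniusDifferential, hf, WittVector.map_coeff]

lemma frobeniusDifferential_add_of_charZero [IsDomain R] [CharZero R] (D : Derivation ℤ R R)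
    (n : ℕ) (x y : WittVector p R) : frobeniusDifferential D n (x + y) =
      frobeniusDifferential D n x + frobeniusDifferential D n y := by
  have hp : (p : R) ^ n ≠ 0 := pow_ne_zero _ (Nat.cast_ne_zero.2 (NeZero.ne p))
  refine mul_left_cancel₀ hp ?_
  simp only [mul_add, ← derivation_ghostComponent, _root_.map_add]

-- By functoriality it suffices to treat the polynomial ring `ℤ[R]`, which has characteristic zero.
theorem frobeniusDifferential_add (D : Derivation ℤ R R) (n : ℕ) (x y : WittVector p R) :
    frobeniusDifferential D n (x + y) =
      frobeniusDifferential D n x + frobeniusDifferential D n y := by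
  let d : Derivation ℤ (MvPolynomial R ℤ) (MvPolynomial R ℤ) :=
    MvPolynomial.mkDerivation ℤ fun r => MvPolynomial.X (D r)
  let π : MvPolynomial R ℤ →+* R := MvPolynomial.eval₂Hom (Int.castRingHom R) id
  have hπ : Function.Surjective π := fun r => ⟨MvPolynomial.X r, by simp [π]⟩
  have hd : ∀ f, D (π f) = π (d f) := by
    intro f
    induction f using MvPolynomial.induction_on with
    | C a => simp [π, d]
    | add f g hf hg => simp only [_root_.map_add, hf, hg]
    | mul_X f r hf =>
      simp only [_root_.map_mul, Derivation.leibniz, smul_eq_mul, _root_.map_add, hf]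
      simp [π, d]
  obtain ⟨x, rfl⟩ := WittVector.map_surjective π hπ x
  obtain ⟨y, rfl⟩ := WittVector.map_surjective π hπ y
  rw [← _root_.map_add, frobeniusDifferential_map hd, frobeniusDifferential_map hd,
    frobeniusDifferential_map hd]
  exact (congrArg π (frobeniusDifferential_add_of_charZero d n x y)).trans (_root_.map_add ..)

lemma exists_pow_mul_derivation_add (D : Derivation ℤ R R) (x y : R) :
    ∃ z, (x + y) ^ (p - 1) * D (x + y) + D z = x ^ (p - 1) * D x + y ^ (p - 1) * D y := by
  have h := frobeniusDifferential_add D 1 (WittVector.teichmuller p x) (WittVector.teichmuller p y)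
  simp only [frobeniusDifferential, Finset.sum_range_succ, Finset.sum_range_zero, zero_add,
    coeff_zero_add, WittVector.teichmuller_coeff_zero, tsub_zero, tsub_self, pow_one, pow_zero,
    one_mul, WittVector.teichmuller_coeff_pos _ _ _ one_pos, _root_.map_zero, add_zero] at h
  exact ⟨_, h⟩

end Derivation

section Cartier

variable {p : ℕ} {R : Type*} [CommRing R]

/-- The derivation `D` is toral (with respect to the prime field): every element of `R` is a sum of
eigenvectors of `D` with integral eigenvalues. -/
def IsToral (D : Derivation ℤ R R) : Prop :=
  AddSubmonoid.closure {x | ∃ i : ℕ, D x = i * x} = ⊤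

lemma IsToral.induction {D : Derivation ℤ R R} (hD : IsToral D) {P : R → Prop}
    (eigenvector : ∀ (x : R) (i : ℕ), D x = i * x → P x)
    (add : ∀ x y, P x → P y → P (x + y)) (x : R) : P x := by
  refine AddSubmonoid.dense_induction _ hD (fun x ⟨i, hi⟩ => eigenvector x i hi)
    (eigenvector 0 0 (by simp)) add x

/-- The Cartier operator of a toral derivation `D` in characteristic `p`: the projection
`1 - D ^ (p - 1)` of `R` onto the kernel of `D`. -/
def cartier (p : ℕ) (D : Derivation ℤ R R) : Module.End ℤ R :=
  1 - (D : Module.End ℤ R) ^ (p - 1)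

lemma cartier_of_eigenvector {D : Derivation ℤ R R} {x : R} {i : ℕ} (h : D x = i * x) :
    cartier p D x = x - i ^ (p - 1) * x := by
  have hpow (k : ℕ) : ((D : Module.End ℤ R) ^ k) x = i ^ k * x := by
    induction k with
    | zero => simp
    | succ k ih =>
      rw [pow_succ', Module.End.mul_apply, ih, Derivation.coeFn_coe, ← Nat.cast_pow,
        Derivation.leibniz, Derivation.map_natCast, h, smul_zero, add_zero, smul_eq_mul,
        Nat.cast_pow, pow_succ, mul_assoc]
  simp [cartier, hpow]

variable [CharP R p]

lemma derivation_pow_char (D : Derivation ℤ R R) (x : R) : D (x ^ p) = 0 := by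
  simp [Derivation.leibniz_pow]

lemma cartier_pow_char_mul (D : Derivation ℤ R R) (x y : R) :
    cartier p D (x ^ p * y) = x ^ p * cartier p D y := by
  have hpow (k : ℕ) : ((D : Module.End ℤ R) ^ k) (x ^ p * y) =
      x ^ p * ((D : Module.End ℤ R) ^ k) y := by
    induction k generalizing y with
    | zero => rfl
    | succ k ih =>
      rw [pow_succ, Module.End.mul_apply, Module.End.mul_apply, ← ih]
      simp [Derivation.leibniz]
  simp [cartier, hpow, mul_sub]

variable [Fact p.Prime]

lemma frobeniusDifferential_frobenius (D : Derivation ℤ R R) (n : ℕ) (x : WittVector p R) :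
    frobeniusDifferential D n (WittVector.frobenius x) = 0 :=
  Finset.sum_eq_zero fun i _ => by
    rw [WittVector.coeff_frobenius_charP, derivation_pow_char, mul_zero]

lemma natCast_pow_char (R : Type*) [CommRing R] [CharP R p] (i : ℕ) : (i : R) ^ p = i :=
  map_natCast (frobenius R p) i

lemma cartier_derivation {D : Derivation ℤ R R} (hD : IsToral D) (x : R) :
    cartier p D (D x) = 0 := by
  induction x using hD.induction with
  | eigenvector x i h =>
    have hDx : D (D x) = i * D x := by
      rw [h, Derivation.leibniz, Derivation.map_natCast, h, smul_zero, add_zero, smul_eq_mul]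
    rw [cartier_of_eigenvector hDx, h, ← mul_assoc, pow_sub_one_mul (NeZero.ne p),
      natCast_pow_char, sub_self]
  | add x y hx hy => rw [_root_.map_add, _root_.map_add, hx, hy, add_zero]

lemma cartier_pow_mul_derivation {D : Derivation ℤ R R} (hD : IsToral D) (x : R) :
    cartier p D (x ^ (p - 1) * D x) = D x ^ p := by
  induction x using hD.induction with
  | eigenvector x i h =>
    have hp : p - 1 ≠ 0 := (Nat.sub_pos_of_lt (Fact.out : p.Prime).one_lt).ne'
    have hDx : D (x ^ p) = (0 : ℕ) * x ^ p := by rw [derivation_pow_char, Nat.cast_zero, zero_mul]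
    have hpow : x ^ (p - 1) * D x = (i : R) ^ p * x ^ p := by
      rw [h, natCast_pow_char, mul_left_comm, pow_sub_one_mul (NeZero.ne p)]
    rw [hpow, cartier_pow_char_mul, cartier_of_eigenvector hDx, h, mul_pow]
    simp [hp]
  | add x y hx hy =>
    obtain ⟨z, hz⟩ := exists_pow_mul_derivation_add (p := p) D x y
    rw [eq_sub_of_add_eq hz, _root_.map_sub, _root_.map_add, cartier_derivation hD, hx, hy,
      sub_zero, _root_.map_add, add_pow_char]

theorem cartier_frobeniusDifferential {D : Derivation ℤ R R} (hD : IsToral D) (n : ℕ)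
    (x : WittVector p R) :
    cartier p D (frobeniusDifferential D (n + 1) x) = frobeniusDifferential D n x ^ p := by
  rw [frobeniusDifferential, Finset.sum_range_succ, tsub_self, pow_zero, Nat.sub_self, pow_zero,
    one_mul, _root_.map_add, cartier_derivation hD, add_zero, map_sum, frobeniusDifferential,
    sum_pow_char]
  refine Finset.sum_congr rfl fun i hi => ?_
  have hexp : p ^ (n + 1 - i) - 1 = (p ^ (n - i) - 1) * p + (p - 1) := by
    have hi : i ≤ n := Nat.lt_succ_iff.1 (Finset.mem_range.1 hi)
    have h₁ : 1 ≤ p ^ (n - i) := Nat.one_le_pow _ _ (NeZero.pos p)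
    have h₂ : p ≤ p ^ (n - i) * p := Nat.le_mul_of_pos_left _ h₁
    rw [Nat.succ_sub hi, pow_succ, Nat.sub_mul, one_mul]
    have := NeZero.pos p
    omega
  rw [hexp, pow_add, pow_mul, mul_assoc, cartier_pow_char_mul, cartier_pow_mul_derivation hD,
    mul_pow]

end Cartier

section Orthogonality

open Polynomial IsLocalRing

variable {p : ℕ} [Fact p.Prime]

lemma minpoly_eq_X_pow_sub_C {E K : Type*} [Field E] [Field K] [Algebra E K] [CharP K p] {s : K}
    {a : E} (ha : algebraMap E K a = s ^ p) (hs : s ∉ (algebraMap E K).range) :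
    minpoly E s = X ^ p - C a := by
  refine (minpoly.eq_of_irreducible_of_monic
    (X_pow_sub_C_irreducible_of_prime Fact.out fun b hb => hs ⟨b, ?_⟩) (by simp [ha])
    (monic_X_pow_sub_C a (NeZero.ne p))).symm
  exact frobenius_inj K p (by rw [frobenius_def, frobenius_def, ← map_pow, hb, ha])

lemma eq_zero_of_sum_mul_pow_eq_zero {E K : Type*} [Field E] [Field K] [CharP K p] {f : E →+* K}
    {s : K} (hp : s ^ p ∈ f.range) (hs : s ∉ f.range) {c : Fin p → E}
    (hsum : ∑ i, f (c i) * s ^ (i : ℕ) = 0) (i : Fin p) : c i = 0 := by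
  let := f.toAlgebra
  obtain ⟨a, ha⟩ := hp
  have hdeg : (minpoly E s).natDegree = p := by
    rw [minpoly_eq_X_pow_sub_C ha hs, natDegree_X_pow_sub_C]
  have hind : LinearIndependent E fun i : Fin p => s ^ (i : ℕ) := hdeg ▸ linearIndependent_pow s
  refine Fintype.linearIndependent_iff.1 hind c ?_ i
  simpa only [Algebra.smul_def, RingHom.algebraMap_toAlgebra] using hsum

theorem mem_maximalIdeal_of_sum_mem_maximalIdeal {A B : Type*} [CommRing A] [CommRing B]
    [IsLocalRing A] [IsLocalRing B] [CharP (ResidueField B) p] {f : A →+* B} [IsLocalHom f] {u : B}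
    (hp : u ^ p ∈ f.range) (hu : ∀ y, u - f y ∉ maximalIdeal B) {c : Fin p → A}
    (hsum : ∑ i, f (c i) * u ^ (i : ℕ) ∈ maximalIdeal B) (i : Fin p) : c i ∈ maximalIdeal A := by
  simp only [← residue_eq_zero_iff] at hu hsum ⊢
  refine eq_zero_of_sum_mul_pow_eq_zero (p := p) (f := ResidueField.map f) (s := residue B u)
    (c := fun i => residue A (c i)) ?_ ?_ ?_ i
  · obtain ⟨a, ha⟩ := hp
    exact ⟨residue A a, by rw [ResidueField.map_residue, ha, map_pow]⟩
  · rintro ⟨y, hy⟩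
    obtain ⟨y, rfl⟩ := residue_surjective y
    exact hu y (by rw [map_sub, ← hy, ResidueField.map_residue, sub_self])
  · simpa only [ResidueField.map_residue, map_sum, _root_.map_mul, map_pow] using hsum

variable {E K : Type*} [NormedField E] [NormedField K]

/-- `s` is orthogonal to the subset `S` of `K` in the non-archimedean sense: no element of `S` is
closer to `s` than `0`. -/
def IsNormOrthogonal (s : K) (S : Set K) : Prop :=
  ∀ y ∈ S, ‖s‖ ≤ ‖s - y‖

lemma exists_norm_eq_of_coprime {m n : ℕ} (hmn : m.Coprime n) {r : ℝ} (hr : r ≠ 0)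
    (hm : ∃ y : E, ‖y‖ = r ^ m) (hn : ∃ y : E, ‖y‖ = r ^ n) : ∃ y : E, ‖y‖ = r := by
  obtain ⟨y, hy⟩ := hm
  obtain ⟨z, hz⟩ := hn
  refine ⟨y ^ m.gcdA n * z ^ m.gcdB n, ?_⟩
  rw [norm_mul, norm_zpow, norm_zpow, hy, hz, ← zpow_natCast, ← zpow_natCast, ← zpow_mul,
    ← zpow_mul, ← zpow_add₀ hr, ← Nat.gcd_eq_gcd_ab, hmn, Nat.cast_one, zpow_one]

variable [NormedAlgebra E K]

lemma norm_mul_pow_ne_of_forall_norm_ne {s : K} (hs : s ≠ 0) (hp : s ^ p ∈ (algebraMap E K).range)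
    (hy : ∀ y : E, ‖y‖ ≠ ‖s‖) {a b : E} (ha : a ≠ 0) {i j : ℕ} (hij : i < j) (hj : j < p) :
    ‖algebraMap E K a * s ^ i‖ ≠ ‖algebraMap E K b * s ^ j‖ := by
  intro h
  have hr : ‖s‖ ≠ 0 := norm_ne_zero_iff.2 hs
  have hdiff : ‖a‖ = ‖b‖ * ‖s‖ ^ (j - i) := by
    rw [norm_mul, norm_mul, norm_pow, norm_pow, norm_algebraMap', norm_algebraMap',
      ← Nat.sub_add_cancel hij.le, pow_add, ← mul_assoc] at h
    exact mul_right_cancel₀ (pow_ne_zero i hr) h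
  have hb : ‖b‖ ≠ 0 := left_ne_zero_of_mul (hdiff ▸ norm_ne_zero_iff.2 ha)
  obtain ⟨z, hz⟩ := hp
  have hcop : (j - i).Coprime p := ((Fact.out : p.Prime).coprime_iff_not_dvd.2
    (Nat.not_dvd_of_pos_of_lt (Nat.sub_pos_of_lt hij) (by lia))).symm
  obtain ⟨y, hsy⟩ := exists_norm_eq_of_coprime hcop hr
    ⟨a / b, by rw [norm_div, hdiff, mul_div_cancel_left₀ _ hb]⟩
    ⟨z, by rw [← norm_algebraMap' K, hz, norm_pow]⟩
  exact hy y hsy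

variable [IsUltrametricDist E] [IsUltrametricDist K]

instance hasExtension_valuation :
    (NormedField.valuation (K := E)).HasExtension (NormedField.valuation (K := K)) where
  val_isEquiv_comap x y := by simp [Valuation.comap_apply, ← NNReal.coe_le_coe]

variable [CharP K p]

theorem norm_lt_one_of_norm_sum_lt_one {u : K} (hu : ‖u‖ = 1)
    (hE : IsNormOrthogonal u (algebraMap E K).range) (hp : u ^ p ∈ (algebraMap E K).range)
    {c : Fin p → E} (hc : ∀ i, ‖c i‖ ≤ 1)
    (hsum : ‖∑ i, algebraMap E K (c i) * u ^ (i : ℕ)‖ < 1) (i : Fin p) : ‖c i‖ < 1 := by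
  let A := (NormedField.valuation (K := E)).valuationSubring
  let B := (NormedField.valuation (K := K)).valuationSubring
  have hB (x : B) : x ∈ maximalIdeal B ↔ ‖(x : K)‖ < 1 :=
    (NormedField.valuation (K := K)).mem_maximalIdeal_iff
  have : CharP (ResidueField B) p := by
    have hpB : (p : B) = 0 := Subtype.ext (CharP.cast_eq_zero K p)
    refine (CharP.charP_iff_prime_eq_zero Fact.out).2 ?_
    rw [← map_natCast (residue B), hpB, _root_.map_zero]
  have hpow : (⟨u, hu.le⟩ : B) ^ p ∈ (algebraMap A B).range := by
    obtain ⟨a, ha⟩ := hp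
    have ha₁ : ‖a‖ ≤ 1 := by rw [← norm_algebraMap' K, ha, norm_pow, hu, one_pow]
    exact ⟨⟨a, ha₁⟩, Subtype.ext ha⟩
  refine ((NormedField.valuation (K := E)).mem_maximalIdeal_iff (a := ⟨c i, hc i⟩)).1 <|
    mem_maximalIdeal_of_sum_mem_maximalIdeal (f := algebraMap A B)
    (c := fun i => ⟨c i, hc i⟩) hpow
    (fun y hy => (hu.ge.trans (hE _ ⟨y, rfl⟩)).not_gt ((hB _).1 hy)) ((hB _).2 ?_) i
  rwa [show ((∑ i, algebraMap A B ⟨c i, hc i⟩ * ⟨u, hu.le⟩ ^ (i : ℕ) : B) : K) =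
    ∑ i, algebraMap E K (c i) * u ^ (i : ℕ) from map_sum B.subtype _ _]

theorem norm_mul_pow_le_norm_sum_of_exists_norm_eq {s : K} (hs : s ≠ 0)
    (hE : IsNormOrthogonal s (algebraMap E K).range) (hp : s ^ p ∈ (algebraMap E K).range)
    (hy : ∃ y : E, ‖y‖ = ‖s‖) (c : Fin p → E) (i : Fin p) :
    ‖algebraMap E K (c i) * s ^ (i : ℕ)‖ ≤ ‖∑ j, algebraMap E K (c j) * s ^ (j : ℕ)‖ := by
  obtain ⟨y, hy⟩ := hy
  have hy₀ : y ≠ 0 := norm_ne_zero_iff.1 (hy ▸ norm_ne_zero_iff.2 hs)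
  have hyK : algebraMap E K y ≠ 0 := (_root_.map_ne_zero _).2 hy₀
  obtain ⟨k, hk⟩ := Finite.exists_max fun j => ‖algebraMap E K (c j) * s ^ (j : ℕ)‖
  refine (hk i).trans (le_of_not_gt fun hlt => ?_)
  have hnorm (j : Fin p) : ‖algebraMap E K (c j) * s ^ (j : ℕ)‖ = ‖c j * y ^ (j : ℕ)‖ := by
    rw [norm_mul, norm_mul, norm_pow, norm_pow, norm_algebraMap', hy]
  -- Dividing `s` by `y` and the coefficients by the largest term, all norms become at most `1`.
  have hg : 0 < ‖c k * y ^ (k : ℕ)‖ := hnorm k ▸ (norm_nonneg _).trans_lt hlt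
  have hu : ‖s / algebraMap E K y‖ = 1 := by
    rw [norm_div, norm_algebraMap', hy, div_self (norm_ne_zero_iff.2 hs)]
  have huE : IsNormOrthogonal (s / algebraMap E K y) (algebraMap E K).range := by
    rintro _ ⟨z, rfl⟩
    have : s / algebraMap E K y - algebraMap E K z =
        (s - algebraMap E K (z * y)) / algebraMap E K y := by
      rw [_root_.map_mul, sub_div, mul_div_cancel_right₀ _ hyK]
    rw [this, norm_div, norm_div]
    gcongr
    exact hE _ ⟨_, rfl⟩
  have hup : (s / algebraMap E K y) ^ p ∈ (algebraMap E K).range := by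
    obtain ⟨a, ha⟩ := hp
    exact ⟨a / y ^ p, by rw [map_div₀, ha, map_pow, div_pow]⟩
  refine (norm_lt_one_of_norm_sum_lt_one hu huE hup
    (c := fun j => c j * y ^ (j : ℕ) / (c k * y ^ (k : ℕ))) (fun j => ?_) ?_ k).ne ?_
  · rw [norm_div, div_le_one hg, ← hnorm, ← hnorm]
    exact hk j
  · have : ∑ j, algebraMap E K (c j * y ^ (j : ℕ) / (c k * y ^ (k : ℕ))) *
          (s / algebraMap E K y) ^ (j : ℕ) =
        (∑ j, algebraMap E K (c j) * s ^ (j : ℕ)) / algebraMap E K (c k * y ^ (k : ℕ)) := by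
      rw [Finset.sum_div]
      refine Finset.sum_congr rfl fun j _ => ?_
      rw [map_div₀, _root_.map_mul, map_pow, div_mul_eq_mul_div, mul_assoc, ← mul_pow,
        mul_div_cancel₀ _ hyK]
    rw [this, norm_div, norm_algebraMap', div_lt_one hg, ← hnorm]
    exact hlt
  · rw [div_self (norm_pos_iff.1 hg), norm_one]

theorem norm_mul_pow_le_norm_sum {s : K} (hs : s ≠ 0)
    (hE : IsNormOrthogonal s (algebraMap E K).range) (hp : s ^ p ∈ (algebraMap E K).range)
    (c : Fin p → E) (i : Fin p) :
    ‖algebraMap E K (c i) * s ^ (i : ℕ)‖ ≤ ‖∑ j, algebraMap E K (c j) * s ^ (j : ℕ)‖ := by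
  by_cases hy : ∃ y : E, ‖y‖ = ‖s‖
  · exact norm_mul_pow_le_norm_sum_of_exists_norm_eq hs hE hp hy c i
  push Not at hy
  let f : Fin p → K := fun j => algebraMap E K (c j) * s ^ (j : ℕ)
  let T : Finset (Fin p) := {j | f j ≠ 0}
  have hc {j : Fin p} (hj : j ∈ T) : c j ≠ 0 := fun h => by simp [T, f, h] at hj
  have hT : Set.Pairwise T fun j k => ‖f j‖₊ ≠ ‖f k‖₊ := fun j hj k hk hjk h => by
    have h : ‖f j‖ = ‖f k‖ := congrArg NNReal.toReal h
    rcases lt_or_gt_of_ne hjk with hlt | hlt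
    · exact norm_mul_pow_ne_of_forall_norm_ne hs hp hy (hc hj) hlt k.2 h
    · exact norm_mul_pow_ne_of_forall_norm_ne hs hp hy (hc hk) hlt j.2 h.symm
  change ‖f i‖ ≤ ‖∑ j, f j‖
  by_cases hi : f i = 0
  · rw [hi, norm_zero]
    exact norm_nonneg _
  · rw [← Finset.sum_filter_ne_zero]
    have hiT : i ∈ T := by simpa [T] using hi
    exact NNReal.coe_le_coe.2 <| (Finset.le_sup hiT).trans_eq
      (IsUltrametricDist.nnnorm_sum_eq_sup_of_pairwise_ne hT).symm

end Orthogonality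

section Hyperplane

open Polynomial IntermediateField

variable {p : ℕ}

lemma exists_sum_mul_pow_eq_of_mem_adjoin {E K : Type*} [Field E] [Field K] [Algebra E K]
    (hp₀ : p ≠ 0) {s x : K} (hp : s ^ p ∈ (algebraMap E K).range) (hx : x ∈ E⟮s⟯) :
    ∃ c : Fin p → E, ∑ i, algebraMap E K (c i) * s ^ (i : ℕ) = x := by
  obtain ⟨a, ha⟩ := hp
  have hint : IsIntegral E s := (ha ▸ isIntegral_algebraMap).of_pow (Nat.pos_of_ne_zero hp₀)
  rw [← mem_toSubalgebra, adjoin_simple_toSubalgebra_of_isAlgebraic hint.isAlgebraic,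
    Algebra.adjoin_singleton_eq_range_aeval] at hx
  obtain ⟨f, rfl⟩ := hx
  have hf : aeval s (f %ₘ (X ^ p - C a)) = aeval s f :=
    aeval_modByMonic_eq_self_of_root (by simp [ha])
  refine ⟨fun i => (f %ₘ (X ^ p - C a)).coeff i, ?_⟩
  have hdeg : (f %ₘ (X ^ p - C a)).natDegree < p := by
    have h := natDegree_modByMonic_lt f (monic_X_pow_sub_C a hp₀) fun h => hp₀ <| by
      rw [← natDegree_X_pow_sub_C (n := p) (r := a), h, natDegree_one]
    rwa [natDegree_X_pow_sub_C] at h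
  change _ = aeval s f
  rw [← hf, aeval_eq_sum_range' hdeg, ← Fin.sum_univ_eq_sum_range
    fun i => (f %ₘ (X ^ p - C a)).coeff i • s ^ i]
  simp only [Algebra.smul_def]

lemma IsNormOrthogonal.closure {K : Type*} [NormedField K] {s : K} {S : Set K}
    (h : IsNormOrthogonal s S) : IsNormOrthogonal s (closure S) :=
  closure_minimal (t := {y | ‖s‖ ≤ ‖s - y‖}) h (isClosed_le (by fun_prop) (by fun_prop))

/-- The nonzero norms of elements of `K` are integral powers of a fixed number. -/
def HasDiscreteNorm (K : Type*) [NormedField K] : Prop :=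
  ∃ r : ℝ, 1 < r ∧ ∀ x : K, x ≠ 0 → ∃ n : ℤ, ‖x‖ = r ^ n

lemma HasDiscreteNorm.exists_forall_norm_sub_le {K : Type*} [NormedField K]
    (hK : HasDiscreteNorm K) {x : K} {S : Set K} (hS : S.Nonempty) {ε : ℝ} (hε : 0 < ε)
    (hx : ∀ y ∈ S, ε ≤ ‖x - y‖) : ∃ y ∈ S, ∀ z ∈ S, ‖x - y‖ ≤ ‖x - z‖ := by
  obtain ⟨r, hr, hrK⟩ := hK
  have hexp (y) (hy : y ∈ S) : ∃ n : ℤ, ‖x - y‖ = r ^ n :=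
    hrK _ (norm_pos_iff.1 (hε.trans_le (hx y hy)))
  obtain ⟨b, hb, -⟩ := exists_mem_Ico_zpow hε hr
  obtain ⟨n, ⟨y, hy, hn⟩, hmin⟩ := Int.exists_least_of_bdd (P := fun n => ∃ y ∈ S, ‖x - y‖ = r ^ n)
    ⟨b, fun n ⟨y, hy, hn⟩ => (zpow_le_zpow_iff_right₀ hr).1 (hb.trans ((hx y hy).trans_eq hn))⟩
    (hS.elim fun y hy => (hexp y hy).imp fun n hn => ⟨y, hy, hn⟩)
  refine ⟨y, hy, fun z hz => ?_⟩
  obtain ⟨m, hm⟩ := hexp z hz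
  rw [hn, hm, zpow_le_zpow_iff_right₀ hr]
  exact hmin m ⟨z, hz, hm⟩

variable {K : Type*} [NormedField K]

instance subfieldNormedAlgebra (E : Subfield K) : NormedAlgebra E K where
  norm_smul_le a x := (norm_mul (a : K) x).le

variable [Fact p.Prime] [CharP K p]

theorem exists_maximal_isNormOrthogonal {s : K}
    (hs : IsNormOrthogonal s (frobenius K p).fieldRange) :
    ∃ E : Subfield K, Maximal
      (fun E : Subfield K => (frobenius K p).fieldRange ≤ E ∧ IsNormOrthogonal s E) E := by
  let P : Set (Subfield K) := {E | (frobenius K p).fieldRange ≤ E ∧ IsNormOrthogonal s E}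
  refine (zorn_le_nonempty₀ P (fun c hc hchain E hE => ?_) _ ⟨le_rfl, hs⟩).imp fun _ h => h.2
  refine ⟨sSup c, ⟨(hc hE).1.trans (le_sSup hE), fun y hy => ?_⟩, fun _ => le_sSup⟩
  obtain ⟨F, hF, hyF⟩ := (Subfield.mem_sSup_of_directedOn ⟨E, hE⟩ hchain.directedOn).1 hy
  exact (hc hF).2 y hyF

variable [IsUltrametricDist K]

theorem IsNormOrthogonal.adjoin {E M : Subfield K} (hpE : (frobenius K p).fieldRange ≤ E)
    (hEM : E ≤ M) {s x : K} (hs : s ∈ M) (hsE : IsNormOrthogonal s E) (hx : x ∉ M)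
    (hxM : IsNormOrthogonal x M) : IsNormOrthogonal s E⟮x⟯.toSubfield := by
  have hp (F : Subfield K) (hF : E ≤ F) : x ^ p ∈ (algebraMap F K).range :=
    ⟨⟨x ^ p, hF (hpE ⟨x, rfl⟩)⟩, rfl⟩
  have hxM' : IsNormOrthogonal x (algebraMap M K).range := by
    rintro _ ⟨y, rfl⟩
    exact hxM y y.2
  intro z hz
  obtain ⟨c, rfl⟩ := exists_sum_mul_pow_eq_of_mem_adjoin (NeZero.ne p) (hp E le_rfl) hz
  let i₀ : Fin p := ⟨0, NeZero.pos p⟩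
  let d : Fin p → M := fun i => (if i = i₀ then ⟨s, hs⟩ else 0) - ⟨c i, hEM (c i).2⟩
  have hd (i : Fin p) : algebraMap M K (d i) * x ^ (i : ℕ) =
      (if i = i₀ then s * x ^ (i : ℕ) else 0) - algebraMap E K (c i) * x ^ (i : ℕ) := by
    simp only [d, map_sub, sub_mul, apply_ite (algebraMap M K), ite_mul, _root_.map_zero, zero_mul]
    rfl
  have h := norm_mul_pow_le_norm_sum (ne_of_mem_of_not_mem M.zero_mem hx).symm hxM' (hp M hEM) d i₀
  simp only [hd, Finset.sum_sub_distrib, Finset.sum_ite_eq', Finset.mem_univ, if_true] at h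
  simp only [i₀, pow_zero, mul_one] at h
  exact (hsE (c i₀) (c i₀).2).trans h

lemma isClosed_adjoin_simple {K : Type*} [NontriviallyNormedField K] [CompleteSpace K]
    [CharP K p] {E : Subfield K} (hE : IsClosed (E : Set K))
    (hpE : (frobenius K p).fieldRange ≤ E) (s : K) : IsClosed (E⟮s⟯ : Set K) := by
  let : NontriviallyNormedField E :=
    { (inferInstance : NormedField E) with
      non_trivial := by
        obtain ⟨y, hy⟩ := NormedField.exists_one_lt_norm K
        exact ⟨⟨y ^ p, hpE ⟨y, rfl⟩⟩,
          (one_lt_pow₀ hy (NeZero.ne p)).trans_eq (norm_pow y p).symm⟩ }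
  have : CompleteSpace E := hE.completeSpace_coe
  have hs : IsIntegral E (s ^ p) := isIntegral_algebraMap (x := (⟨s ^ p, hpE ⟨s, rfl⟩⟩ : E))
  have := adjoin.finiteDimensional (hs.of_pow (NeZero.pos p))
  exact Submodule.closed_of_finiteDimensional E⟮s⟯.toSubalgebra.toSubmodule

theorem exists_subfield_isNormOrthogonal {K : Type*} [NontriviallyNormedField K] [CompleteSpace K]
    [IsUltrametricDist K] [CharP K p] (hK : HasDiscreteNorm K) {s : K}
    (hs : IsNormOrthogonal s (frobenius K p).fieldRange) :
    ∃ E : Subfield K, (frobenius K p).fieldRange ≤ E ∧ IsNormOrthogonal s E ∧ E⟮s⟯ = ⊤ := by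
  obtain ⟨E, hE⟩ := exists_maximal_isNormOrthogonal hs
  obtain ⟨hpE, hsE⟩ := hE.prop
  refine ⟨E, hpE, hsE, top_unique fun x _ => by_contra fun hx => ?_⟩
  have hEclosed : IsClosed (E : Set K) := closure_subset_iff_isClosed.1 <|
    hE.le_of_ge (y := E.topologicalClosure)
      ⟨hpE.trans E.le_topologicalClosure, hsE.closure⟩ E.le_topologicalClosure
  let M : Subfield K := E⟮s⟯.toSubfield
  have hMclosed : IsClosed (M : Set K) := isClosed_adjoin_simple hEclosed hpE s
  have hEM : E ≤ M := fun y hy => E⟮s⟯.algebraMap_mem ⟨y, hy⟩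
  have hne : (M : Set K).Nonempty := ⟨0, M.zero_mem⟩
  -- Replacing `x` by its difference with a best approximation in `E(s)` enlarges `E` by `x`.
  obtain ⟨y, hy, hxy⟩ := hK.exists_forall_norm_sub_le hne
    ((hMclosed.notMem_iff_infDist_pos hne).1 hx) fun y hy => by
      rw [← dist_eq_norm]
      exact Metric.infDist_le_dist_of_mem hy
  have hx' : x - y ∉ M := fun h => hx (sub_add_cancel x y ▸ M.add_mem h hy)
  have hxM : IsNormOrthogonal (x - y) M := fun z hz => by
    rw [sub_sub]
    exact hxy _ (M.add_mem hy hz)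
  have hle : E ≤ E⟮x - y⟯.toSubfield := fun z hz => E⟮x - y⟯.algebraMap_mem ⟨z, hz⟩
  exact hx' <| hEM <| hE.le_of_ge ⟨hpE.trans hle,
    hsE.adjoin hpE hEM (mem_adjoin_simple_self E s) hx' hxM⟩ hle (mem_adjoin_simple_self E _)

end Hyperplane

section ToralDerivation

open Polynomial IntermediateField

variable {p : ℕ} [Fact p.Prime]

theorem exists_derivation_eq_self {E K : Type*} [Field E] [Field K] [Algebra E K] [CharP K p]
    {s : K} (hp : s ^ p ∈ (algebraMap E K).range) (hs : s ∉ (algebraMap E K).range)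
    (htop : E⟮s⟯ = ⊤) : ∃ D : Derivation E K K, D s = s := by
  obtain ⟨a, ha⟩ := hp
  have hmin := minpoly_eq_X_pow_sub_C ha hs
  have hint : IsIntegral E s := (ha ▸ isIntegral_algebraMap).of_pow (NeZero.pos p)
  have hsurj : Function.Surjective (aeval (R := E) s) := by
    rw [← AlgHom.range_eq_top, ← Algebra.adjoin_singleton_eq_range_aeval,
      ← adjoin_simple_toSubalgebra_of_isAlgebraic hint.isAlgebraic, htop, top_toSubalgebra]
  have hker (f : E[X]) (hf : aeval s f = 0) : aeval s (mkDerivation E (X : E[X]) f) = 0 := by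
    obtain ⟨g, rfl⟩ := minpoly.dvd E s hf
    rw [Derivation.leibniz, _root_.map_add, smul_eq_mul, smul_eq_mul, _root_.map_mul,
      _root_.map_mul, minpoly.aeval, zero_mul, zero_add, hmin]
    simp [mkDerivation_apply, derivative_X_pow]
  refine ⟨Derivation.liftOfSurjective hsurj hker, ?_⟩
  simpa only [aeval_X, mkDerivation_X] using Derivation.liftOfSurjective_apply hsurj hker X

theorem exists_isToral_derivation {K : Type*} [NontriviallyNormedField K] [CompleteSpace K]
    [IsUltrametricDist K] [CharP K p] (hK : HasDiscreteNorm K) {s : K} (hs : s ≠ 0)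
    (hsK : IsNormOrthogonal s (frobenius K p).fieldRange) :
    ∃ D : Derivation ℤ K K, D s = s ∧ IsToral D ∧ ∀ x, ‖D x‖ ≤ ‖x‖ := by
  obtain ⟨E, hpE, hsE, htop⟩ := exists_subfield_isNormOrthogonal hK hsK
  have hp : s ^ p ∈ (algebraMap E K).range := ⟨⟨s ^ p, hpE ⟨s, rfl⟩⟩, rfl⟩
  have hsE' : IsNormOrthogonal s (algebraMap E K).range := by
    rintro _ ⟨y, rfl⟩
    exact hsE y y.2
  have hsmem : s ∉ (algebraMap E K).range := fun h =>
    hs <| norm_le_zero_iff.1 <| by simpa using hsE' s h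
  obtain ⟨D, hD⟩ := exists_derivation_eq_self hp hsmem htop
  have hterm (a : E) (i : ℕ) : D (algebraMap E K a * s ^ i) = i * (algebraMap E K a * s ^ i) := by
    cases i with
    | zero => simp
    | succ i =>
      simp [Derivation.leibniz, Derivation.leibniz_pow, hD]
      ring
  have hexp (x : K) : ∃ c : Fin p → E, ∑ i, algebraMap E K (c i) * s ^ (i : ℕ) = x :=
    exists_sum_mul_pow_eq_of_mem_adjoin (NeZero.ne p) hp (htop ▸ mem_top)
  refine ⟨D.restrictScalars ℤ, hD, top_unique fun x _ => ?_, fun x => ?_⟩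
  all_goals obtain ⟨c, rfl⟩ := hexp x
  · exact sum_mem fun i _ => AddSubmonoid.subset_closure ⟨i, hterm (c i) i⟩
  · rw [Derivation.restrictScalars_apply, map_sum]
    refine IsUltrametricDist.norm_sum_le_of_forall_le_of_nonneg (norm_nonneg _) fun i _ => ?_
    rw [hterm, norm_mul]
    exact (mul_le_of_le_one_left (norm_nonneg _) (IsUltrametricDist.norm_natCast_le_one K i)).trans
      (norm_mul_pow_le_norm_sum hs hsE' hp c i)

end ToralDerivation

section NormEstimates

lemma le_one_of_pow_le_succ {p : ℕ} (hp : 1 < p) {u : ℕ → ℝ} {B : ℝ}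
    (hu : ∀ n, u n ^ p ≤ u (n + 1)) (hB : ∀ n, u n ≤ B) (n : ℕ) : u n ≤ 1 := by
  by_contra! hn
  have hpow (k : ℕ) : u n ^ p ^ k ≤ u (n + k) := by
    induction k with
    | zero => simp
    | succ k ih =>
      rw [pow_succ, pow_mul]
      exact (pow_le_pow_left₀ (by positivity) ih p).trans (hu _)
  obtain ⟨k, hk⟩ := pow_unbounded_of_one_lt B hn
  have : u n ^ k ≤ u n ^ p ^ k := pow_le_pow_right₀ hn.le (Nat.lt_pow_self hp).le
  exact (hk.trans_le (this.trans (hpow k))).not_ge (hB _)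

lemma norm_cartier_le {K : Type*} [NormedField K] [IsUltrametricDist K] {D : Derivation ℤ K K}
    (hD : ∀ x, ‖D x‖ ≤ ‖x‖) (p : ℕ) (x : K) : ‖cartier p D x‖ ≤ ‖x‖ := by
  have hpow (k : ℕ) : ‖((D : Module.End ℤ K) ^ k) x‖ ≤ ‖x‖ := by
    induction k with
    | zero => rfl
    | succ k ih =>
      rw [pow_succ', Module.End.mul_apply]
      exact (hD _).trans ih
  rw [cartier, LinearMap.sub_apply, Module.End.one_apply, sub_eq_add_neg]
  exact (IsUltrametricDist.norm_add_le_max _ _).trans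
    (max_le le_rfl ((norm_neg _).trans_le (hpow _)))

lemma norm_frobeniusDifferential_le {L : Type*} [NormedField L] [IsUltrametricDist L]
    {D : Derivation ℤ L L} {B : ℝ} (hB : ∀ x, ‖x‖ ≤ 1 → ‖D x‖ ≤ B) {p : ℕ} (n : ℕ)
    {x : WittVector p L} (hx : ∀ i, ‖x.coeff i‖ ≤ 1) : ‖frobeniusDifferential D n x‖ ≤ B := by
  refine IsUltrametricDist.norm_sum_le_of_forall_le_of_nonneg
    ((norm_nonneg _).trans (hB 0 (by simp))) fun i _ => ?_
  rw [norm_mul, norm_pow]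
  exact (mul_le_of_le_one_left (norm_nonneg _) (pow_le_one₀ (norm_nonneg _) (hx i))).trans
    (hB _ (hx i))

variable {K L : Type*} [NontriviallyNormedField K] [CompleteSpace K] [NormedField L]
  [NormedAlgebra K L] [FiniteDimensional K L]

theorem exists_norm_derivation_le {D : Derivation ℤ K K} {D' : Derivation ℤ L L}
    (hD : ∀ x, ‖D x‖ ≤ ‖x‖) (hD' : ∀ x : K, D' (algebraMap K L x) = algebraMap K L (D x)) :
    ∃ B, ∀ y, ‖D' y‖ ≤ B * ‖y‖ := by
  let b := Module.finBasis K L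
  let c (i) : L →L[K] K := (b.coord i).toContinuousLinearMap
  refine ⟨∑ i, ‖c i‖ * (‖b i‖ + ‖D' (b i)‖), fun y => ?_⟩
  have hy : D' y = ∑ i, (algebraMap K L (c i y) * D' (b i) + b i * algebraMap K L (D (c i y))) := by
    conv_lhs => rw [← b.sum_repr y]
    simp only [map_sum, Algebra.smul_def, Derivation.leibniz, hD']
    rfl
  rw [hy, Finset.sum_mul]
  refine (norm_sum_le _ _).trans (Finset.sum_le_sum fun i _ => (norm_add_le _ _).trans ?_)
  rw [norm_mul, norm_mul, norm_algebraMap', norm_algebraMap']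
  calc ‖c i y‖ * ‖D' (b i)‖ + ‖b i‖ * ‖D (c i y)‖
      ≤ ‖c i y‖ * ‖D' (b i)‖ + ‖b i‖ * ‖c i y‖ := by gcongr; exact hD _
    _ = ‖c i y‖ * (‖b i‖ + ‖D' (b i)‖) := by ring
    _ ≤ ‖c i‖ * ‖y‖ * (‖b i‖ + ‖D' (b i)‖) := by gcongr; exact (c i).le_opNorm y
    _ = ‖c i‖ * (‖b i‖ + ‖D' (b i)‖) * ‖y‖ := by ring

variable [Algebra.IsSeparable K L] [IsUltrametricDist K] [IsUltrametricDist L]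
  {p : ℕ} [Fact p.Prime] [CharP K p] [CharP L p] {O : Subring L}

/- The `frobeniusDifferential`s of `a` are bounded because they only depend on the integral
component of `a`, while by `cartier_frobeniusDifferential` the norm of the `n`-th one is at least
`‖D (a.coeff 0)‖ ^ p ^ n`. -/
theorem norm_derivation_coeff_zero_le_one (hO : ∀ x, x ∈ O ↔ ‖x‖ ≤ 1)
    {D : Derivation ℤ K K} (hD : IsToral D) (hDle : ∀ x, ‖D x‖ ≤ ‖x‖) {a : WittVector p K}
    (ha : WittVector.map (algebraMap K L) a ∈ wittSum p (frobenius L p).range O) :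
    ‖D (a.coeff 0)‖ ≤ 1 := by
  obtain ⟨D', hD'⟩ := exists_derivation_algebraMap (L := L) D
  obtain ⟨B, hB⟩ := exists_norm_derivation_le hDle hD'
  obtain ⟨x, hx, o, ho, hxo⟩ := mem_wittSum.1 ha
  rw [RingHom.range_eq_map, mem_wittSubring_map_frobenius] at hx
  obtain ⟨y, -, rfl⟩ := hx
  have hGo (n : ℕ) :
      algebraMap K L (frobeniusDifferential D n a) = frobeniusDifferential D' n o := by
    rw [← frobeniusDifferential_map hD', ← hxo, frobeniusDifferential_add,
      frobeniusDifferential_frobenius, zero_add]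
  have hDB (z : L) (hz : ‖z‖ ≤ 1) : ‖D' z‖ ≤ |B| :=
    (hB z).trans <| (mul_le_mul_of_nonneg_right (le_abs_self B) (norm_nonneg z)).trans <|
      mul_le_of_le_one_right (abs_nonneg B) hz
  have hbound (n : ℕ) : ‖frobeniusDifferential D n a‖ ≤ |B| := by
    rw [← norm_algebraMap' L, hGo]
    exact norm_frobeniusDifferential_le hDB n fun i => (hO _).1 (mem_wittSubring.1 ho i)
  have hgrowth (n : ℕ) :
      ‖frobeniusDifferential D n a‖ ^ p ≤ ‖frobeniusDifferential D (n + 1) a‖ := by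
    rw [← norm_pow, ← cartier_frobeniusDifferential hD]
    exact norm_cartier_le hDle p _
  rw [← frobeniusDifferential_zero]
  exact le_one_of_pow_le_succ (Fact.out : p.Prime).one_lt hgrowth hbound 0

theorem exists_norm_coeff_zero_sub_pow_le_one (hO : ∀ x, x ∈ O ↔ ‖x‖ ≤ 1)
    (hK : HasDiscreteNorm K) {a : WittVector p K}
    (ha : WittVector.map (algebraMap K L) a ∈ wittSum p (frobenius L p).range O) :
    ∃ y, ‖a.coeff 0 - y ^ p‖ ≤ 1 := by
  by_contra! hlt
  obtain ⟨_, ⟨y, rfl⟩, hy⟩ := hK.exists_forall_norm_sub_le (x := a.coeff 0)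
    (S := (frobenius K p).fieldRange) ⟨0, zero_mem _⟩ one_pos <| by
      rintro _ ⟨y, rfl⟩
      exact (hlt y).le
  have hs : 1 < ‖a.coeff 0 - frobenius K p y‖ := hlt y
  obtain ⟨D, hDs, hD, hDle⟩ := exists_isToral_derivation hK (norm_pos_iff.1 (one_pos.trans hs))
    fun z hz => by
      rw [sub_sub]
      exact hy _ (add_mem ⟨y, rfl⟩ hz)
  rw [map_sub, frobenius_def, derivation_pow_char, sub_zero] at hDs
  exact (hDs ▸ hs).not_ge (norm_derivation_coeff_zero_le_one hO hD hDle ha)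

theorem mem_wittSum_range_of_natCast_mul_mem (hO : ∀ x, x ∈ O ↔ ‖x‖ ≤ 1)
    (hK : HasDiscreteNorm K) {n : ℕ} (hn : n ≠ 0)
    {x : WittVector p L} (hx : (n : WittVector p L) * x ∈ wittSum p (algebraMap K L).range O) :
    x ∈ wittSum p (algebraMap K L).range O := by
  refine mem_wittSum_of_natCast_mul_mem (fun x => mem_wittSum_of_frobenius_mem
    (fun x hx => ?_) fun x hx hxO => ?_) hn hx
  · rw [hO, norm_pow] at hx
    exact (hO x).2 ((pow_le_one_iff_of_nonneg (norm_nonneg x) (NeZero.ne p)).1 hx)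
  · obtain ⟨a, rfl⟩ : ∃ a, WittVector.map (algebraMap K L) a = x := by
      choose a ha using mem_wittSubring.1 hx
      exact ⟨WittVector.mk p a, by ext i; simpa [WittVector.map_coeff] using ha i⟩
    obtain ⟨y, hy⟩ := exists_norm_coeff_zero_sub_pow_le_one hO hK hxO
    refine ⟨_, ⟨algebraMap K L y, ⟨y, rfl⟩, rfl⟩, algebraMap K L (a.coeff 0 - y ^ p),
      ⟨⟨_, rfl⟩, (hO _).2 ?_⟩, ?_⟩
    · rwa [norm_algebraMap']
    · simp [frobenius_def, WittVector.map_coeff]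

end NormEstimates

section Cocycle

/-- `c` is a `1`-cocycle for the action of `G` on `M` through the maps `φ σ`. In contrast to
`groupCohomology.IsCocycle₁`, the action is an explicit argument rather than an instance. -/
def IsOneCocycle {G M : Type*} [Mul G] [Add M] (φ : G → M → M) (c : G → M) : Prop :=
  ∀ σ τ, c (σ * τ) = c σ + φ σ (c τ)

/-- `c` is a `1`-coboundary for the action of `G` on `M` through the maps `φ σ`; see
`IsOneCocycle`. -/
def IsOneCoboundary {G M : Type*} [Sub M] (φ : G → M → M) (c : G → M) : Prop :=
  ∃ b, ∀ σ, c σ = φ σ b - b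

variable {G : Type*} [Group G] {R : Type*} [CommRing R]

theorem IsOneCocycle.isOneCoboundary_of_isUnit_sum [Fintype G] {φ : G →* (R →+* R)} {u : R}
    (hu : IsUnit (∑ σ, φ σ u)) {c : G → R} (hc : IsOneCocycle (fun σ => φ σ) c) :
    IsOneCoboundary (fun σ => φ σ) c := by
  have hmul (σ τ : G) (x : R) : φ σ (φ τ x) = φ (σ * τ) x := by rw [_root_.map_mul]; rfl
  have htrace (τ : G) : φ τ (∑ σ, φ σ u) = ∑ σ, φ σ u := by
    simp only [map_sum, hmul]
    exact Fintype.sum_equiv (Equiv.mulLeft τ) _ _ fun _ => rfl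
  obtain ⟨v, hv⟩ := hu.exists_right_inv
  have hvfix (τ : G) : φ τ v = v := by
    refine hu.mul_left_cancel ?_
    conv_lhs => rw [← htrace τ]
    rw [← _root_.map_mul, hv, _root_.map_one]
  refine ⟨-(∑ σ, c σ * φ σ u) * v, fun τ => ?_⟩
  have hsum : φ τ (∑ σ, c σ * φ σ u) = ∑ σ, c σ * φ σ u - c τ * ∑ σ, φ σ u := by
    rw [Finset.mul_sum, ← Finset.sum_sub_distrib, map_sum]
    refine Fintype.sum_equiv (Equiv.mulLeft τ) _ _ fun σ => ?_
    rw [RingHom.map_mul, hmul, Equiv.coe_mulLeft, hc τ σ]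
    ring
  beta_reduce
  rw [_root_.map_mul, map_neg, hvfix, hsum]
  linear_combination (-c τ) * hv

lemma IsOneCocycle.add_coboundary {M : Type*} [AddCommGroup M] {φ : G →* AddMonoid.End M}
    {c : G → M} (hc : IsOneCocycle (fun σ => φ σ) c) (b : M) :
    IsOneCocycle (fun σ => φ σ) fun σ => c σ + (φ σ b - b) := fun σ τ => by
  have hmul : φ (σ * τ) b = φ σ (φ τ b) := by rw [_root_.map_mul]; rfl
  simp only [hc σ τ, hmul, _root_.map_add, map_sub]
  abel

end Cocycle

section WittAction

variable {p : ℕ} [Fact p.Prime] {R S : Type*} [CommRing R] [CommRing S]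

lemma truncatedMap_truncate (n : ℕ) (f : R →+* S) (x : WittVector p R) :
    TruncatedWittVector.map f (WittVector.truncate n x) =
      WittVector.truncate n (WittVector.map f x) := by
  ext i
  simp [WittVector.map_coeff]

lemma truncatedMap_truncatedTruncate {m n : ℕ} (h : n ≤ m) (f : R →+* S)
    (x : TruncatedWittVector p m R) :
    TruncatedWittVector.map f (TruncatedWittVector.truncate h x) =
      TruncatedWittVector.truncate h (TruncatedWittVector.map f x) := by
  ext i
  simp

lemma exists_forall_truncate_eq {x : ∀ n, TruncatedWittVector p n R}
    (hx : ∀ n, TruncatedWittVector.truncate n.le_succ (x (n + 1)) = x n) :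
    ∃ y : WittVector p R, ∀ n, WittVector.truncate n y = x n := by
  have hle {m n : ℕ} (h : n ≤ m) : TruncatedWittVector.truncate h (x m) = x n := by
    induction m, h using Nat.le_induction with
    | base => ext i; simp
    | succ m h ih => rw [← ih, ← hx m, TruncatedWittVector.truncate_truncate]
  refine ⟨WittVector.mk p fun i => (x (i + 1)).coeff (Fin.last i), fun n => ?_⟩
  ext i
  rw [WittVector.coeff_truncate, WittVector.coeff_mk, ← hle (Nat.succ_le_of_lt i.2),
    TruncatedWittVector.coeff_truncate]
  rfl

lemma eq_of_forall_truncate_eq {x y : WittVector p R}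
    (h : ∀ n, WittVector.truncate n x = WittVector.truncate n y) : x = y := by
  ext i
  simpa using congrArg (TruncatedWittVector.coeff (Fin.last i)) (h (i + 1))

variable {G : Type*} [Group G]

/-- The action of `G` on `W(R)` induced by an action of `G` on `R`. -/
def wittAction (p : ℕ) [Fact p.Prime] (φ : G →* (R →+* R)) :
    G →* (WittVector p R →+* WittVector p R) where
  toFun σ := WittVector.map (φ σ)
  map_one' := by ext; simp [WittVector.map_coeff]
  map_mul' σ τ := by ext; simp [WittVector.map_coeff]

@[simp]
lemma wittAction_coeff (φ : G →* (R →+* R)) (σ : G) (x : WittVector p R) (i : ℕ) :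
    (wittAction p φ σ x).coeff i = φ σ (x.coeff i) :=
  WittVector.map_coeff ..

/-- The action of `G` on `W_n(R)` induced by an action of `G` on `R`. -/
def truncatedWittAction (p : ℕ) [Fact p.Prime] (n : ℕ) (φ : G →* (R →+* R)) :
    G →* AddMonoid.End (TruncatedWittVector p n R) where
  toFun σ := (TruncatedWittVector.map (φ σ)).toAddMonoidHom
  map_one' := by
    ext x i
    rw [_root_.map_one]
    exact TruncatedWittVector.map_coeff _ x i
  map_mul' σ τ := by
    ext x i
    rw [_root_.map_mul]
    change (TruncatedWittVector.map _ x).coeff i =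
      (TruncatedWittVector.map (φ σ) (TruncatedWittVector.map (φ τ) x)).coeff i
    simp

theorem isOneCoboundary_of_truncate_isOneCoboundary {φ : G →* (R →+* R)}
    (hφ : ∀ c, IsOneCocycle (fun σ => wittAction p φ σ) c →
      IsOneCoboundary (fun σ => wittAction p φ σ) c)
    {c : ∀ n, G → TruncatedWittVector p n R}
    (hc : ∀ n, IsOneCocycle (fun σ => TruncatedWittVector.map (φ σ)) (c n))
    (hcomp : ∀ n, IsOneCoboundary (fun σ => TruncatedWittVector.map (φ σ))
      fun σ => TruncatedWittVector.truncate n.le_succ (c (n + 1) σ) - c n σ) (n : ℕ) :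
    IsOneCoboundary (fun σ => TruncatedWittVector.map (φ σ)) (c n) := by
  choose b hb using hcomp
  choose lift hlift using fun n =>
    TruncatedWittVector.truncate_surjective (p := p) (R := R) (Nat.le_succ n)
  let ε (n : ℕ) : TruncatedWittVector p n R := Nat.rec 0 (fun m x => lift m (x - b m)) n
  have hε (n : ℕ) : TruncatedWittVector.truncate n.le_succ (ε (n + 1)) = ε n - b n := hlift n _
  let c' (n : ℕ) (σ : G) := c n σ + (TruncatedWittVector.map (φ σ) (ε n) - ε n)
  have hc' (n : ℕ) (σ : G) : TruncatedWittVector.truncate n.le_succ (c' (n + 1) σ) = c' n σ := by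
    simp only [c', _root_.map_add, map_sub, ← truncatedMap_truncatedTruncate, hε]
    linear_combination hb n σ
  choose C hC using fun σ => exists_forall_truncate_eq (x := fun n => c' n σ) fun n => hc' n σ
  obtain ⟨B, hB⟩ := hφ C fun σ τ => eq_of_forall_truncate_eq fun n => by
    rw [_root_.map_add, hC, hC]
    refine ((hc n).add_coboundary (φ := truncatedWittAction p n φ) (ε n) σ τ).trans ?_
    refine congrArg (c' n σ + ·) ((congrArg _ (hC τ n).symm).trans ?_)
    exact truncatedMap_truncate n (φ σ) (C τ)
  refine ⟨WittVector.truncate n B - ε n, fun σ => ?_⟩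
  have h : c' n σ = _ := (hC σ n).symm.trans (congrArg (WittVector.truncate n) (hB σ))
  have hmap := truncatedMap_truncate n (φ σ) B
  simp only [c', wittAction, map_sub] at h hmap ⊢
  linear_combination h - hmap

end WittAction

section Galois

variable {p : ℕ} [Fact p.Prime] {K L : Type*} [Field K] [Field L] [Algebra K L]

/-- The action of the Galois group of `L/K` on `L` by ring homomorphisms. -/
def galoisAction (K L : Type*) [Field K] [Field L] [Algebra K L] : (L ≃ₐ[K] L) →* (L →+* L) where
  toFun σ := σ
  map_one' := rfl
  map_mul' _ _ := rfl

@[simp]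
lemma galoisAction_apply (σ : L ≃ₐ[K] L) (x : L) : galoisAction K L σ x = σ x := rfl

lemma exists_isUnit_sum_wittAction [FiniteDimensional K L] [IsGalois K L] [CharP L p] :
    ∃ u : WittVector p L, IsUnit (∑ σ, wittAction p (galoisAction K L) σ u) := by
  obtain ⟨a, ha⟩ := Algebra.trace_surjective K L 1
  refine ⟨WittVector.teichmuller p a, WittVector.isUnit_of_coeff_zero_ne_zero _ ?_⟩
  have hcoeff : (∑ σ, wittAction p (galoisAction K L) σ (WittVector.teichmuller p a)).coeff 0 =
      ∑ σ : L ≃ₐ[K] L, σ a := by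
    rw [← WittVector.constantCoeff_apply, map_sum]
    simp
  rw [hcoeff, ← trace_eq_sum_automorphisms, ha, _root_.map_one]
  exact one_ne_zero

lemma mem_wittSubring_range_of_forall_wittAction_eq [FiniteDimensional K L] [IsGalois K L]
    {x : WittVector p L} (hx : ∀ σ, wittAction p (galoisAction K L) σ x = x) :
    x ∈ wittSubring p (algebraMap K L).range :=
  mem_wittSubring.2 fun i => (IsGalois.mem_range_algebraMap_iff_fixed _).2 fun σ => by
    rw [← galoisAction_apply, ← wittAction_coeff, hx σ]

lemma wittAction_eq_self_of_mem_wittSubring_range {x : WittVector p L}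
    (hx : x ∈ wittSubring p (algebraMap K L).range) (σ : L ≃ₐ[K] L) :
    wittAction p (galoisAction K L) σ x = x := by
  ext i
  obtain ⟨a, ha⟩ := mem_wittSubring.1 hx i
  rw [wittAction_coeff, ← ha]
  exact σ.commutes a

end Galois

section GaloisCohomology

variable {p : ℕ} [Fact p.Prime] {K L : Type*} [NontriviallyNormedField K] [CompleteSpace K]
  [NormedField L] [NormedAlgebra K L] [FiniteDimensional K L] [IsGalois K L]
  [IsUltrametricDist K] [IsUltrametricDist L] [CharP K p] [CharP L p] {O : Subring L}

theorem isOneCoboundary_wittAction_of_isOneCocycle (hO : ∀ x, x ∈ O ↔ ‖x‖ ≤ 1)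
    (hK : HasDiscreteNorm K) {ψ : (L ≃ₐ[K] L) →* (O →+* O)} (hψ : ∀ σ (x : O), (ψ σ x : L) = σ x)
    {c : (L ≃ₐ[K] L) → WittVector p O} (hc : IsOneCocycle (fun σ => wittAction p ψ σ) c) :
    IsOneCoboundary (fun σ => wittAction p ψ σ) c := by
  let ι : WittVector p O →+* WittVector p L := WittVector.map O.subtype
  let Φ := wittAction p (galoisAction K L)
  have hι (σ) (x) : ι (wittAction p ψ σ x) = Φ σ (ι x) := by
    ext i
    simp [ι, Φ, WittVector.map_coeff, hψ]
  obtain ⟨u, hu⟩ := exists_isUnit_sum_wittAction (p := p) (K := K) (L := L)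
  obtain ⟨β, hβ⟩ := IsOneCocycle.isOneCoboundary_of_isUnit_sum hu (c := fun σ => ι (c σ))
    fun σ τ => by simp only [hc σ τ, _root_.map_add, hι, Φ]
  have hsum : (Fintype.card (L ≃ₐ[K] L) : WittVector p L) * β =
      ∑ σ, Φ σ β + ι (-∑ σ, c σ) := by
    simp [map_sum, hβ, Φ, Finset.sum_sub_distrib]
  have hfix : ∑ σ, Φ σ β ∈ wittSubring p (algebraMap K L).range := by
    refine mem_wittSubring_range_of_forall_wittAction_eq fun τ => ?_
    rw [map_sum]
    refine Fintype.sum_equiv (Equiv.mulLeft τ) _ _ fun σ => ?_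
    rw [Equiv.coe_mulLeft, _root_.map_mul]
    rfl
  obtain ⟨a, ha, _, ⟨b, rfl⟩, hab⟩ := mem_wittSum.1 <| mem_wittSum_range_of_natCast_mul_mem hO hK
    Fintype.card_ne_zero (mem_wittSum.2 ⟨_, hfix, _, ⟨_, rfl⟩, hsum.symm⟩)
  refine ⟨b, fun σ => WittVector.map_injective _ O.subtype_injective ((hβ σ).trans ?_)⟩
  change Φ σ β - β = ι (wittAction p ψ σ b - b)
  rw [← hab, _root_.map_add, wittAction_eq_self_of_mem_wittSubring_range ha, map_sub, hι]
  exact add_sub_add_left_eq_sub ..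

end GaloisCohomology

section ExpNeg

/-- The decreasing map `n ↦ r⁻ⁿ`, `⊤ ↦ 0`, which turns an additive valuation into an absolute
value when `1 < r`. -/
def expNeg (r : ℝ) (n : WithTop ℤ) : ℝ :=
  n.recTopCoe 0 fun n => r ^ (-n)

variable {r : ℝ}

@[simp] lemma expNeg_top : expNeg r ⊤ = 0 := rfl

@[simp] lemma expNeg_coe (n : ℤ) : expNeg r n = r ^ (-n) := rfl

lemma expNeg_add (hr : r ≠ 0) (m n : WithTop ℤ) : expNeg r (m + n) = expNeg r m * expNeg r n := by
  induction m <;> induction n <;> simp [← WithTop.coe_add, zpow_add₀ hr, mul_comm]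

lemma expNeg_nsmul {e : ℕ} (he : e ≠ 0) (n : WithTop ℤ) : expNeg r (e • n) = expNeg (r ^ e) n := by
  induction n with
  | top =>
    obtain ⟨e, rfl⟩ := Nat.exists_eq_succ_of_ne_zero he
    simp [succ_nsmul]
  | coe n => rw [← WithTop.coe_nsmul, expNeg_coe, expNeg_coe, nsmul_eq_mul, ← mul_neg, zpow_mul,
      zpow_natCast]

lemma expNeg_eq_zero (hr : r ≠ 0) {n : WithTop ℤ} : expNeg r n = 0 ↔ n = ⊤ := by
  induction n <;> simp [zpow_ne_zero, hr]

lemma expNeg_le_expNeg (hr : 1 < r) {m n : WithTop ℤ} : expNeg r m ≤ expNeg r n ↔ n ≤ m := by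
  have hpos (k : ℤ) : 0 < r ^ (-k) := zpow_pos (one_pos.trans hr) _
  induction m with
  | top => induction n <;> simp [zpow_nonneg (one_pos.trans hr).le]
  | coe m =>
    induction n with
    | top => simpa using hpos m
    | coe n => rw [expNeg_coe, expNeg_coe, zpow_le_zpow_iff_right₀ hr, neg_le_neg_iff,
        WithTop.coe_le_coe]

end ExpNeg

namespace CompleteDiscreteValuation

variable {K L : Type*} [Field K] [Field L] {r : ℝ}

lemma expNeg_v_add_le_max (w : CompleteDiscreteValuation K) (hr : 1 < r) (x y : K) :
    expNeg r (w.v (x + y)) ≤ max (expNeg r (w.v x)) (expNeg r (w.v y)) := by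
  rw [le_max_iff, expNeg_le_expNeg hr, expNeg_le_expNeg hr, ← min_le_iff]
  exact w.min_le_add x y

/-- The absolute value `x ↦ r ^ (-v x)` attached to a discrete valuation `v` and a base `r`. -/
def absoluteValue (w : CompleteDiscreteValuation K) (hr : 1 < r) : AbsoluteValue K ℝ where
  toFun x := expNeg r (w.v x)
  map_mul' x y := by rw [w.map_mul, expNeg_add (one_pos.trans hr).ne']
  nonneg' _ := (expNeg_le_expNeg hr).2 le_top
  eq_zero' x := (expNeg_eq_zero (one_pos.trans hr).ne').trans (w.eq_top_iff x)
  add_le' x y := (w.expNeg_v_add_le_max hr x y).trans <|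
    max_le_add_of_nonneg ((expNeg_le_expNeg hr).2 le_top) ((expNeg_le_expNeg hr).2 le_top)

/-- The norm `‖x‖ = r ^ (-v x)` on a field with a discrete valuation `v`. The base `r` is left free
so that the norms on two fields can be made compatible with an extension of ramification index
`e`, by the choice of the bases `r ^ e` and `r`. -/
abbrev normedField (w : CompleteDiscreteValuation K) (hr : 1 < r) : NontriviallyNormedField K where
  toNormedField := (w.absoluteValue hr).toNormedField
  non_trivial := by
    obtain ⟨x, hx⟩ := w.surjective (-1)
    refine ⟨x, ?_⟩
    change 1 < expNeg r (w.v x)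
    rwa [hx, expNeg_coe, neg_neg, zpow_one]

lemma isUltrametricDist (w : CompleteDiscreteValuation K) (hr : 1 < r) :
    letI := w.normedField hr
    IsUltrametricDist K :=
  letI := w.normedField hr
  IsUltrametricDist.isUltrametricDist_of_forall_norm_add_le_max_norm (w.expNeg_v_add_le_max hr)

lemma hasDiscreteNorm (w : CompleteDiscreteValuation K) (hr : 1 < r) :
    letI := w.normedField hr
    HasDiscreteNorm K := by
  refine ⟨r, hr, fun x hx => ?_⟩
  obtain ⟨n, hn⟩ := WithTop.ne_top_iff_exists.1 (mt (w.eq_top_iff x).1 hx)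
  refine ⟨-n, ?_⟩
  change expNeg r (w.v x) = _
  rw [← hn, expNeg_coe]

lemma mem_integers_iff_norm_le_one (w : CompleteDiscreteValuation K) (hr : 1 < r) (x : K) :
    letI := w.normedField hr
    x ∈ w.integers ↔ ‖x‖ ≤ 1 := by
  change 0 ≤ w.v x ↔ expNeg r (w.v x) ≤ 1
  rw [← expNeg_le_expNeg hr, ← WithTop.coe_zero, expNeg_coe, neg_zero, zpow_zero]

lemma completeSpace (w : CompleteDiscreteValuation K) (hr : 1 < r) :
    letI := w.normedField hr
    CompleteSpace K := by
  let := w.normedField hr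
  have hle (n : ℕ) (x : K) : ‖x‖ ≤ r⁻¹ ^ n ↔ ((n : ℤ) : WithTop ℤ) ≤ w.v x := by
    rw [← expNeg_le_expNeg hr, expNeg_coe, zpow_neg, zpow_natCast, inv_pow]
    rfl
  refine Metric.complete_of_convergent_controlled_sequences (fun n => r⁻¹ ^ n)
    (fun n => by positivity) fun u hu => ?_
  obtain ⟨y, hy⟩ := w.complete u fun n =>
    (hle n _).1 (dist_eq_norm (u (n + 1)) _ ▸ (hu n _ _ n.le_succ le_rfl).le)
  refine ⟨y, tendsto_iff_dist_tendsto_zero.2 (squeeze_zero (fun _ => dist_nonneg) (fun n => ?_)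
    (tendsto_pow_atTop_nhds_zero_of_lt_one (by positivity) (inv_lt_one_of_one_lt₀ hr)))⟩
  rw [dist_comm, dist_eq_norm]
  exact (hle n _).2 (hy n)

lemma norm_algebraMap_eq [Algebra K L] (wK : CompleteDiscreteValuation K)
    (wL : CompleteDiscreteValuation L) {e : ℕ} (he : 0 < e)
    (hcomp : ∀ x, wL.v (algebraMap K L x) = e • wK.v x) (hr : 1 < r) (x : K) :
    letI := wK.normedField (one_lt_pow₀ hr he.ne')
    letI := wL.normedField hr
    ‖algebraMap K L x‖ = ‖x‖ := by
  change expNeg r (wL.v _) = expNeg (r ^ e) (wK.v x)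
  rw [hcomp, expNeg_nsmul he.ne']

end CompleteDiscreteValuation

theorem hesselholt_equicharacteristic_inverse_limit_vanishing_general
    (p : ℕ) [Fact p.Prime]
    {K L : Type*} [Field K] [Field L] [Algebra K L] [CharP K p]
    (wK : CompleteDiscreteValuation K) (wL : CompleteDiscreteValuation L)
    [IsGalois K L] [FiniteDimensional K L]
    (e : ℕ) (he : 0 < e)
    (hcomp : ∀ x : K, wL.v (algebraMap K L x) = e • wK.v x)
    (hGal : ∀ (σ : L ≃ₐ[K] L) (x : L), wL.v (σ x) = wL.v x)
    (c : (n : ℕ) → (L ≃ₐ[K] L) → TruncatedWittVector p n wL.integers)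
    (hc : ∀ n, IsOneCocycle (fun σ => TruncatedWittVector.map (wL.galRes hGal σ)) (c n))
    (hcohom : ∀ n, IsOneCoboundary (fun σ => TruncatedWittVector.map (wL.galRes hGal σ))
      fun σ => TruncatedWittVector.truncate (Nat.le_succ n) (c (n + 1) σ) - c n σ)
    (n : ℕ) :
    IsOneCoboundary (fun σ => TruncatedWittVector.map (wL.galRes hGal σ)) (c n) := by
  have hr : (1 : ℝ) < 2 := one_lt_two
  let := wK.normedField (one_lt_pow₀ hr he.ne')
  let := wL.normedField hr
  let : NormedAlgebra K L :=
    { norm_smul_le a x := by rw [Algebra.smul_def, norm_mul, norm_algebraMap_eq wK wL he hcomp] }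
  have := wK.completeSpace (one_lt_pow₀ hr he.ne')
  have := wK.isUltrametricDist (one_lt_pow₀ hr he.ne')
  have := wL.isUltrametricDist hr
  have : CharP L p := charP_of_injective_algebraMap (algebraMap K L).injective p
  exact isOneCoboundary_of_truncate_isOneCoboundary
    (φ := ⟨⟨wL.galRes hGal, rfl⟩, fun _ _ => rfl⟩)
    (fun _ => isOneCoboundary_wittAction_of_isOneCocycle (wL.mem_integers_iff_norm_le_one hr)
      (wK.hasDiscreteNorm _) fun _ _ => rfl) hc hcohom n

/-- Let `L/K` be a finite Galois extension of complete discrete valued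
fields of equal characteristic `p > 0` whose induced residue field extension is separable.
Then `lim_n H¹(G, Wₙ(O_L)) = 0`: for every compatible family of `1`-cocycles
`cₙ : G → Wₙ(O_L)` (compatible in the sense that the truncation of `c_{n+1}` is
cohomologous to `cₙ`), every `cₙ` is a coboundary. -/
theorem hesselholt_equicharacteristic_inverse_limit_vanishing
    (p : ℕ) [Fact p.Prime]
    {K L : Type*} [Field K] [Field L] [Algebra K L] [CharP K p]
    (wK : CompleteDiscreteValuation K) (wL : CompleteDiscreteValuation L)
    [IsGalois K L] [FiniteDimensional K L]
    (e : ℕ) (he : 0 < e)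
    (hcomp : ∀ x : K, wL.v (algebraMap K L x) = e • wK.v x)
    (hsep : ResidueSeparable wK wL e he hcomp)
    (hGal : ∀ (σ : L ≃ₐ[K] L) (x : L), wL.v (σ x) = wL.v x) :
    ∀ c : (n : ℕ) → (L ≃ₐ[K] L) → TruncatedWittVector p n wL.integers,
      (∀ (n : ℕ) (σ τ : L ≃ₐ[K] L),
          c n (σ * τ) = c n σ + TruncatedWittVector.map (wL.galRes hGal σ) (c n τ)) →
      (∀ n : ℕ, ∃ b : TruncatedWittVector p n wL.integers, ∀ σ : L ≃ₐ[K] L,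
          TruncatedWittVector.truncate (Nat.le_succ n) (c (n + 1) σ) - c n σ =
            TruncatedWittVector.map (wL.galRes hGal σ) b - b) →
      ∀ n : ℕ, ∃ b : TruncatedWittVector p n wL.integers, ∀ σ : L ≃ₐ[K] L,
        c n σ = TruncatedWittVector.map (wL.galRes hGal σ) b - b :=
  fun c hc hcohom n =>
    hesselholt_equicharacteristic_inverse_limit_vanishing_general p wK wL e he hcomp hGal
      c hc hcohom n
end
end
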